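/- Existence of weak solutions (Proposition 2.2, weak-solution part): For every T>0, every V₀ ∈ ℝ and every q₀ ∈ L^∞(D) that is odd in y, there exists a weak solution (V,q) of the barotropic quasi-geostrophic equations on [0,T] with initial datum (V₀,q₀), in the sense of the weak formulation described in the context. -/

import Mathlib

open MeasureTheory Real Set

noncomputable section

namespace BQG

/-- The fundamental domain `D = [−π,π]²` of the two-dimensional torus. -/
def Dom : Set (ℝ × ℝ) := Ioc (-π) π ×ˢ Ioc (-π) π

/-- The Fourier coefficient of `f` against the mode `e_{-j} s_k`,
`f̂_{j,k} = ∫_D f(x,y) e^{−ijx}/(2π) · sin(ky) dx dy`. -/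
def fhat (f : ℝ × ℝ → ℝ) (j : ℤ) (k : ℕ) : ℂ :=
  ∫ z in Dom, (f z : ℂ) * Complex.exp (-(Complex.I * (j : ℂ) * (z.1 : ℂ))) / (2 * π)
    * (Real.sin ((k : ℝ) * z.2) : ℂ)

/-- The Fourier coefficient of `f` against the cosine-type mode `e_{-j} c_k`. -/
def chat (f : ℝ × ℝ → ℝ) (j : ℤ) (k : ℕ) : ℂ :=
  ∫ z in Dom, (f z : ℂ) * Complex.exp (-(Complex.I * (j : ℂ) * (z.1 : ℂ))) / (2 * π)
    * (Real.cos ((k : ℝ) * z.2) : ℂ)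

/-- `f` is odd in `y`: its `L²`-expansion only uses the modes `e_j s_k`, i.e. all its
cosine-type Fourier coefficients vanish. -/
def OddInY (f : ℝ × ℝ → ℝ) : Prop := ∀ (j : ℤ) (k : ℕ), chat f j k = 0

/-- The Fourier coefficient of `Δ⁻¹ f` on the mode `e_j s_k`, namely `−f̂_{j,k}/(j²+k²)`. -/
def invLapCoeff (f : ℝ × ℝ → ℝ) (j : ℤ) (k : ℕ) : ℂ :=
  -(fhat f j k) / ((j : ℂ)^2 + (k : ℂ)^2)

/-- The velocity field `u = (V,0) + ∇^⊥ ψ′` with `ψ′ = Δ⁻¹ f`, characterized as the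
square-integrable vector field on `D` whose Fourier coefficients are those obtained by
termwise application of `∇^⊥ = (−∂_y, ∂_x)` to the Fourier series of `Δ⁻¹ f`, plus the
constant `(V,0)`. -/
def IsVelocity (f : ℝ × ℝ → ℝ) (V : ℝ) (u : ℝ × ℝ → ℝ × ℝ) : Prop :=
  MemLp u 2 (volume.restrict Dom) ∧
  (∀ (j : ℤ) (k : ℕ),
    chat (fun z => (u z).1) j k
      = (if j = 0 ∧ k = 0 then (2 * π * V : ℂ) else 0)
        + (if 1 ≤ k then -(invLapCoeff f j k) * (k : ℂ) / 2 else 0)) ∧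
  (∀ (j : ℤ) (k : ℕ), 1 ≤ k → fhat (fun z => (u z).1) j k = 0) ∧
  (∀ (j : ℤ) (k : ℕ), 1 ≤ k →
    fhat (fun z => (u z).2) j k = invLapCoeff f j k * Complex.I * (j : ℂ) / 2) ∧
  (∀ (j : ℤ) (k : ℕ), chat (fun z => (u z).2) j k = 0)

/-- **Weak solutions of the barotropic quasi-geostrophic equations** (Definition 2.1).
`(V,q)` is a weak solution on `[0,T]` with initial datum `(V₀,q₀)`, with associated velocity
field `u(t,·) = (V(t),0) + ∇^⊥Δ⁻¹(q(t,·) − h − βy)`; the test functions `φ` are `C¹` and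
`2π`-periodic in both space variables. -/
structure IsWeakSolution (T β : ℝ) (h : ℝ × ℝ → ℝ) (V₀ : ℝ) (q₀ : ℝ × ℝ → ℝ)
    (V : ℝ → ℝ) (q : ℝ → ℝ × ℝ → ℝ) (u : ℝ → ℝ × ℝ → ℝ × ℝ) : Prop where
  /-- `V ∈ L^∞([0,T];ℝ)`. -/
  measV : Measurable V
  bddV : ∃ M : ℝ, ∀ t ∈ Icc (0 : ℝ) T, |V t| ≤ M
  /-- `q ∈ L^∞([0,T]×D)`. -/
  measq : Measurable fun p : ℝ × (ℝ × ℝ) => q p.1 p.2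
  bddq : ∃ M : ℝ, ∀ᵐ p ∂(volume.restrict (Icc (0 : ℝ) T ×ˢ Dom)), |q p.1 p.2| ≤ M
  /-- `q(t,·)` is odd in `y` for a.e. `t`. -/
  oddq : ∀ᵐ t ∂(volume.restrict (Icc (0 : ℝ) T)), OddInY (q t)
  /-- `t ↦ ∫_D q(t,z)ϕ(z) dz` is continuous on `[0,T]` for every continuous `ϕ`. -/
  contq : ∀ ϕ : ℝ × ℝ → ℝ, Continuous ϕ →
    ContinuousOn (fun t => ∫ z in Dom, q t z * ϕ z) (Icc (0 : ℝ) T)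
  measu : Measurable fun p : ℝ × (ℝ × ℝ) => u p.1 p.2
  /-- `u(t,·) = (V(t),0) + ∇^⊥ψ′(t,·)` with `ψ′(t,·) = Δ⁻¹(q(t,·) − h − βy)`. -/
  vel : ∀ᵐ t ∂(volume.restrict (Icc (0 : ℝ) T)),
    IsVelocity (fun z => q t z - h z - β * z.2) (V t) (u t)
  /-- Weak vorticity formulation (i). -/
  weak_q : ∀ φ : ℝ × ℝ × ℝ → ℝ, ContDiff ℝ 1 φ →
    (∀ t x y : ℝ, φ (t, x + 2 * π, y) = φ (t, x, y)) →
    (∀ t x y : ℝ, φ (t, x, y + 2 * π) = φ (t, x, y)) →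
    (∫ z in Dom, φ (T, z) * q T z) - (∫ z in Dom, φ (0, z) * q₀ z)
      = ∫ s in Icc (0 : ℝ) T, ∫ z in Dom,
          (fderiv ℝ φ (s, z) (1, 0, 0) + fderiv ℝ φ (s, z) (0, u s z)) * q s z
  /-- Mean-flow equation (ii): `V(t) = V₀ + ∫₀ᵗ ⨍_D h ∂_xψ′(s,·) dz ds`, where
  `∂_xψ′(s,·)` is the second component of `u(s,·)`. -/
  meanflow : ∀ t ∈ Icc (0 : ℝ) T,
    V t = V₀ + ∫ s in Ioc (0 : ℝ) t, (∫ z in Dom, h z * (u s z).2) / (4 * π^2)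

end BQG

namespace BQG

/-!
The velocity is truncated to finitely many Fourier modes. Each mode is a shear, whose flow is
explicit and measure preserving. In one time step the vorticity is replaced by the average of its
transports along the separate modes, each sped up by the number of modes. This keeps the sup bound,
the oddness and the periodicity of the vorticity, and it agrees to first order with transport by
the truncated velocity; the mean flow takes an Euler step. The resulting approximations are
equicontinuous in time when tested against smooth functions, so by Arzelà–Ascoli and
Banach–Alaoglu a subsequence converges weakly at every time. Since `Δ⁻¹` gains two
derivatives, the velocities converge strongly, and this passes to the limit in the product of
velocity and vorticity. Test functions of class `C¹` are reached from smooth ones by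
mollification.
-/

open Filter Topology
open scoped BigOperators

local notation "μD" => volume.restrict Dom

section Torus

lemma measurableSet_dom : MeasurableSet Dom := measurableSet_Ioc.prod measurableSet_Ioc

lemma volume_dom : volume Dom = ENNReal.ofReal (4 * π ^ 2) := by
  rw [Dom, Measure.volume_eq_prod, Measure.prod_prod, Real.volume_Ioc,
    ← ENNReal.ofReal_mul (by linarith [pi_pos])]
  congr 1
  ring

instance isFiniteMeasure_restrict_dom : IsFiniteMeasure μD :=
  ⟨by rw [Measure.restrict_apply_univ, volume_dom]; exact ENNReal.ofReal_lt_top⟩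

lemma measureReal_dom : (μD).real univ = 4 * π ^ 2 := by
  rw [measureReal_restrict_apply_univ, Measure.real, volume_dom,
    ENNReal.toReal_ofReal (by positivity)]

lemma restrict_dom_eq_prod :
    μD = (volume.restrict (Ioc (-π) π)).prod (volume.restrict (Ioc (-π) π)) := by
  rw [Dom, Measure.volume_eq_prod, Measure.prod_restrict]

lemma restrict_dom_eq_restrict_Icc : μD = volume.restrict (Icc (-π) π ×ˢ Icc (-π) π) := by
  rw [restrict_dom_eq_prod, Measure.volume_eq_prod, ← Measure.prod_restrict,
    restrict_Ioc_eq_restrict_Icc]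

lemma integrable_dom_of_continuous {E : Type*} [NormedAddCommGroup E] {f : ℝ × ℝ → E}
    (hf : Continuous f) : Integrable f μD := by
  rw [restrict_dom_eq_restrict_Icc]
  exact hf.continuousOn.integrableOn_compact (isCompact_Icc.prod isCompact_Icc)

lemma setIntegral_dom {E : Type*} [NormedAddCommGroup E] [NormedSpace ℝ E] {f : ℝ × ℝ → E}
    (hf : IntegrableOn f Dom) :
    ∫ z in Dom, f z = ∫ x in Ioc (-π) π, ∫ y in Ioc (-π) π, f (x, y) := by
  rw [Dom, Measure.volume_eq_prod] at *
  rw [setIntegral_prod _ hf]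

lemma measurePreserving_neg_restrict_Ioc :
    MeasurePreserving (fun y : ℝ => -y) (volume.restrict (Ioc (-π) π))
      (volume.restrict (Ioc (-π) π)) := by
  have h := (Measure.measurePreserving_neg (volume : Measure ℝ)).restrict_preimage
    (measurableSet_Icc (a := -π) (b := π))
  have hIcc : (Neg.neg : ℝ → ℝ) ⁻¹' Icc (-π) π = Icc (-π) π := by
    ext y
    simp only [mem_preimage, mem_Icc, neg_le_neg_iff, neg_le, and_comm]
  rwa [hIcc, ← restrict_Ioc_eq_restrict_Icc] at h

lemma measurePreserving_reflection_dom :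
    MeasurePreserving (fun z : ℝ × ℝ => (z.1, -z.2)) μD μD := by
  rw [restrict_dom_eq_prod]
  exact (MeasurePreserving.id _).prod measurePreserving_neg_restrict_Ioc

/-- Functions on `ℝ²` that are `2π`-periodic in each variable, i.e. functions on the torus. -/
structure DoublyPeriodic {α : Type*} (f : ℝ × ℝ → α) : Prop where
  fst : ∀ x y, f (x + 2 * π, y) = f (x, y)
  snd : ∀ x y, f (x, y + 2 * π) = f (x, y)

/-- The lattice `(2πℤ)²` of periods of the torus. -/
def periodLattice : AddSubgroup (ℝ × ℝ) :=
  ((zmultiplesHom ℝ (2 * π)).prodMap (zmultiplesHom ℝ (2 * π))).range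

instance countable_periodLattice : Countable periodLattice :=
  (AddMonoidHom.rangeRestrict_surjective _).countable

lemma DoublyPeriodic.vadd {α : Type*} {f : ℝ × ℝ → α} (hf : DoublyPeriodic f)
    (ℓ : periodLattice) (z : ℝ × ℝ) : f (ℓ +ᵥ z) = f z := by
  obtain ⟨_, ⟨m, n⟩, rfl⟩ := ℓ
  have hx : Function.Periodic (fun x => f (x, z.2)) (2 * π) := fun x => hf.fst x _
  have hy : Function.Periodic (fun y => f (m • (2 * π) + z.1, y)) (2 * π) := fun y => hf.snd _ y
  calc f (m • (2 * π) + z.1, n • (2 * π) + z.2)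
      = f (m • (2 * π) + z.1, z.2) := by rw [add_comm (n • _)]; exact hy.zsmul n z.2
    _ = f z := by rw [add_comm]; exact hx.zsmul m z.1

lemma existsUnique_vadd_mem_dom (z : ℝ × ℝ) : ∃! ℓ : periodLattice, ℓ +ᵥ z ∈ Dom := by
  obtain ⟨m, hm, hm'⟩ := existsUnique_add_zsmul_mem_Ioc two_pi_pos z.1 (-π)
  obtain ⟨n, hn, hn'⟩ := existsUnique_add_zsmul_mem_Ioc two_pi_pos z.2 (-π)
  simp only [show -π + 2 * π = π by ring, add_comm _ (_ • _)] at hm hn hm' hn'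
  refine ⟨⟨_, (m, n), rfl⟩, ⟨hm, hn⟩, ?_⟩
  rintro ⟨_, ⟨m₁, n₁⟩, rfl⟩ ⟨h₁, h₂⟩
  exact Subtype.ext (by rw [hm' m₁ h₁, hn' n₁ h₂])

lemma isAddFundamentalDomain_dom : IsAddFundamentalDomain periodLattice Dom :=
  .mk' measurableSet_dom.nullMeasurableSet existsUnique_vadd_mem_dom

lemma setIntegral_dom_comp {E : Type*} [NormedAddCommGroup E] [NormedSpace ℝ E]
    {f : ℝ × ℝ → E} (hf : DoublyPeriodic f) (hfm : StronglyMeasurable f)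
    {S : ℝ × ℝ → ℝ × ℝ} (hS : MeasurePreserving S)
    (hSper : DoublyPeriodic fun z => S z - z) : ∫ z in Dom, f (S z) = ∫ z in Dom, f z := by
  have hcomm : ∀ (ℓ : periodLattice) z, S (ℓ +ᵥ z) = ℓ +ᵥ S z := fun ℓ z => by
    have h := hSper.vadd ℓ z
    simp only [AddSubgroup.vadd_def, vadd_eq_add] at h ⊢
    rw [sub_eq_iff_eq_add.1 h]
    abel
  have hpre : IsAddFundamentalDomain periodLattice (S ⁻¹' Dom) :=
    isAddFundamentalDomain_dom.preimage_of_equiv hS.quasiMeasurePreserving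
      (Equiv.refl _).bijective hcomm
  calc ∫ z in Dom, f (S z) = ∫ z in S ⁻¹' Dom, f (S z) :=
        isAddFundamentalDomain_dom.setIntegral_eq hpre fun ℓ z => by rw [hcomm, hf.vadd]
    _ = ∫ z in Dom, f z := by
        rw [← setIntegral_map measurableSet_dom hfm.aestronglyMeasurable
          hS.measurable.aemeasurable, hS.map_eq]

end Torus

section Shear

lemma measurePreserving_vertical_shear {g : ℝ → ℝ} (hg : Measurable g) :
    MeasurePreserving fun z : ℝ × ℝ => (z.1, z.2 + g z.1) :=
  (MeasurePreserving.id volume).skew_product (g := fun x y => y + g x) (by fun_prop)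
    (.of_forall fun x => (measurePreserving_add_right volume (g x)).map_eq)

lemma measurePreserving_horizontal_shear {g : ℝ → ℝ} (hg : Measurable g) :
    MeasurePreserving fun z : ℝ × ℝ => (z.1 + g z.2, z.2) :=
  (Measure.measurePreserving_swap.comp (measurePreserving_vertical_shear hg)).comp
    Measure.measurePreserving_swap

lemma measurePreserving_shear (a b : ℝ) {g : ℝ → ℝ} (hg : Measurable g) :
    MeasurePreserving fun z : ℝ × ℝ =>
      z + (b * g (a * z.1 + b * z.2), -(a * g (a * z.1 + b * z.2))) := by
  obtain rfl | hb := eq_or_ne b 0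
  · convert measurePreserving_vertical_shear (g := fun x => -(a * g (a * x))) (by fun_prop)
      using 2 with z
    ext <;> simp
  -- In the coordinates `(x, y + (a / b) x)` the shear becomes horizontal.
  have hstraighten := measurePreserving_vertical_shear (g := fun x => a / b * x) (by fun_prop)
  have hunstraighten := measurePreserving_vertical_shear (g := fun x => -(a / b * x)) (by fun_prop)
  have hshear := measurePreserving_horizontal_shear (g := fun w => b * g (b * w)) (by fun_prop)
  convert hunstraighten.comp (hshear.comp hstraighten) using 2 with z
  have hphase : b * (z.2 + a / b * z.1) = a * z.1 + b * z.2 := by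
    field_simp
    ring
  ext
  · simp only [Function.comp, Prod.fst_add, hphase]
  · simp only [Function.comp, Prod.snd_add, hphase]
    field_simp
    ring

end Shear

section SquareIntegrable

variable {α β 𝕜 : Type*} [MeasurableSpace α] [MeasurableSpace β] [RCLike 𝕜]
  {μ : Measure α} {ν : Measure β}

lemma inner_toLp {f g : α → 𝕜} (hf : MemLp f 2 μ) (hg : MemLp g 2 μ) :
    inner 𝕜 (hf.toLp f) (hg.toLp g) = ∫ z, g z * (starRingEnd 𝕜) (f z) ∂μ := by
  rw [L2.inner_def]
  refine integral_congr_ae ?_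
  filter_upwards [hf.coeFn_toLp, hg.coeFn_toLp] with z hfz hgz
  rw [hfz, hgz, RCLike.inner_apply]

lemma norm_toLp_sq {f : α → 𝕜} (hf : MemLp f 2 μ) : ‖hf.toLp f‖ ^ 2 = ∫ z, ‖f z‖ ^ 2 ∂μ := by
  rw [← RCLike.ofReal_inj (K := 𝕜), RCLike.ofReal_pow, ← inner_self_eq_norm_sq_to_K, inner_toLp,
    ← integral_ofReal]
  simp only [RCLike.mul_conj, RCLike.ofReal_pow]

lemma sq_integral_norm_le {E : Type*} [NormedAddCommGroup E] [IsFiniteMeasure μ] {f : α → E}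
    (hf : MemLp f 2 μ) : (∫ z, ‖f z‖ ∂μ) ^ 2 ≤ μ.real univ * ∫ z, ‖f z‖ ^ 2 ∂μ := by
  have h := real_inner_mul_inner_self_le ((memLp_const (1 : ℝ)).toLp (fun _ => 1)) (hf.norm.toLp _)
  simpa only [inner_toLp, conj_trivial, mul_one, integral_const, smul_eq_mul, ← sq, one_pow] using h

lemma integral_norm_le_of_eLpNorm_two_le {E : Type*} [NormedAddCommGroup E] [IsFiniteMeasure μ]
    {f : α → E} (hf : AEStronglyMeasurable f μ) {A : ℝ} (hA : 0 ≤ A)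
    (h : eLpNorm f 2 μ ≤ ENNReal.ofReal A) : ∫ z, ‖f z‖ ∂μ ≤ √(μ.real univ) * A := by
  have hf2 : MemLp f 2 μ := ⟨hf, h.trans_lt ENNReal.ofReal_lt_top⟩
  have hnorm : ∫ z, ‖f z‖ ^ 2 ∂μ ≤ A ^ 2 := by
    rw [hf2.eLpNorm_eq_integral_rpow_norm two_ne_zero ENNReal.ofNat_ne_top,
      ENNReal.ofReal_le_ofReal_iff hA] at h
    simp only [ENNReal.toReal_ofNat, Real.rpow_ofNat, ← one_div, ← Real.sqrt_eq_rpow] at h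
    exact (Real.sqrt_le_left hA).1 h
  calc ∫ z, ‖f z‖ ∂μ ≤ √(μ.real univ * A ^ 2) :=
        Real.le_sqrt_of_sq_le ((sq_integral_norm_le hf2).trans (by gcongr))
    _ = √(μ.real univ) * A := by rw [Real.sqrt_mul measureReal_nonneg, Real.sqrt_sq hA]

lemma ae_memLp_two_prodMk_left [SFinite μ] [SFinite ν] {f : α × β → 𝕜} (hfm : Measurable f)
    (hf : MemLp f 2 (μ.prod ν)) : ∀ᵐ x ∂μ, MemLp (fun y => f (x, y)) 2 ν := by
  filter_upwards [(hf.integrable_norm_pow two_ne_zero).prod_right_ae] with x hx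
  exact (memLp_two_iff_integrable_sq_norm
    (hfm.comp measurable_prodMk_left).aestronglyMeasurable).2 hx

lemma memLp_two_integral_prod_mul [SFinite μ] [IsFiniteMeasure ν] {f : α × β → ℂ}
    (hfm : Measurable f) (hf : MemLp f 2 (μ.prod ν)) {g : β → ℂ} (hg : Measurable g)
    (hg1 : ∀ y, ‖g y‖ ≤ 1) : MemLp (fun x => ∫ y, f (x, y) * g y ∂ν) 2 μ := by
  have hmeas : StronglyMeasurable fun x => ∫ y, f (x, y) * g y ∂ν :=
    StronglyMeasurable.integral_prod_right (f := fun x y => f (x, y) * g y)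
      (Measurable.stronglyMeasurable (by unfold Function.uncurry; fun_prop))
  refine (memLp_two_iff_integrable_sq_norm hmeas.aestronglyMeasurable).2 ?_
  refine ((hf.integrable_norm_pow two_ne_zero).integral_prod_left.const_mul (ν.real univ)).mono'
    (hmeas.norm.pow 2).aestronglyMeasurable ?_
  filter_upwards [ae_memLp_two_prodMk_left hfm hf] with x hx
  rw [norm_pow, norm_norm]
  calc ‖∫ y, f (x, y) * g y ∂ν‖ ^ 2 ≤ (∫ y, ‖f (x, y)‖ ∂ν) ^ 2 := by
        gcongr
        refine norm_integral_le_of_norm_le (hx.integrable one_le_two).norm (.of_forall fun y => ?_)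
        rw [norm_mul]
        exact mul_le_of_le_one_right (norm_nonneg _) (hg1 y)
    _ ≤ ν.real univ * ∫ y, ‖f (x, y)‖ ^ 2 ∂ν := sq_integral_norm_le hx

end SquareIntegrable

section PlaneWave

/-- The phase `m · z` of the frequency `m ∈ ℤ²`. -/
def phase (m : ℤ × ℤ) (z : ℝ × ℝ) : ℝ := m.1 * z.1 + m.2 * z.2

lemma continuous_phase (m : ℤ × ℤ) : Continuous (phase m) := by unfold phase; fun_prop

/-- The plane wave `e^{i m · z}` on the torus. -/
def planeWave (m : ℤ × ℤ) (z : ℝ × ℝ) : ℂ := Complex.exp (phase m z * Complex.I)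

lemma continuous_planeWave (m : ℤ × ℤ) : Continuous (planeWave m) :=
  ((Complex.continuous_ofReal.comp (continuous_phase m)).mul continuous_const).cexp

lemma norm_planeWave (m : ℤ × ℤ) (z : ℝ × ℝ) : ‖planeWave m z‖ = 1 :=
  Complex.norm_exp_ofReal_mul_I _

lemma planeWave_mk (m : ℤ × ℤ) (x y : ℝ) : planeWave m (x, y) =
    Complex.exp ((m.1 * x : ℝ) * Complex.I) * Complex.exp ((m.2 * y : ℝ) * Complex.I) := by
  rw [← Complex.exp_add, planeWave, phase]
  push_cast
  ring_nf

lemma conj_planeWave (m : ℤ × ℤ) (z : ℝ × ℝ) :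
    (starRingEnd ℂ) (planeWave m z) = planeWave (-m) z := by
  rw [planeWave, ← Complex.exp_conj, planeWave, phase, phase]
  simp only [map_mul, Complex.conj_ofReal, Complex.conj_I, Prod.fst_neg, Prod.snd_neg]
  push_cast
  ring_nf

lemma planeWave_mul (m n : ℤ × ℤ) (z : ℝ × ℝ) :
    planeWave m z * planeWave n z = planeWave (m + n) z := by
  rw [planeWave, planeWave, ← Complex.exp_add, planeWave, phase, phase, phase]
  simp only [Prod.fst_add, Prod.snd_add]
  push_cast
  ring_nf

lemma integrable_mul_planeWave {f : ℝ × ℝ → ℂ} (hf : Integrable f μD) (m : ℤ × ℤ) :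
    Integrable (fun z => f z * planeWave m z) μD :=
  hf.mul_bdd (c := 1) (continuous_planeWave m).aestronglyMeasurable
    (.of_forall fun z => (norm_planeWave m z).le)

lemma setIntegral_exp_Ioc (n : ℤ) : ∫ x in Ioc (-π) π, Complex.exp ((n * x : ℝ) * Complex.I)
    = if n = 0 then (2 * π : ℂ) else 0 := by
  rw [← intervalIntegral.integral_of_le (by linarith [pi_pos])]
  split_ifs with hn
  · simp only [hn, Int.cast_zero, zero_mul, Complex.ofReal_zero, Complex.exp_zero,
      intervalIntegral.integral_const, Complex.real_smul, mul_one]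
    push_cast
    ring
  · have hn' : (n : ℂ) * Complex.I ≠ 0 := mul_ne_zero (Int.cast_ne_zero.2 hn) Complex.I_ne_zero
    have hend : Complex.exp (n * Complex.I * (π : ℝ)) = Complex.exp (n * Complex.I * (-π : ℝ)) :=
      Complex.exp_eq_exp_iff_exists_int.2 ⟨n, by push_cast; ring⟩
    have h := integral_exp_mul_complex (a := -π) (b := π) hn'
    rw [hend, sub_self, zero_div] at h
    rw [← h]
    congr 1 with x
    push_cast
    ring_nf

lemma setIntegral_planeWave (m : ℤ × ℤ) :
    ∫ z in Dom, planeWave m z = if m = 0 then (4 * π ^ 2 : ℂ) else 0 := by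
  rw [setIntegral_dom (integrable_dom_of_continuous (continuous_planeWave m))]
  simp only [planeWave_mk, integral_const_mul, integral_mul_const, setIntegral_exp_Ioc,
    Prod.ext_iff, Prod.fst_zero, Prod.snd_zero]
  by_cases h₁ : m.1 = 0 <;> by_cases h₂ : m.2 = 0 <;>
    simp only [h₁, h₂, if_true, if_false, and_self, and_false, false_and, mul_zero, zero_mul]
  ring

lemma memLp_dom_of_continuous {E : Type*} [NormedAddCommGroup E] {f : ℝ × ℝ → E}
    (hf : Continuous f) (p : ENNReal) : MemLp f p μD := by
  obtain ⟨C, hC⟩ := (isCompact_Icc.prod isCompact_Icc).exists_bound_of_continuousOn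
    (s := Icc (-π) π ×ˢ Icc (-π) π) hf.continuousOn
  refine MemLp.of_bound hf.aestronglyMeasurable C ?_
  rw [restrict_dom_eq_restrict_Icc]
  exact ae_restrict_of_forall_mem (measurableSet_Icc.prod measurableSet_Icc) hC

lemma memLp_normalized_planeWave (m : ℤ × ℤ) :
    MemLp (fun z => (2 * π : ℂ)⁻¹ * planeWave m z) 2 μD :=
  memLp_dom_of_continuous (continuous_const.mul (continuous_planeWave m)) 2

/-- The normalised plane wave `e^{i m · z} / 2π` as a unit vector of `L²(D)`. -/
def planeWaveLp (m : ℤ × ℤ) : Lp ℂ 2 μD := (memLp_normalized_planeWave m).toLp _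

lemma coeFn_smul_planeWaveLp (c : ℂ) (m : ℤ × ℤ) :
    ((2 * π * c) • planeWaveLp m : Lp ℂ 2 μD) =ᵐ[μD] fun z => c * planeWave m z := by
  filter_upwards [Lp.coeFn_smul (2 * π * c) (planeWaveLp m),
    (memLp_normalized_planeWave m).coeFn_toLp] with z hsmul hwave
  have : (π : ℂ) ≠ 0 := Complex.ofReal_ne_zero.2 pi_ne_zero
  rw [hsmul, Pi.smul_apply, planeWaveLp, hwave, smul_eq_mul]
  field_simp

lemma inner_planeWaveLp {f : ℝ × ℝ → ℂ} (hf : MemLp f 2 μD) (m : ℤ × ℤ) :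
    inner ℂ (planeWaveLp m) (hf.toLp f) = (2 * π : ℂ)⁻¹ * ∫ z in Dom, f z * planeWave (-m) z := by
  rw [planeWaveLp, inner_toLp, ← integral_const_mul]
  congr 1 with z
  simp only [map_mul, conj_planeWave, map_inv₀, map_ofNat,
    Complex.conj_ofReal]
  ring

lemma orthonormal_planeWaveLp : Orthonormal ℂ planeWaveLp := by
  classical
  rw [orthonormal_iff_ite]
  intro m n
  rw [planeWaveLp.eq_def n, inner_planeWaveLp]
  have hwave : ∀ z, (2 * π : ℂ)⁻¹ * planeWave n z * planeWave (-m) z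
      = (2 * π : ℂ)⁻¹ * planeWave (n + -m) z := fun z => by rw [← planeWave_mul, mul_assoc]
  simp only [hwave, integral_const_mul, setIntegral_planeWave, ← sub_eq_add_neg, sub_eq_zero,
    eq_comm (a := n)]
  split_ifs
  · have : (π : ℂ) ≠ 0 := Complex.ofReal_ne_zero.2 pi_ne_zero
    field_simp
    norm_num
  · simp only [mul_zero]

lemma sum_norm_sq_integral_mul_planeWave_le {f : ℝ × ℝ → ℂ} (hf : MemLp f 2 μD) {ι : Type*}
    {e : ι → ℤ × ℤ} (he : Function.Injective e) (s : Finset ι) :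
    ∑ i ∈ s, ‖∫ z in Dom, f z * planeWave (e i) z‖ ^ 2 ≤ 4 * π ^ 2 * ∫ z in Dom, ‖f z‖ ^ 2 := by
  have h := (orthonormal_planeWaveLp.comp _ (neg_injective.comp he)).sum_inner_products_le
    (hf.toLp f) (s := s)
  simp only [Function.comp, inner_planeWaveLp, neg_neg, norm_mul, mul_pow, norm_toLp_sq, norm_inv,
    ← Finset.mul_sum, Complex.norm_ofNat, Complex.norm_real, norm_eq_abs, abs_of_pos pi_pos] at h
  calc _ = 4 * π ^ 2 * ((2⁻¹ ^ 2 * π⁻¹ ^ 2) *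
        ∑ i ∈ s, ‖∫ z in Dom, f z * planeWave (e i) z‖ ^ 2) := by field_simp; norm_num
    _ ≤ _ := by gcongr; simpa only [mul_inv, mul_pow] using h

lemma eLpNorm_sum_planeWave (s : Finset (ℤ × ℤ)) (c : ℤ × ℤ → ℂ) :
    eLpNorm (fun z => ∑ m ∈ s, c m * planeWave m z) 2 μD
      = ENNReal.ofReal (2 * π * √(∑ m ∈ s, ‖c m‖ ^ 2)) := by
  have hmem : MemLp (fun z => ∑ m ∈ s, c m * planeWave m z) 2 μD :=
    memLp_dom_of_continuous (continuous_finsetSum _ fun m _ =>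
      continuous_const.mul (continuous_planeWave m)) 2
  have hsum : hmem.toLp _ = ∑ m ∈ s, (2 * π * c m) • planeWaveLp m := by
    rw [Lp.ext_iff]
    refine hmem.coeFn_toLp.trans ((Lp.coeFn_fun_finsetSum s _).trans ?_).symm
    filter_upwards [(ae_ball_iff s.countable_toSet).2
      fun m _ => coeFn_smul_planeWaveLp (c m) m] with z hz
    exact Finset.sum_congr rfl hz
  have hnorm : ‖hmem.toLp _‖ = 2 * π * √(∑ m ∈ s, ‖c m‖ ^ 2) := by
    rw [← Real.sqrt_sq (norm_nonneg _), ← inner_self_eq_norm_sq (𝕜 := ℂ), hsum,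
      orthonormal_planeWaveLp.inner_sum, ← Real.sqrt_sq two_pi_pos.le,
      ← Real.sqrt_mul (sq_nonneg _), Finset.mul_sum, map_sum]
    congr 2 with m
    rw [RCLike.conj_mul, ← RCLike.ofReal_pow, RCLike.ofReal_re, norm_mul, mul_pow]
    simp only [norm_mul, Complex.norm_ofNat, Complex.norm_real, norm_eq_abs, abs_of_pos pi_pos]
  rw [← hnorm, Lp.norm_toLp, ENNReal.ofReal_toReal hmem.eLpNorm_ne_top]

end PlaneWave

section Completeness

lemma ae_eq_zero_of_setIntegral_mul_exp_eq_zero {f : ℝ → ℂ}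
    (hf : MemLp f 2 (volume.restrict (Ioc (-π) π)))
    (h0 : ∀ n : ℤ, ∫ x in Ioc (-π) π, f x * Complex.exp ((n * x : ℝ) * Complex.I) = 0) :
    f =ᵐ[volume.restrict (Ioc (-π) π)] 0 := by
  have hlt : -π < π := by linarith [pi_pos]
  have hcoeff : ∀ n, fourierCoeffOn hlt f n = 0 := fun n => by
    rw [fourierCoeffOn_eq_integral, intervalIntegral.integral_of_le hlt.le]
    have hexp : ∀ x : ℝ, (fourier (-n) (x : AddCircle (π - -π)) : ℂ) • f x
        = f x * Complex.exp (((-n : ℤ) * x : ℝ) * Complex.I) := fun x => by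
      rw [fourier_coe_apply, smul_eq_mul, mul_comm]
      congr 2
      have : (π : ℂ) ≠ 0 := Complex.ofReal_ne_zero.2 pi_ne_zero
      push_cast
      field_simp
      ring
    simp only [hexp, h0, smul_zero]
  have hparseval := (hasSum_sq_fourierCoeffOn hlt hf).tsum_eq
  simp only [hcoeff, norm_zero, ne_eq, OfNat.ofNat_ne_zero, not_false_eq_true, zero_pow,
    tsum_zero, intervalIntegral.integral_of_le hlt.le] at hparseval
  have hzero : ∫ x in Ioc (-π) π, ‖f x‖ ^ 2 = 0 :=
    (smul_eq_zero.1 hparseval.symm).resolve_left (inv_ne_zero (by linarith))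
  rw [integral_eq_zero_iff_of_nonneg (fun x => sq_nonneg _)
    (hf.integrable_norm_pow two_ne_zero)] at hzero
  filter_upwards [hzero] with x hx
  simpa using hx

lemma ae_eq_zero_of_setIntegral_mul_planeWave_eq_zero {f : ℝ × ℝ → ℂ} (hfm : Measurable f)
    (hf : MemLp f 2 μD) (h0 : ∀ m, ∫ z in Dom, f z * planeWave m z = 0) : f =ᵐ[μD] 0 := by
  have hfi : ∀ m, IntegrableOn (fun z => f z * planeWave m z) Dom :=
    integrable_mul_planeWave (hf.integrable one_le_two)
  rw [restrict_dom_eq_prod] at hf ⊢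
  have hslice : ∀ n : ℤ, ∀ᵐ x ∂(volume.restrict (Ioc (-π) π)),
      ∫ y in Ioc (-π) π, f (x, y) * Complex.exp ((n * y : ℝ) * Complex.I) = 0 := fun n => by
    refine ae_eq_zero_of_setIntegral_mul_exp_eq_zero (memLp_two_integral_prod_mul hfm hf
      (by fun_prop) fun y => (Complex.norm_exp_ofReal_mul_I _).le) fun j => ?_
    rw [← h0 (j, n), setIntegral_dom (hfi _)]
    simp only [planeWave_mk, ← integral_mul_const]
    congr! 4
    ring
  refine (Measure.ae_prod_iff_ae_ae (hfm (measurableSet_singleton 0))).2 ?_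
  filter_upwards [ae_memLp_two_prodMk_left hfm hf, ae_all_iff.2 hslice] with x hx hx0
  exact ae_eq_zero_of_setIntegral_mul_exp_eq_zero hx hx0

end Completeness

section FourierIntegral

/-- Measurable functions that are bounded by `F` almost everywhere on the fundamental domain: a
concrete form of the ball of radius `F` in `L^∞(D)`. -/
structure EssBoundedBy (F : ℝ) (f : ℝ × ℝ → ℝ) : Prop where
  measurable : Measurable f
  bound : ∀ᵐ z ∂μD, |f z| ≤ F

variable {F : ℝ} {f g : ℝ × ℝ → ℝ}

lemma EssBoundedBy.integrable (hf : EssBoundedBy F f) : Integrable f μD :=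
  .of_bound hf.measurable.aestronglyMeasurable F hf.bound

lemma EssBoundedBy.memLp (hf : EssBoundedBy F f) (p : ENNReal) : MemLp f p μD :=
  .of_bound hf.measurable.aestronglyMeasurable F hf.bound

lemma EssBoundedBy.integrable_mul (hf : EssBoundedBy F f) (hg : Integrable g μD) :
    Integrable (fun z => f z * g z) μD :=
  hg.bdd_mul hf.measurable.aestronglyMeasurable hf.bound

lemma EssBoundedBy.nonneg (hf : EssBoundedBy F f) : 0 ≤ F := by
  have : NeBot (ae μD) := by
    rw [ae_neBot]
    intro hzero
    have : (0 : ℝ) < 4 * π ^ 2 := by positivity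
    rw [← measureReal_dom, hzero] at this
    simp at this
  obtain ⟨z, hz⟩ := hf.bound.exists
  exact (abs_nonneg _).trans hz

lemma EssBoundedBy.integral_norm_le (hf : EssBoundedBy F f) :
    ∫ z in Dom, ‖f z‖ ≤ 4 * π ^ 2 * F := by
  have h := integral_mono_ae hf.integrable.norm (integrable_const F) hf.bound
  rwa [integral_const, measureReal_dom, smul_eq_mul] at h

lemma EssBoundedBy.integral_norm_sq_le (hf : EssBoundedBy F f) :
    ∫ z in Dom, ‖f z‖ ^ 2 ≤ 4 * π ^ 2 * F ^ 2 := by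
  have h := integral_mono_ae ((hf.memLp 2).integrable_norm_pow two_ne_zero)
    (integrable_const (F ^ 2)) (hf.bound.mono fun z hz => pow_le_pow_left₀ (norm_nonneg _) hz 2)
  rwa [integral_const, measureReal_dom, smul_eq_mul] at h

/-- The Fourier integral `∫_D g(z) e^{i n · z} dz` of a real function on the torus. -/
def fourierIntegral (g : ℝ × ℝ → ℝ) (n : ℤ × ℤ) : ℂ := ∫ z in Dom, (g z : ℂ) * planeWave n z

lemma integrable_ofReal_mul_planeWave (hg : Integrable g μD) (n : ℤ × ℤ) :
    Integrable (fun z => (g z : ℂ) * planeWave n z) μD :=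
  integrable_mul_planeWave hg.ofReal n

lemma fourierIntegral_neg (g : ℝ × ℝ → ℝ) (n : ℤ × ℤ) :
    fourierIntegral g (-n) = (starRingEnd ℂ) (fourierIntegral g n) := by
  rw [fourierIntegral, fourierIntegral, ← integral_conj]
  simp only [map_mul, Complex.conj_ofReal, conj_planeWave]

lemma fourierIntegral_const (V : ℝ) (n : ℤ × ℤ) :
    fourierIntegral (fun _ => V) n = if n = 0 then (V * (4 * π ^ 2) : ℂ) else 0 := by
  rw [fourierIntegral, integral_const_mul, setIntegral_planeWave, mul_ite, mul_zero]

lemma fourierIntegral_add (hf : Integrable f μD) (hg : Integrable g μD) (n : ℤ × ℤ) :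
    fourierIntegral (fun z => f z + g z) n = fourierIntegral f n + fourierIntegral g n := by
  rw [fourierIntegral, fourierIntegral, fourierIntegral,
    ← integral_add (integrable_ofReal_mul_planeWave hf n) (integrable_ofReal_mul_planeWave hg n)]
  simp only [Complex.ofReal_add, add_mul]

lemma norm_fourierIntegral_le (g : ℝ × ℝ → ℝ) (n : ℤ × ℤ) :
    ‖fourierIntegral g n‖ ≤ ∫ z in Dom, ‖g z‖ := by
  refine (norm_integral_le_integral_norm _).trans_eq ?_
  simp only [norm_mul, norm_planeWave, mul_one, Complex.norm_real]

lemma norm_fourierIntegral_sub_le (hf : Integrable f μD) (hg : Integrable g μD) (n : ℤ × ℤ) :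
    ‖fourierIntegral f n - fourierIntegral g n‖ ≤ ∫ z in Dom, ‖f z - g z‖ := by
  have hsub : fourierIntegral f n - fourierIntegral g n
      = fourierIntegral (fun z => f z - g z) n := by
    rw [sub_eq_iff_eq_add, ← fourierIntegral_add (f := fun z => f z - g z) (hf.sub hg) hg]
    simp only [sub_add_cancel]
  exact hsub ▸ norm_fourierIntegral_le _ n

lemma chat_eq_fourierIntegral (hg : Integrable g μD) (j : ℤ) (k : ℕ) :
    chat g j k = (fourierIntegral g (-j, k) + fourierIntegral g (-j, -k)) / (4 * π) := by
  rw [fourierIntegral, fourierIntegral, ← integral_add (integrable_ofReal_mul_planeWave hg _)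
    (integrable_ofReal_mul_planeWave hg _), ← integral_div, chat]
  congr 1 with ⟨x, y⟩
  simp only [planeWave_mk, Complex.ofReal_cos, Complex.cos]
  push_cast
  ring_nf

lemma fhat_eq_fourierIntegral (hg : Integrable g μD) (j : ℤ) (k : ℕ) :
    fhat g j k
      = (fourierIntegral g (-j, k) - fourierIntegral g (-j, -k)) / (4 * π * Complex.I) := by
  rw [fourierIntegral, fourierIntegral, ← integral_sub (integrable_ofReal_mul_planeWave hg _)
    (integrable_ofReal_mul_planeWave hg _), ← integral_div, fhat]
  congr 1 with ⟨x, y⟩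
  simp only [planeWave_mk, Complex.ofReal_sin, Complex.sin, div_eq_mul_inv, mul_inv, Complex.inv_I]
  push_cast
  ring_nf

end FourierIntegral

section ShearModes

/-- The sine-in-`y` Fourier integral `∫_D f(x,y) e^{-i m₁ x} sin(m₂ y) dz` of `f`. -/
def sineCoeff (f : ℝ × ℝ → ℝ) (m : ℤ × ℤ) : ℂ :=
  (fourierIntegral f (-m.1, m.2) - fourierIntegral f (-m.1, -m.2)) / (2 * Complex.I)

variable {F : ℝ} {f : ℝ × ℝ → ℝ}

lemma fhat_eq_sineCoeff (hf : Integrable f μD) (j : ℤ) (k : ℕ) :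
    fhat f j k = sineCoeff f (j, k) / (2 * π) := by
  rw [fhat_eq_fourierIntegral hf, sineCoeff, div_div]
  ring_nf

lemma sineCoeff_mk_neg (f : ℝ × ℝ → ℝ) (j k : ℤ) : sineCoeff f (j, -k) = -sineCoeff f (j, k) := by
  simp only [sineCoeff, neg_neg]
  ring

lemma sineCoeff_neg (f : ℝ × ℝ → ℝ) (m : ℤ × ℤ) :
    sineCoeff f (-m) = -(starRingEnd ℂ) (sineCoeff f m) := by
  have hconj : ∀ j k : ℤ, (starRingEnd ℂ) (fourierIntegral f (j, k)) = fourierIntegral f (-j, -k) :=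
    fun j k => (fourierIntegral_neg f (j, k)).symm
  simp only [sineCoeff, Prod.fst_neg, Prod.snd_neg, hconj, map_div₀, map_sub, map_mul,
    Complex.conj_I, map_ofNat, neg_neg, mul_neg, div_neg]

lemma norm_sineCoeff_le (hf : EssBoundedBy F f) (m : ℤ × ℤ) : ‖sineCoeff f m‖ ≤ 4 * π ^ 2 * F := by
  have hbound := fun n => (norm_fourierIntegral_le f n).trans hf.integral_norm_le
  rw [sineCoeff, norm_div, norm_mul, Complex.norm_I, Complex.norm_ofNat, mul_one,
    div_le_iff₀ two_pos]
  linarith [norm_sub_le (fourierIntegral f (-m.1, m.2)) (fourierIntegral f (-m.1, -m.2)),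
    hbound (-m.1, m.2), hbound (-m.1, -m.2)]

lemma sum_norm_sq_sineCoeff_le (hf : EssBoundedBy F f) (s : Finset (ℤ × ℤ)) :
    ∑ m ∈ s, ‖sineCoeff f m‖ ^ 2 ≤ 16 * π ^ 4 * F ^ 2 := by
  have hbessel : ∀ e : ℤ × ℤ → ℤ × ℤ, Function.Injective e →
      ∑ m ∈ s, ‖fourierIntegral f (e m)‖ ^ 2 ≤ 16 * π ^ 4 * F ^ 2 := fun e he => by
    refine (sum_norm_sq_integral_mul_planeWave_le (hf.memLp 2).ofReal he s).trans ?_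
    simp only [Complex.coe_algebraMap, Complex.norm_real]
    linarith [mul_le_mul_of_nonneg_left hf.integral_norm_sq_le (by positivity : 0 ≤ 4 * π ^ 2)]
  have hterm : ∀ m : ℤ × ℤ, ‖sineCoeff f m‖ ^ 2 ≤
      (‖fourierIntegral f (-m.1, m.2)‖ ^ 2 + ‖fourierIntegral f (-m.1, -m.2)‖ ^ 2) / 2 := by
    intro m
    have h := parallelogram_law_with_norm ℝ (fourierIntegral f (-m.1, m.2))
      (fourierIntegral f (-m.1, -m.2))
    rw [sineCoeff, norm_div, norm_mul, Complex.norm_I, Complex.norm_ofNat, mul_one, div_pow]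
    nlinarith [norm_nonneg (fourierIntegral f (-m.1, m.2) + fourierIntegral f (-m.1, -m.2))]
  refine (Finset.sum_le_sum fun m _ => hterm m).trans ?_
  rw [← Finset.sum_div, Finset.sum_add_distrib]
  linarith [hbessel (fun m => (-m.1, m.2)) fun m n h => by simpa [Prod.ext_iff] using h,
    hbessel (fun m => (-m.1, -m.2)) fun m n h => by simpa [Prod.ext_iff] using h]

/-- The coefficients in `∇^⊥ Δ⁻¹ f = ∑ m, (m₂, -m₁) streamCoeff f m e^{i m · z}`. The constant is
`8π²` rather than `4π²` because `Δ⁻¹` is defined through the modes `e_j s_k`, whose squared norm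
is `1/2`. The value at `m = 0` is `0`, by division by zero. -/
def streamCoeff (f : ℝ × ℝ → ℝ) (m : ℤ × ℤ) : ℂ :=
  sineCoeff f m / (8 * π ^ 2 * (m.1 ^ 2 + m.2 ^ 2) : ℝ)

lemma streamCoeff_mk_neg (f : ℝ × ℝ → ℝ) (j k : ℤ) :
    streamCoeff f (j, -k) = -streamCoeff f (j, k) := by
  simp only [streamCoeff, sineCoeff_mk_neg, Int.cast_neg, neg_sq, neg_div]

lemma streamCoeff_neg (f : ℝ × ℝ → ℝ) (m : ℤ × ℤ) :
    streamCoeff f (-m) = -(starRingEnd ℂ) (streamCoeff f m) := by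
  simp only [streamCoeff, sineCoeff_neg, Prod.fst_neg, Prod.snd_neg, Int.cast_neg, neg_sq, neg_div,
    map_div₀, Complex.conj_ofReal]

lemma norm_streamCoeff (f : ℝ × ℝ → ℝ) (m : ℤ × ℤ) :
    ‖streamCoeff f m‖ = ‖sineCoeff f m‖ / (8 * π ^ 2 * (m.1 ^ 2 + m.2 ^ 2)) := by
  rw [streamCoeff, norm_div, Complex.norm_of_nonneg (by positivity)]

/-- The profile of the shear flow carried by the frequency `m`. -/
def shearProfile (f : ℝ × ℝ → ℝ) (m : ℤ × ℤ) (θ : ℝ) : ℝ :=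
  (streamCoeff f m * Complex.exp (θ * Complex.I)).re

lemma continuous_shearProfile (f : ℝ × ℝ → ℝ) (m : ℤ × ℤ) : Continuous (shearProfile f m) := by
  unfold shearProfile
  fun_prop

lemma shearProfile_mk_neg (f : ℝ × ℝ → ℝ) (j k : ℤ) (θ : ℝ) :
    shearProfile f (j, -k) θ = -shearProfile f (j, k) θ := by
  rw [shearProfile, streamCoeff_mk_neg, neg_mul, Complex.neg_re, shearProfile]

lemma shearProfile_add_two_pi_mul_int (f : ℝ × ℝ → ℝ) (m : ℤ × ℤ) (θ : ℝ) (n : ℤ) :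
    shearProfile f m (θ + n * (2 * π)) = shearProfile f m θ := by
  have h : ((θ + n * (2 * π) : ℝ) : ℂ) * Complex.I = θ * Complex.I + n * (2 * π * Complex.I) := by
    push_cast
    ring
  rw [shearProfile, h, Complex.exp_periodic.int_mul n, shearProfile]

lemma abs_shearProfile_le (f : ℝ × ℝ → ℝ) (m : ℤ × ℤ) (θ : ℝ) :
    |shearProfile f m θ| ≤ ‖streamCoeff f m‖ := by
  refine (Complex.abs_re_le_norm _).trans_eq ?_
  rw [norm_mul, Complex.norm_exp_ofReal_mul_I, mul_one]

lemma abs_intCast_le_sq (a : ℤ) : |(a : ℝ)| ≤ (a : ℝ) ^ 2 := by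
  rw [← sq_abs]
  exact_mod_cast Int.le_self_sq |a|

lemma abs_mul_shearProfile_le (hf : EssBoundedBy F f) {m : ℤ × ℤ} {a : ℝ}
    (ha : |a| ≤ (m.1 : ℝ) ^ 2 + (m.2 : ℝ) ^ 2) (θ : ℝ) : |a * shearProfile f m θ| ≤ F := by
  have hsine := norm_sineCoeff_le hf m
  have hF := hf.nonneg
  calc |a * shearProfile f m θ|
      ≤ ((m.1 : ℝ) ^ 2 + (m.2 : ℝ) ^ 2) * ‖streamCoeff f m‖ := by
        rw [abs_mul]
        gcongr
        exact abs_shearProfile_le f m θ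
    _ = ‖sineCoeff f m‖ / (8 * π ^ 2)
          * (((m.1 : ℝ) ^ 2 + (m.2 : ℝ) ^ 2) / ((m.1 : ℝ) ^ 2 + (m.2 : ℝ) ^ 2)) := by
        rw [norm_streamCoeff, ← div_div]
        ring
    _ ≤ (4 * π ^ 2 * F) / (8 * π ^ 2) * 1 := by
        gcongr
        exact div_self_le_one _
    _ ≤ F := by
        field_simp
        linarith

/-- The flow attached to a single frequency: the zonal mean flow `(V, 0)` for `m = 0`, and otherwise
a shear flow along `m^⊥ = (m₂, -m₁)`. -/
def modeFlow (V : ℝ) (f : ℝ × ℝ → ℝ) (m : ℤ × ℤ) (z : ℝ × ℝ) : ℝ × ℝ :=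
  if m = 0 then (V, 0) else shearProfile f m (phase m z) • ((m.2, -m.1) : ℝ × ℝ)

lemma continuous_modeFlow (V : ℝ) (f : ℝ × ℝ → ℝ) (m : ℤ × ℤ) : Continuous (modeFlow V f m) := by
  unfold modeFlow
  split_ifs
  · exact continuous_const
  · exact ((continuous_shearProfile f m).comp (continuous_phase m)).smul continuous_const

lemma norm_modeFlow_le (hf : EssBoundedBy F f) (V : ℝ) (m : ℤ × ℤ) (z : ℝ × ℝ) :
    ‖modeFlow V f m z‖ ≤ |V| + F := by
  have hF := hf.nonneg
  unfold modeFlow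
  split_ifs with hm
  · simp [Prod.norm_def, hF]
  · have hfst := abs_mul_shearProfile_le hf (m := m) (a := m.2)
      (by linarith [abs_intCast_le_sq m.2, sq_nonneg (m.1 : ℝ)]) (phase m z)
    have hsnd := abs_mul_shearProfile_le hf (m := m) (a := m.1)
      (by linarith [abs_intCast_le_sq m.1, sq_nonneg (m.2 : ℝ)]) (phase m z)
    simp only [Prod.smul_mk, smul_eq_mul, Prod.norm_mk, norm_eq_abs, mul_neg, abs_neg,
      mul_comm _ (shearProfile f m _)] at hfst hsnd ⊢
    exact (max_le hfst hsnd).trans (le_add_of_nonneg_left (abs_nonneg V))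

lemma doublyPeriodic_modeFlow (V : ℝ) (f : ℝ × ℝ → ℝ) (m : ℤ × ℤ) :
    DoublyPeriodic (modeFlow V f m) where
  fst x y := by
    have h : phase m (x + 2 * π, y) = phase m (x, y) + m.1 * (2 * π) := by unfold phase; ring
    simp only [modeFlow, h, shearProfile_add_two_pi_mul_int]
  snd x y := by
    have h : phase m (x, y + 2 * π) = phase m (x, y) + m.2 * (2 * π) := by unfold phase; ring
    simp only [modeFlow, h, shearProfile_add_two_pi_mul_int]

lemma modeFlow_reflection (V : ℝ) (f : ℝ × ℝ → ℝ) (j k : ℤ) (x y : ℝ) :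
    modeFlow V f (j, k) (x, -y)
      = ((modeFlow V f (j, -k) (x, y)).1, -(modeFlow V f (j, -k) (x, y)).2) := by
  have hzero : ((j, -k) : ℤ × ℤ) = 0 ↔ ((j, k) : ℤ × ℤ) = 0 := by simp [Prod.ext_iff]
  have hphase : phase (j, k) (x, -y) = phase (j, -k) (x, y) := by
    unfold phase
    push_cast
    ring
  simp only [modeFlow, hzero, hphase, shearProfile_mk_neg]
  split_ifs <;> simp

end ShearModes

section TruncatedVelocity

/-- The square `{-N, …, N}²` of frequencies. -/
def freqBox (N : ℕ) : Finset (ℤ × ℤ) := Finset.Icc (-(N : ℤ)) N ×ˢ Finset.Icc (-(N : ℤ)) N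

lemma mem_freqBox {N : ℕ} {m : ℤ × ℤ} :
    m ∈ freqBox N ↔ (-(N : ℤ) ≤ m.1 ∧ m.1 ≤ N) ∧ -(N : ℤ) ≤ m.2 ∧ m.2 ≤ N := by
  simp only [freqBox, Finset.mem_product, Finset.mem_Icc]

lemma freqBox_mono : Monotone freqBox := fun K N h m => by
  simp only [mem_freqBox]
  omega

lemma zero_mem_freqBox (N : ℕ) : (0 : ℤ × ℤ) ∈ freqBox N := by simp [mem_freqBox]

lemma neg_mem_freqBox {N : ℕ} {m : ℤ × ℤ} : -m ∈ freqBox N ↔ m ∈ freqBox N := by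
  simp only [mem_freqBox, Prod.fst_neg, Prod.snd_neg]
  omega

lemma eventually_mem_freqBox (m : ℤ × ℤ) : ∀ᶠ N in atTop, m ∈ freqBox N := by
  filter_upwards [eventually_ge_atTop (m.1.natAbs + m.2.natAbs)] with N hN
  rw [mem_freqBox]
  omega

lemma sq_le_of_notMem_freqBox {K : ℕ} {m : ℤ × ℤ} (hm : m ∉ freqBox K) :
    ((K : ℝ) + 1) ^ 2 ≤ (m.1 : ℝ) ^ 2 + (m.2 : ℝ) ^ 2 := by
  have hlarge : (K : ℤ) + 1 ≤ |m.1| ∨ (K : ℤ) + 1 ≤ |m.2| := by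
    rw [mem_freqBox] at hm
    rw [le_abs, le_abs]
    omega
  suffices ((K : ℤ) + 1) ^ 2 ≤ m.1 ^ 2 + m.2 ^ 2 by exact_mod_cast this
  rcases hlarge with h | h
  · linarith [sq_le_sq' (by linarith [abs_nonneg m.1]) h, sq_abs m.1, sq_nonneg m.2]
  · linarith [sq_le_sq' (by linarith [abs_nonneg m.2]) h, sq_abs m.2, sq_nonneg m.1]

lemma ofReal_sum_freqBox_re {c : ℤ × ℤ → ℂ} (hc : ∀ m, c (-m) = (starRingEnd ℂ) (c m)) (N : ℕ) :
    ((∑ m ∈ freqBox N, (c m).re : ℝ) : ℂ) = ∑ m ∈ freqBox N, c m := by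
  rw [← Complex.re_sum, ← Complex.conj_eq_iff_re, map_sum]
  refine Finset.sum_nbij' (fun m => -m) (fun m => -m) (fun m => neg_mem_freqBox.2)
    (fun m => neg_mem_freqBox.2) (fun m _ => neg_neg m) (fun m _ => neg_neg m) fun m _ => ?_
  rw [hc]

/-- The Fourier truncation of `∇^⊥ Δ⁻¹ f` to the frequencies in `freqBox N`. -/
def truncVelocity (N : ℕ) (f : ℝ × ℝ → ℝ) (z : ℝ × ℝ) : ℝ × ℝ :=
  ∑ m ∈ freqBox N, shearProfile f m (phase m z) • ((m.2, -m.1) : ℝ × ℝ)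

variable {F : ℝ} {f : ℝ × ℝ → ℝ}

lemma continuous_truncVelocity (N : ℕ) (f : ℝ × ℝ → ℝ) : Continuous (truncVelocity N f) :=
  continuous_finsetSum _ fun m _ =>
    ((continuous_shearProfile f m).comp (continuous_phase m)).smul continuous_const

lemma truncVelocity_zero (f : ℝ × ℝ → ℝ) (z : ℝ × ℝ) : truncVelocity 0 f z = 0 := by
  have hbox : freqBox 0 = {0} := by simp [freqBox]
  simp [truncVelocity, hbox]

lemma sum_modeFlow (N : ℕ) (V : ℝ) (f : ℝ × ℝ → ℝ) (z : ℝ × ℝ) :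
    ∑ m ∈ freqBox N, modeFlow V f m z = (V, 0) + truncVelocity N f z := by
  have hmode : ∀ m, modeFlow V f m z = (if m = 0 then ((V, 0) : ℝ × ℝ) else 0)
      + shearProfile f m (phase m z) • ((m.2, -m.1) : ℝ × ℝ) := fun m => by
    by_cases hm : m = 0 <;> simp [modeFlow, hm]
  simp only [hmode, Finset.sum_add_distrib, Finset.sum_ite_eq', zero_mem_freqBox, if_true,
    truncVelocity]

lemma ofReal_apply_truncVelocity (p : ℝ × ℝ →L[ℝ] ℝ) (N : ℕ) (f : ℝ × ℝ → ℝ) (z : ℝ × ℝ) :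
    (p (truncVelocity N f z) : ℂ)
      = ∑ m ∈ freqBox N, p (m.2, -m.1) * streamCoeff f m * planeWave m z := by
  rw [← ofReal_sum_freqBox_re]
  · simp only [truncVelocity, map_sum, map_smul, smul_eq_mul, mul_assoc, Complex.re_ofReal_mul]
    simp only [shearProfile, planeWave, mul_comm]
  · intro m
    have hp : p (((-m).2 : ℝ), -((-m).1 : ℝ)) = -p (m.2, -m.1) := by
      rw [← map_neg]
      simp
    rw [hp, streamCoeff_neg, ← conj_planeWave]
    simp

lemma truncVelocity_complex_eq (N : ℕ) (f : ℝ × ℝ → ℝ) (z : ℝ × ℝ) :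
    ((truncVelocity N f z).1 : ℂ) + Complex.I * ((truncVelocity N f z).2 : ℂ)
      = ∑ m ∈ freqBox N, (m.2 - Complex.I * m.1) * streamCoeff f m * planeWave m z := by
  have hfst := ofReal_apply_truncVelocity (.fst ℝ ℝ ℝ) N f z
  have hsnd := ofReal_apply_truncVelocity (.snd ℝ ℝ ℝ) N f z
  simp only [ContinuousLinearMap.coe_fst', ContinuousLinearMap.coe_snd'] at hfst hsnd
  rw [hfst, hsnd, Finset.mul_sum, ← Finset.sum_add_distrib]
  refine Finset.sum_congr rfl fun m _ => ?_
  push_cast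
  ring

lemma norm_mk_le_norm_ofReal_add_I_mul (a b : ℝ) :
    ‖((a, b) : ℝ × ℝ)‖ ≤ ‖(a : ℂ) + Complex.I * (b : ℂ)‖ := by
  refine max_le ?_ ?_
  · simpa using Complex.abs_re_le_norm ((a : ℂ) + Complex.I * (b : ℂ))
  · simpa using Complex.abs_im_le_norm ((a : ℂ) + Complex.I * (b : ℂ))

lemma norm_sq_velocityCoeff_le {K : ℕ} {m : ℤ × ℤ} (hm : m ∉ freqBox K) (f : ℝ × ℝ → ℝ) :
    ‖(m.2 - Complex.I * m.1) * streamCoeff f m‖ ^ 2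
      ≤ 1 / (64 * π ^ 4 * ((K : ℝ) + 1) ^ 2) * ‖sineCoeff f m‖ ^ 2 := by
  have hperp : ‖(m.2 : ℂ) - Complex.I * m.1‖ ^ 2 = (m.1 : ℝ) ^ 2 + (m.2 : ℝ) ^ 2 := by
    rw [← Complex.normSq_eq_norm_sq, Complex.normSq_apply]
    simp only [Complex.sub_re, Complex.intCast_re, Complex.mul_re, Complex.I_re, zero_mul,
      Complex.I_im, Complex.intCast_im, mul_zero, sub_self, sub_zero, Complex.sub_im,
      Complex.mul_im, one_mul, zero_add, zero_sub, mul_neg, neg_mul, neg_neg]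
    ring
  have hlarge := sq_le_of_notMem_freqBox hm
  rw [norm_mul, mul_pow, hperp, norm_streamCoeff]
  set r := (m.1 : ℝ) ^ 2 + (m.2 : ℝ) ^ 2
  have hr : 0 < r := lt_of_lt_of_le (by positivity) hlarge
  calc r * (‖sineCoeff f m‖ / (8 * π ^ 2 * r)) ^ 2
      = 1 / (64 * π ^ 4 * r) * ‖sineCoeff f m‖ ^ 2 := by field_simp; ring
    _ ≤ _ := by gcongr

lemma eLpNorm_truncVelocity_sub_le (hf : EssBoundedBy F f) {K N : ℕ} (hKN : K ≤ N) :
    eLpNorm (fun z => truncVelocity N f z - truncVelocity K f z) 2 μD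
      ≤ ENNReal.ofReal (π * F / (K + 1)) := by
  have hF := hf.nonneg
  set c : ℤ × ℤ → ℂ := fun m => (m.2 - Complex.I * m.1) * streamCoeff f m
  have hseries : ∀ z, ‖truncVelocity N f z - truncVelocity K f z‖
      ≤ ‖∑ m ∈ freqBox N \ freqBox K, c m * planeWave m z‖ := fun z => by
    refine (norm_mk_le_norm_ofReal_add_I_mul _ _).trans_eq ?_
    rw [Finset.sum_sdiff_eq_sub (freqBox_mono hKN), ← truncVelocity_complex_eq,
      ← truncVelocity_complex_eq]
    push_cast
    ring_nf
  have hcoeff : ∑ m ∈ freqBox N \ freqBox K, ‖c m‖ ^ 2 ≤ (F / (2 * (K + 1))) ^ 2 :=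
    calc ∑ m ∈ freqBox N \ freqBox K, ‖c m‖ ^ 2
        ≤ ∑ m ∈ freqBox N \ freqBox K,
            1 / (64 * π ^ 4 * ((K : ℝ) + 1) ^ 2) * ‖sineCoeff f m‖ ^ 2 :=
          Finset.sum_le_sum fun m hm => norm_sq_velocityCoeff_le (Finset.mem_sdiff.1 hm).2 f
      _ ≤ 1 / (64 * π ^ 4 * ((K : ℝ) + 1) ^ 2) * (16 * π ^ 4 * F ^ 2) := by
          rw [← Finset.mul_sum]
          gcongr
          exact sum_norm_sq_sineCoeff_le hf _
      _ = (F / (2 * (K + 1))) ^ 2 := by field_simp; ring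
  refine (eLpNorm_mono hseries).trans ?_
  rw [eLpNorm_sum_planeWave]
  refine ENNReal.ofReal_le_ofReal ?_
  calc 2 * π * √(∑ m ∈ freqBox N \ freqBox K, ‖c m‖ ^ 2)
      ≤ 2 * π * (F / (2 * (K + 1))) := by
        gcongr
        exact (sqrt_le_left (by positivity)).2 hcoeff
    _ = π * F / (K + 1) := by field_simp

lemma setIntegral_dom_norm_le_of_eLpNorm_two_le {E : Type*} [NormedAddCommGroup E]
    {g : ℝ × ℝ → E} (hg : AEStronglyMeasurable g μD) {A : ℝ} (hA : 0 ≤ A)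
    (h : eLpNorm g 2 μD ≤ ENNReal.ofReal A) : ∫ z in Dom, ‖g z‖ ≤ 2 * π * A := by
  have hnorm := integral_norm_le_of_eLpNorm_two_le hg hA h
  rwa [measureReal_dom, show 4 * π ^ 2 = (2 * π) ^ 2 by ring, sqrt_sq (by positivity)] at hnorm

lemma setIntegral_norm_truncVelocity_sub_le (hf : EssBoundedBy F f) {K N : ℕ} (hKN : K ≤ N) :
    ∫ z in Dom, ‖truncVelocity N f z - truncVelocity K f z‖ ≤ 2 * π * (π * F / (K + 1)) := by
  have hF := hf.nonneg
  exact setIntegral_dom_norm_le_of_eLpNorm_two_le ((continuous_truncVelocity N f).sub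
    (continuous_truncVelocity K f)).aestronglyMeasurable (by positivity)
    (eLpNorm_truncVelocity_sub_le hf hKN)

lemma setIntegral_norm_truncVelocity_le (hf : EssBoundedBy F f) (N : ℕ) :
    ∫ z in Dom, ‖truncVelocity N f z‖ ≤ 2 * π * (π * F) := by
  simpa [truncVelocity_zero] using setIntegral_norm_truncVelocity_sub_le hf N.zero_le

end TruncatedVelocity

section Velocity

/-- The velocity field `∇^⊥ Δ⁻¹ f`. The limit is taken along the subsequence `2 ^ l` because the
truncations converge in `L²` at rate `1 / N`, so that almost everywhere convergence holds along any
geometric subsequence. -/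
def velocity (f : ℝ × ℝ → ℝ) (z : ℝ × ℝ) : ℝ × ℝ :=
  limUnder atTop fun l : ℕ => truncVelocity (2 ^ l) f z

variable {F : ℝ} {f : ℝ × ℝ → ℝ}

lemma eLpNorm_truncVelocity_two_pow_sub_lt (hf : EssBoundedBy F f) {K n m : ℕ} (hn : K ≤ n)
    (hm : K ≤ m) : eLpNorm (truncVelocity (2 ^ n) f - truncVelocity (2 ^ m) f) 2 μD
      < ENNReal.ofReal ((π * F + 1) * (1 / 2) ^ K) := by
  wlog h : m ≤ n generalizing m n
  · rw [eLpNorm_sub_comm]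
    exact this hm hn (le_of_not_ge h)
  have hF := hf.nonneg
  refine (eLpNorm_truncVelocity_sub_le hf (pow_le_pow_right₀ one_le_two h)).trans_lt ?_
  rw [ENNReal.ofReal_lt_ofReal_iff (by positivity)]
  push_cast
  calc π * F / ((2 : ℝ) ^ m + 1) ≤ π * F / (2 : ℝ) ^ K := by
        gcongr
        linarith [pow_le_pow_right₀ (one_le_two (α := ℝ)) hm]
    _ < (π * F + 1) / (2 : ℝ) ^ K := by gcongr; linarith
    _ = (π * F + 1) * (1 / 2) ^ K := by rw [one_div, inv_pow, div_eq_mul_inv]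

lemma ae_tendsto_truncVelocity (hf : EssBoundedBy F f) : ∀ᵐ z ∂μD,
    Tendsto (fun l : ℕ => truncVelocity (2 ^ l) f z) atTop (𝓝 (velocity f z)) := by
  have hF := hf.nonneg
  have hsum : ∑' l : ℕ, ENNReal.ofReal ((π * F + 1) * (1 / 2) ^ l) ≠ ⊤ := by
    rw [← ENNReal.ofReal_tsum_of_nonneg (fun _ => by positivity)
      (summable_geometric_two.mul_left _)]
    exact ENNReal.ofReal_ne_top
  filter_upwards [Lp.ae_tendsto_of_cauchy_eLpNorm (p := 2)
    (fun l => (continuous_truncVelocity (2 ^ l) f).aestronglyMeasurable) one_le_two hsum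
    fun K n m hn hm => eLpNorm_truncVelocity_two_pow_sub_lt hf hn hm] with z hz
  exact tendsto_nhds_limUnder hz

lemma aestronglyMeasurable_velocity (hf : EssBoundedBy F f) :
    AEStronglyMeasurable (velocity f) μD :=
  aestronglyMeasurable_of_tendsto_ae _
    (fun l => (continuous_truncVelocity (2 ^ l) f).aestronglyMeasurable)
    (ae_tendsto_truncVelocity hf)

lemma eLpNorm_velocity_sub_truncVelocity_le (hf : EssBoundedBy F f) (K : ℕ) :
    eLpNorm (fun z => velocity f z - truncVelocity K f z) 2 μD
      ≤ ENNReal.ofReal (π * F / (K + 1)) := by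
  refine (Lp.eLpNorm_lim_le_liminf_eLpNorm
    (f := fun l z => truncVelocity (2 ^ l) f z - truncVelocity K f z)
    (fun l => ((continuous_truncVelocity _ f).sub
      (continuous_truncVelocity K f)).aestronglyMeasurable) _ ?_).trans ?_
  · filter_upwards [ae_tendsto_truncVelocity hf] with z hz
    exact hz.sub_const _
  · refine liminf_le_of_frequently_le' (Eventually.frequently ?_)
    filter_upwards [eventually_ge_atTop K] with l hl
    exact eLpNorm_truncVelocity_sub_le hf (hl.trans Nat.lt_two_pow_self.le)

lemma memLp_velocity (hf : EssBoundedBy F f) : MemLp (velocity f) 2 μD := by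
  refine ⟨aestronglyMeasurable_velocity hf, ?_⟩
  have h := eLpNorm_velocity_sub_truncVelocity_le hf 0
  simp only [truncVelocity_zero, sub_zero] at h
  exact h.trans_lt ENNReal.ofReal_lt_top

lemma integrable_velocity (hf : EssBoundedBy F f) : Integrable (velocity f) μD :=
  (memLp_velocity hf).integrable one_le_two

lemma setIntegral_norm_velocity_sub_truncVelocity_le (hf : EssBoundedBy F f) (K : ℕ) :
    ∫ z in Dom, ‖velocity f z - truncVelocity K f z‖ ≤ 2 * π * (π * F / (K + 1)) := by
  have hF := hf.nonneg
  exact setIntegral_dom_norm_le_of_eLpNorm_two_le ((aestronglyMeasurable_velocity hf).sub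
    (continuous_truncVelocity K f).aestronglyMeasurable) (by positivity)
    (eLpNorm_velocity_sub_truncVelocity_le hf K)

lemma setIntegral_norm_velocity_le (hf : EssBoundedBy F f) :
    ∫ z in Dom, ‖velocity f z‖ ≤ 2 * π * (π * F) := by
  simpa [truncVelocity_zero] using setIntegral_norm_velocity_sub_truncVelocity_le hf 0

lemma tendsto_const_div_add_one (C : ℝ) :
    Tendsto (fun N : ℕ => C / ((N : ℝ) + 1)) atTop (𝓝 0) := by
  simpa [div_eq_mul_inv] using tendsto_one_div_add_atTop_nhds_zero_nat.const_mul C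

lemma tendsto_setIntegral_norm_velocity_sub_truncVelocity (hf : EssBoundedBy F f) :
    Tendsto (fun N => ∫ z in Dom, ‖velocity f z - truncVelocity N f z‖) atTop (𝓝 0) := by
  refine squeeze_zero (fun N => integral_nonneg fun z => norm_nonneg _)
    (fun N => setIntegral_norm_velocity_sub_truncVelocity_le hf N) ?_
  simpa only [mul_div_assoc] using tendsto_const_div_add_one (2 * π * (π * F))

lemma setIntegral_sum_planeWave_mul {s : Finset (ℤ × ℤ)} (c : ℤ × ℤ → ℂ) {n : ℤ × ℤ}
    (hn : -n ∈ s) : ∫ z in Dom, (∑ m ∈ s, c m * planeWave m z) * planeWave n z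
      = 4 * π ^ 2 * c (-n) := by
  simp only [Finset.sum_mul, mul_assoc, planeWave_mul]
  rw [integral_finsetSum _ fun m _ =>
    (integrable_dom_of_continuous (continuous_planeWave _)).const_mul _]
  simp only [integral_const_mul, setIntegral_planeWave, ← eq_neg_iff_add_eq_zero, mul_ite, mul_zero,
    Finset.sum_ite_eq', hn, if_true]
  ring

lemma fourierIntegral_apply_velocity (hf : EssBoundedBy F f) (p : ℝ × ℝ →L[ℝ] ℝ) (n : ℤ × ℤ) :
    fourierIntegral (fun z => p (velocity f z)) n
      = 4 * π ^ 2 * (p ((-n).2, -(-n).1) * streamCoeff f (-n)) := by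
  have hinteg : ∀ N, Integrable (truncVelocity N f) μD := fun N =>
    integrable_dom_of_continuous (continuous_truncVelocity N f)
  have hlim : Tendsto (fun N => fourierIntegral (fun z => p (truncVelocity N f z)) n) atTop
      (𝓝 (fourierIntegral (fun z => p (velocity f z)) n)) := by
    rw [tendsto_iff_norm_sub_tendsto_zero]
    refine squeeze_zero (fun _ => norm_nonneg _) (fun N => ?_) (by
      simpa using (tendsto_setIntegral_norm_velocity_sub_truncVelocity hf).const_mul ‖p‖)
    rw [norm_sub_rev]
    refine (norm_fourierIntegral_sub_le (p.integrable_comp (integrable_velocity hf))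
      (p.integrable_comp (hinteg N)) n).trans ?_
    rw [← integral_const_mul]
    refine integral_mono_of_nonneg (.of_forall fun z => norm_nonneg _)
      (((integrable_velocity hf).sub (hinteg N)).norm.const_mul _) (.of_forall fun z => ?_)
    simpa only [← map_sub] using p.le_opNorm (velocity f z - truncVelocity N f z)
  refine tendsto_nhds_unique hlim (tendsto_const_nhds.congr' ?_)
  filter_upwards [eventually_mem_freqBox (-n)] with N hN
  simp only [fourierIntegral, ofReal_apply_truncVelocity, setIntegral_sum_planeWave_mul _ hN]

lemma fourierIntegral_fst_add_velocity (hf : EssBoundedBy F f) (V : ℝ) (j k : ℤ) :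
    fourierIntegral (fun z => ((V, 0) + velocity f z).1) (-j, k)
      = (if j = 0 ∧ k = 0 then (V * (4 * π ^ 2) : ℂ) else 0)
        + 4 * π ^ 2 * (k * streamCoeff f (j, k)) := by
  have hvel := fourierIntegral_apply_velocity hf (.fst ℝ ℝ ℝ) (-j, k)
  simp only [ContinuousLinearMap.coe_fst', Prod.neg_mk, neg_neg, streamCoeff_mk_neg] at hvel
  have hadd := fourierIntegral_add (integrable_const V) (integrable_velocity hf).fst (-j, k)
  simp only [Prod.fst_add, hadd, hvel, fourierIntegral_const, Prod.ext_iff, Prod.fst_zero,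
    Prod.snd_zero, neg_eq_zero]
  push_cast
  ring

lemma fourierIntegral_snd_add_velocity (hf : EssBoundedBy F f) (V : ℝ) (j k : ℤ) :
    fourierIntegral (fun z => ((V, 0) + velocity f z).2) (-j, k)
      = 4 * π ^ 2 * (j * streamCoeff f (j, k)) := by
  have hvel := fourierIntegral_apply_velocity hf (.snd ℝ ℝ ℝ) (-j, k)
  simp only [ContinuousLinearMap.coe_snd', Prod.neg_mk, neg_neg, streamCoeff_mk_neg] at hvel
  simp only [Prod.snd_add, zero_add, hvel]
  push_cast
  ring

lemma invLapCoeff_eq_streamCoeff (hf : Integrable f μD) (j : ℤ) (k : ℕ) :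
    invLapCoeff f j k = -(4 * π * streamCoeff f (j, k)) := by
  have hπ : (π : ℂ) ≠ 0 := Complex.ofReal_ne_zero.2 pi_ne_zero
  rw [invLapCoeff, fhat_eq_sineCoeff hf, streamCoeff, neg_div, neg_inj]
  push_cast
  rw [← div_div _ (8 * (π : ℂ) ^ 2)]
  field_simp
  ring

lemma memLp_add_velocity (hf : EssBoundedBy F f) (V : ℝ) :
    MemLp (fun z => (V, 0) + velocity f z) 2 μD :=
  (memLp_const ((V, 0) : ℝ × ℝ)).add (memLp_velocity hf)

lemma isVelocity_velocity (hf : EssBoundedBy F f) (V : ℝ) :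
    IsVelocity f V fun z => (V, 0) + velocity f z := by
  have hinteg := (memLp_add_velocity hf V).integrable one_le_two
  have hπ : (π : ℂ) ≠ 0 := Complex.ofReal_ne_zero.2 pi_ne_zero
  refine ⟨memLp_add_velocity hf V, fun j k => ?_, fun j k _ => ?_, fun j k _ => ?_, fun j k => ?_⟩
  · have hk : (if 1 ≤ k then -(invLapCoeff f j k) * (k : ℂ) / 2 else 0)
        = -(invLapCoeff f j k) * (k : ℂ) / 2 := by
      rcases k.eq_zero_or_pos with rfl | hk
      · simp
      · exact if_pos hk
    rw [chat_eq_fourierIntegral hinteg.fst, fourierIntegral_fst_add_velocity hf,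
      fourierIntegral_fst_add_velocity hf, streamCoeff_mk_neg, hk,
      invLapCoeff_eq_streamCoeff hf.integrable]
    simp only [neg_eq_zero, Nat.cast_eq_zero]
    push_cast
    split_ifs <;> field_simp <;> ring
  · rw [fhat_eq_fourierIntegral hinteg.fst, fourierIntegral_fst_add_velocity hf,
      fourierIntegral_fst_add_velocity hf, streamCoeff_mk_neg]
    simp
  · rw [fhat_eq_fourierIntegral hinteg.snd, fourierIntegral_snd_add_velocity hf,
      fourierIntegral_snd_add_velocity hf, streamCoeff_mk_neg,
      invLapCoeff_eq_streamCoeff hf.integrable]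
    field_simp
    rw [Complex.I_sq]
    ring
  · rw [chat_eq_fourierIntegral hinteg.snd, fourierIntegral_snd_add_velocity hf,
      fourierIntegral_snd_add_velocity hf, streamCoeff_mk_neg]
    ring

end Velocity

section Vorticity

variable {H M : ℝ} {h q : ℝ × ℝ → ℝ}

/-- The vorticities on which the scheme acts: pointwise bounded by `M`, periodic, and odd in `y`
at every point. -/
structure OddPeriodicBoundedBy (M : ℝ) (q : ℝ × ℝ → ℝ) : Prop where
  measurable : Measurable q
  bound : ∀ z, |q z| ≤ M
  periodic : DoublyPeriodic q
  odd : ∀ x y, q (x, -y) = -q (x, y)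

lemma OddPeriodicBoundedBy.essBoundedBy (hq : OddPeriodicBoundedBy M q) : EssBoundedBy M q :=
  ⟨hq.measurable, .of_forall hq.bound⟩

/-- The relative vorticity `Δψ′ = q − h − βy` of the potential vorticity `q`. -/
def relVorticity (h : ℝ × ℝ → ℝ) (β : ℝ) (q : ℝ × ℝ → ℝ) (z : ℝ × ℝ) : ℝ :=
  q z - h z - β * z.2

lemma EssBoundedBy.relVorticity (hq : EssBoundedBy M q) (hh : EssBoundedBy H h) (β : ℝ) :
    EssBoundedBy (M + H + |β| * π) (relVorticity h β q) where
  measurable := (hq.measurable.sub hh.measurable).sub (measurable_snd.const_mul β)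
  bound := by
    filter_upwards [hh.bound, hq.bound, ae_restrict_mem measurableSet_dom] with z hhz hqz hz
    have hβ : |β * z.2| ≤ |β| * π := by
      rw [abs_mul]
      gcongr
      exact abs_le.2 ⟨hz.2.1.le, hz.2.2⟩
    calc |q z - h z - β * z.2| ≤ |q z| + |h z| + |β * z.2| :=
          (abs_sub _ _).trans (add_le_add_left (abs_sub _ _) _)
      _ ≤ M + H + |β| * π := by gcongr

end Vorticity

section AveragedTransport

variable {M : ℝ} {φ q : ℝ × ℝ → ℝ}

/-- The time-`a` flow map of the single-mode field `modeFlow V f m`. The field is constant along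
its own flow lines, so the flow is an explicit shear. -/
def modeShear (V : ℝ) (f : ℝ × ℝ → ℝ) (m : ℤ × ℤ) (a : ℝ) (z : ℝ × ℝ) : ℝ × ℝ :=
  z + a • modeFlow V f m z

variable (V : ℝ) (f : ℝ × ℝ → ℝ) (m : ℤ × ℤ) (a : ℝ)

lemma continuous_modeShear : Continuous (modeShear V f m a) :=
  continuous_id.add ((continuous_modeFlow V f m).const_smul a)

lemma modeFlow_modeShear (z : ℝ × ℝ) : modeFlow V f m (modeShear V f m a z) = modeFlow V f m z := by
  have hphase (c : ℝ) : phase m (z + a • c • ((m.2, -m.1) : ℝ × ℝ)) = phase m z := by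
    simp only [phase, Prod.fst_add, Prod.snd_add, Prod.smul_fst, Prod.smul_snd, smul_eq_mul]
    ring
  by_cases hm : m = 0
  · simp only [modeFlow, hm, if_true]
  · simp only [modeShear, modeFlow, hm, if_false, hphase]

lemma modeShear_neg_modeShear (z : ℝ × ℝ) : modeShear V f m (-a) (modeShear V f m a z) = z := by
  rw [modeShear, modeFlow_modeShear, modeShear, neg_smul, add_neg_cancel_right]

lemma measurePreserving_modeShear : MeasurePreserving (modeShear V f m a) := by
  by_cases hm : m = 0
  · have htranslate : modeShear V f m a = fun z => z + a • ((V, 0) : ℝ × ℝ) := by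
      funext z
      simp only [modeShear, modeFlow, hm, if_true]
    rw [htranslate]
    exact measurePreserving_add_right volume _
  · convert measurePreserving_shear m.1 m.2
      ((continuous_shearProfile f m).measurable.const_mul a) using 2 with z
    simp only [modeShear, modeFlow, hm, if_false, phase, smul_eq_mul, Prod.smul_mk]
    congr 2 <;> ring

lemma DoublyPeriodic.comp_modeShear {α : Type*} {g : ℝ × ℝ → α} (hg : DoublyPeriodic g) :
    DoublyPeriodic fun z => g (modeShear V f m a z) where
  fst x y := by
    simp only [modeShear, (doublyPeriodic_modeFlow V f m).fst]
    convert hg.fst _ _ using 2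
    ext <;> simp [add_right_comm]
  snd x y := by
    simp only [modeShear, (doublyPeriodic_modeFlow V f m).snd]
    convert hg.snd _ _ using 2
    ext <;> simp [add_right_comm]

lemma setIntegral_mul_comp_modeShear (hq : DoublyPeriodic q) (hqm : Measurable q)
    (hφ : DoublyPeriodic φ) (hφm : Measurable φ) :
    ∫ z in Dom, φ z * q (modeShear V f m (-a) z) = ∫ z in Dom, φ (modeShear V f m a z) * q z := by
  have hq' := hq.comp_modeShear V f m (-a)
  have hper : DoublyPeriodic fun z => φ z * q (modeShear V f m (-a) z) :=
    ⟨fun x y => congr_arg₂ _ (hφ.fst x y) (hq'.fst x y),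
      fun x y => congr_arg₂ _ (hφ.snd x y) (hq'.snd x y)⟩
  have hdisp : DoublyPeriodic fun z => modeShear V f m a z - z := by
    have hflow := doublyPeriodic_modeFlow V f m
    simp only [modeShear, add_sub_cancel_left]
    exact ⟨fun x y => by rw [hflow.fst], fun x y => by rw [hflow.snd]⟩
  have hmeas : Measurable fun z => φ z * q (modeShear V f m (-a) z) :=
    hφm.mul (hqm.comp (continuous_modeShear V f m (-a)).measurable)
  rw [← setIntegral_dom_comp hper hmeas.stronglyMeasurable (measurePreserving_modeShear V f m a)
    hdisp]
  simp only [modeShear_neg_modeShear]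

/-- One time step of the scheme: instead of the flow of the truncated velocity, which is not
explicit, it averages the transports along the separate modes, each sped up by their number. -/
def averagedTransport (N : ℕ) (τ V : ℝ) (f q : ℝ × ℝ → ℝ) (z : ℝ × ℝ) : ℝ :=
  𝔼 m ∈ freqBox N, q (modeShear V f m (-((freqBox N).card * τ)) z)

lemma modeShear_reflection (j k : ℤ) (x y : ℝ) :
    modeShear V f (j, k) a (x, -y)
      = ((modeShear V f (j, -k) a (x, y)).1, -(modeShear V f (j, -k) a (x, y)).2) := by
  simp only [modeShear, modeFlow_reflection]
  ext
  · simp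
  · simp only [Prod.snd_add, Prod.smul_snd, smul_eq_mul]
    ring

lemma freqBox_nonempty (N : ℕ) : (freqBox N).Nonempty := ⟨0, zero_mem_freqBox N⟩

lemma OddPeriodicBoundedBy.averagedTransport (hq : OddPeriodicBoundedBy M q) (N : ℕ) (τ : ℝ) :
    OddPeriodicBoundedBy M (averagedTransport N τ V f q) where
  measurable := by
    unfold BQG.averagedTransport
    simp only [Finset.expect_eq_sum_div_card]
    exact (Finset.measurable_sum _ fun m _ =>
      hq.measurable.comp (continuous_modeShear V f m _).measurable).div_const _
  bound z := (Finset.abs_expect_le _ _).trans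
    (Finset.expect_le (freqBox_nonempty N) fun _ _ => hq.bound _)
  periodic :=
    ⟨fun x y => Finset.expect_congr rfl fun m _ => (hq.periodic.comp_modeShear V f m _).fst x y,
      fun x y => Finset.expect_congr rfl fun m _ => (hq.periodic.comp_modeShear V f m _).snd x y⟩
  odd x y := by
    have hmem : ∀ m ∈ freqBox N, (m.1, -m.2) ∈ freqBox N := fun m => by
      simp only [mem_freqBox]
      omega
    rw [BQG.averagedTransport, BQG.averagedTransport, ← Finset.expect_neg_distrib]
    refine Finset.expect_nbij' (fun m => (m.1, -m.2)) (fun m => (m.1, -m.2)) hmem hmem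
      (by simp) (by simp) ?_
    rintro ⟨j, k⟩ -
    rw [modeShear_reflection, hq.odd]

lemma setIntegral_mul_averagedTransport (hq : OddPeriodicBoundedBy M q) (hφ : DoublyPeriodic φ)
    (hφc : Continuous φ) (N : ℕ) (τ : ℝ) :
    ∫ z in Dom, φ z * averagedTransport N τ V f q z
      = ∫ z in Dom, (𝔼 m ∈ freqBox N, φ (modeShear V f m ((freqBox N).card * τ) z)) * q z := by
  set a := (freqBox N).card * τ
  have hleft (m : ℤ × ℤ) : Integrable (fun z => φ z * q (modeShear V f m (-a) z)) μD :=
    (integrable_dom_of_continuous hφc).mul_bdd (c := M)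
      (hq.measurable.comp (continuous_modeShear V f m _).measurable).aestronglyMeasurable
      (.of_forall fun z => hq.bound _)
  have hright (m : ℤ × ℤ) : Integrable (fun z => φ (modeShear V f m a z) * q z) μD := by
    simpa only [mul_comm, Function.comp_def] using hq.essBoundedBy.integrable_mul
      (integrable_dom_of_continuous (hφc.comp (continuous_modeShear V f m a)))
  simp only [averagedTransport, Finset.mul_expect, Finset.expect_mul]
  simp only [Finset.expect_eq_sum_div_card, integral_div]
  rw [integral_finsetSum _ fun m _ => hleft m, integral_finsetSum _ fun m _ => hright m]
  simp only [setIntegral_mul_comp_modeShear V f _ a hq.periodic hq.measurable hφ hφc.measurable]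

end AveragedTransport

section OneStep

/-- Space-periodic test functions whose derivative is bounded by `L` and `L`-Lipschitz on the strip
`[0,T] × ℝ²`. -/
structure IsTestFunction (T L : ℝ) (φ : ℝ × ℝ × ℝ → ℝ) : Prop where
  contDiff : ContDiff ℝ 1 φ
  periodic : ∀ t, DoublyPeriodic fun z => φ (t, z)
  norm_fderiv_le : ∀ t ∈ Icc 0 T, ∀ z, ‖fderiv ℝ φ (t, z)‖ ≤ L
  norm_fderiv_sub_le : ∀ p ∈ Icc 0 T ×ˢ univ, ∀ r ∈ Icc 0 T ×ˢ univ,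
    ‖fderiv ℝ φ p - fderiv ℝ φ r‖ ≤ L * ‖p - r‖

/-- The right-hand side `∫_D (∂_tφ + u·∇φ) q dz` of the weak transport equation at time `s`. -/
def transportRate (φ : ℝ × ℝ × ℝ → ℝ) (u : ℝ × ℝ → ℝ × ℝ) (q : ℝ × ℝ → ℝ) (s : ℝ) : ℝ :=
  ∫ z in Dom, (fderiv ℝ φ (s, z) (1, 0, 0) + fderiv ℝ φ (s, z) (0, u z)) * q z

lemma transportRate_eq (φ : ℝ × ℝ × ℝ → ℝ) (u : ℝ × ℝ → ℝ × ℝ) (q : ℝ × ℝ → ℝ) (s : ℝ) :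
    transportRate φ u q s = ∫ z in Dom, fderiv ℝ φ (s, z) (1, u z) * q z := by
  simp only [transportRate, ← map_add, Prod.mk_add_mk, add_zero, Prod.mk_zero_zero, zero_add]

lemma norm_sub_sub_fderiv_apply_le {E G : Type*} [NormedAddCommGroup E] [NormedSpace ℝ E]
    [NormedAddCommGroup G] [NormedSpace ℝ G] {φ : E → G} {s : Set E} {L : ℝ} {x d : E}
    (hφ : Differentiable ℝ φ) (hs : Convex ℝ s)
    (hlip : ∀ p ∈ s, ∀ p' ∈ s, ‖fderiv ℝ φ p - fderiv ℝ φ p'‖ ≤ L * ‖p - p'‖) (hL : 0 ≤ L)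
    (hx : x ∈ s) (hxd : x + d ∈ s) : ‖φ (x + d) - φ x - fderiv ℝ φ x d‖ ≤ L * ‖d‖ ^ 2 := by
  have hbound : ∀ p ∈ segment ℝ x (x + d), ‖fderiv ℝ φ p - fderiv ℝ φ x‖ ≤ L * ‖d‖ :=
    fun p hp => (hlip p (hs.segment_subset hx hxd hp) x hx).trans <| by
      gcongr
      simpa using norm_sub_le_of_mem_segment hp
  have h := (convex_segment x (x + d)).norm_image_sub_le_of_norm_fderiv_le' (𝕜 := ℝ)
    (fun p _ => hφ p) hbound (left_mem_segment ℝ _ _) (right_mem_segment ℝ _ _)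
  rwa [add_sub_cancel_left, mul_assoc, ← sq] at h

variable {T L M F V C t τ : ℝ} {φ : ℝ × ℝ × ℝ → ℝ} {q f : ℝ × ℝ → ℝ}

lemma IsTestFunction.nonneg (hφ : IsTestFunction T L φ) (ht : t ∈ Icc 0 T) : 0 ≤ L :=
  (norm_nonneg _).trans (hφ.norm_fderiv_le t ht 0)

lemma IsTestFunction.continuous_slice (hφ : IsTestFunction T L φ) (t : ℝ) :
    Continuous fun z => φ (t, z) :=
  hφ.contDiff.continuous.comp (by fun_prop)

lemma continuous_fderiv_slice (hφ : ContDiff ℝ 1 φ) (t : ℝ) :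
    Continuous fun z : ℝ × ℝ => fderiv ℝ φ (t, z) :=
  (hφ.continuous_fderiv one_ne_zero).comp (by fun_prop)

lemma norm_modeShear_displacement_le (hf : EssBoundedBy F f) (hV : |V| + F ≤ C) (N : ℕ)
    (hτ : 0 ≤ τ) (m : ℤ × ℤ) (z : ℝ × ℝ) :
    ‖(τ, ((freqBox N).card * τ) • modeFlow V f m z)‖ ≤ τ * (1 + (freqBox N).card * C) := by
  have hflow : ‖modeFlow V f m z‖ ≤ C := (norm_modeFlow_le hf V m z).trans hV
  have hC : 0 ≤ C := (norm_nonneg _).trans hflow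
  have hcard : 0 ≤ τ * ((freqBox N).card * C) := by positivity
  refine max_le ?_ ?_
  · rw [norm_eq_abs, abs_of_nonneg hτ]
    linarith
  · calc ‖((freqBox N).card * τ) • modeFlow V f m z‖
        = (freqBox N).card * τ * ‖modeFlow V f m z‖ := by
          rw [norm_smul, norm_eq_abs, abs_of_nonneg (by positivity)]
      _ ≤ (freqBox N).card * τ * C := by gcongr
      _ ≤ τ * (1 + (freqBox N).card * C) := by linarith

lemma expect_modeShear_displacement (N : ℕ) (V τ : ℝ) (f : ℝ × ℝ → ℝ) (z : ℝ × ℝ)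
    (A : ℝ × ℝ × ℝ →L[ℝ] ℝ) :
    𝔼 m ∈ freqBox N, A (τ, ((freqBox N).card * τ) • modeFlow V f m z)
      = τ * A (1, (V, 0) + truncVelocity N f z) := by
  have hcard : ((freqBox N).card : ℝ) ≠ 0 :=
    Nat.cast_ne_zero.2 (Finset.card_ne_zero.2 (freqBox_nonempty N))
  have hsum : ∑ m ∈ freqBox N, (τ, ((freqBox N).card * τ) • modeFlow V f m z)
      = ((freqBox N).card * τ) • ((1, ∑ m ∈ freqBox N, modeFlow V f m z) : ℝ × ℝ × ℝ) := by
    refine Prod.ext ?_ ?_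
    · simp [Prod.fst_sum]
    · simp only [Prod.snd_sum, Prod.smul_snd, Finset.smul_sum]
  rw [Finset.expect_eq_sum_div_card, ← map_sum, hsum, map_smul, smul_eq_mul, sum_modeFlow,
    mul_assoc, mul_div_cancel_left₀ _ hcard]

lemma abs_expect_modeShear_sub_le (hφ : IsTestFunction T L φ) (hf : EssBoundedBy F f)
    (hV : |V| + F ≤ C) (N : ℕ) (ht : t ∈ Icc 0 T) (hτ : 0 ≤ τ) (htτ : t + τ ≤ T) (z : ℝ × ℝ) :
    |(𝔼 m ∈ freqBox N, φ (t + τ, modeShear V f m ((freqBox N).card * τ) z)) - φ (t, z)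
        - τ * fderiv ℝ φ (t, z) (1, (V, 0) + truncVelocity N f z)|
      ≤ L * (τ * (1 + (freqBox N).card * C)) ^ 2 := by
  have hL := hφ.nonneg ht
  rw [← expect_modeShear_displacement, ← Finset.expect_const (freqBox_nonempty N) (φ (t, z)),
    ← Finset.expect_sub_distrib, ← Finset.expect_sub_distrib]
  refine (Finset.abs_expect_le _ _).trans (Finset.expect_le (freqBox_nonempty N) fun m _ => ?_)
  have htaylor := norm_sub_sub_fderiv_apply_le (x := (t, z))
    (d := (τ, ((freqBox N).card * τ) • modeFlow V f m z)) (hφ.contDiff.differentiable one_ne_zero)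
    ((convex_Icc 0 T).prod convex_univ) hφ.norm_fderiv_sub_le hL ⟨ht, mem_univ _⟩
    ⟨⟨add_nonneg ht.1 hτ, htτ⟩, mem_univ _⟩
  refine htaylor.trans ?_
  gcongr
  exact norm_modeShear_displacement_le hf hV N hτ m z

lemma abs_setIntegral_averagedTransport_sub_le (hφ : IsTestFunction T L φ)
    (hq : OddPeriodicBoundedBy M q) (hf : EssBoundedBy F f) (hV : |V| + F ≤ C) (N : ℕ)
    (ht : t ∈ Icc 0 T) (hτ : 0 ≤ τ) (htτ : t + τ ≤ T) :
    |(∫ z in Dom, φ (t + τ, z) * averagedTransport N τ V f q z) - (∫ z in Dom, φ (t, z) * q z)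
        - τ * transportRate φ (fun z => (V, 0) + truncVelocity N f z) q t|
      ≤ 4 * π ^ 2 * (M * (L * (τ * (1 + (freqBox N).card * C)) ^ 2)) := by
  have hmul {g : ℝ × ℝ → ℝ} (hg : Continuous g) : Integrable (fun z => g z * q z) μD := by
    simpa only [mul_comm] using hq.essBoundedBy.integrable_mul (integrable_dom_of_continuous hg)
  have havg : Continuous fun z =>
      𝔼 m ∈ freqBox N, φ (t + τ, modeShear V f m ((freqBox N).card * τ) z) := by
    simp only [Finset.expect_eq_sum_div_card]
    exact (continuous_finsetSum _ fun m _ =>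
      (hφ.continuous_slice _).comp (continuous_modeShear V f m _)).div_const _
  have hderiv : Continuous fun z => fderiv ℝ φ (t, z) (1, (V, 0) + truncVelocity N f z) :=
    (continuous_fderiv_slice hφ.contDiff t).clm_apply
      (continuous_const.prodMk (continuous_const.add (continuous_truncVelocity N f)))
  have hslice := hmul (hφ.continuous_slice t)
  have hdiff : Integrable (fun z => (𝔼 m ∈ freqBox N,
      φ (t + τ, modeShear V f m ((freqBox N).card * τ) z)) * q z - φ (t, z) * q z) μD :=
    (hmul havg).sub hslice
  rw [setIntegral_mul_averagedTransport V f hq (hφ.periodic _) (hφ.continuous_slice _),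
    transportRate_eq, ← integral_const_mul, ← integral_sub (hmul havg) hslice,
    ← integral_sub hdiff ((hmul hderiv).const_mul τ), ← norm_eq_abs]
  refine (norm_integral_le_of_norm_le_const (.of_forall fun z => ?_)).trans_eq
    (by rw [measureReal_dom, mul_comm])
  rw [← mul_assoc, ← sub_mul, ← sub_mul, norm_mul, mul_comm]
  exact mul_le_mul (hq.bound z) (abs_expect_modeShear_sub_le hφ hf hV N ht hτ htτ z)
    (norm_nonneg _) hq.essBoundedBy.nonneg

end OneStep

section StepFunctions

variable {E : Type*} [NormedAddCommGroup E] {τ : ℝ} {n : ℕ}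

lemma natFloor_div_eq (hτ : 0 < τ) {i : ℕ} {s : ℝ} (hle : i * τ ≤ s) (hlt : s < (i + 1) * τ) :
    ⌊s / τ⌋₊ = i := by
  have hs : 0 ≤ s := (by positivity : 0 ≤ i * τ).trans hle
  rw [Nat.floor_eq_iff (by positivity), le_div_iff₀ hτ, div_lt_iff₀ hτ]
  exact ⟨hle, hlt⟩

lemma natFloor_div_mul_le (hτ : 0 < τ) {t : ℝ} (ht : 0 ≤ t) : ⌊t / τ⌋₊ * τ ≤ t :=
  (le_div_iff₀ hτ).1 (Nat.floor_le (by positivity))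

lemma lt_natFloor_div_add_one_mul (hτ : 0 < τ) (t : ℝ) : t < (⌊t / τ⌋₊ + 1) * τ :=
  (div_lt_iff₀ hτ).1 (Nat.lt_floor_add_one _)

lemma ae_natFloor_div_eq (hτ : 0 < τ) (i : ℕ) :
    ∀ᵐ s : ℝ, s ∈ uIoc (i * τ) ((i + 1 : ℕ) * τ) → ⌊s / τ⌋₊ = i := by
  have hne : ∀ᵐ s : ℝ, s ≠ (i + 1) * τ := by simp [ae_iff]
  filter_upwards [hne] with s hs hmem
  push_cast at hmem
  rw [uIoc_of_le (by linarith)] at hmem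
  exact natFloor_div_eq hτ hmem.1.le (hmem.2.lt_of_ne hs)

variable {g : ℕ → ℝ → E}

lemma intervalIntegrable_natFloor_piece (hτ : 0 < τ) {i : ℕ}
    (hg : IntervalIntegrable (g i) volume (i * τ) ((i + 1 : ℕ) * τ)) :
    IntervalIntegrable (fun s => g ⌊s / τ⌋₊ s) volume (i * τ) ((i + 1 : ℕ) * τ) := by
  refine hg.congr_ae ((ae_restrict_iff' measurableSet_uIoc).2 ?_)
  filter_upwards [ae_natFloor_div_eq hτ i] with s hs hmem
  rw [hs hmem]

lemma intervalIntegrable_natFloor (hτ : 0 < τ)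
    (hg : ∀ i < n, IntervalIntegrable (g i) volume (i * τ) ((i + 1 : ℕ) * τ)) :
    IntervalIntegrable (fun s => g ⌊s / τ⌋₊ s) volume 0 (n * τ) := by
  simpa using IntervalIntegrable.trans_iterate (a := fun i : ℕ => i * τ) fun i hi =>
    intervalIntegrable_natFloor_piece hτ (hg i hi)

variable [NormedSpace ℝ E]

lemma integral_natFloor (hτ : 0 < τ)
    (hg : ∀ i < n, IntervalIntegrable (g i) volume (i * τ) ((i + 1 : ℕ) * τ)) :
    ∫ s in (0 : ℝ)..n * τ, g ⌊s / τ⌋₊ s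
      = ∑ i ∈ Finset.range n, ∫ s in i * τ..(i + 1 : ℕ) * τ, g i s := by
  have hsum := intervalIntegral.sum_integral_adjacent_intervals (a := fun i : ℕ => i * τ)
    fun i hi => intervalIntegrable_natFloor_piece hτ (hg i hi)
  rw [Nat.cast_zero, zero_mul] at hsum
  rw [← hsum]
  refine Finset.sum_congr rfl fun i _ => intervalIntegral.integral_congr_ae ?_
  filter_upwards [ae_natFloor_div_eq hτ i] with s hs hmem
  rw [hs hmem]

lemma norm_sub_sub_integral_natFloor_le {a : ℕ → E} {ε : ℝ} (hτ : 0 < τ)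
    (hg : ∀ i < n, IntervalIntegrable (g i) volume (i * τ) ((i + 1 : ℕ) * τ))
    (hstep : ∀ i < n, ‖a (i + 1) - a i - ∫ s in i * τ..(i + 1 : ℕ) * τ, g i s‖ ≤ τ * ε) :
    ‖a n - a 0 - ∫ s in (0 : ℝ)..n * τ, g ⌊s / τ⌋₊ s‖ ≤ n * τ * ε := by
  rw [integral_natFloor hτ hg, ← Finset.sum_range_sub, ← Finset.sum_sub_distrib]
  refine (norm_sum_le_of_le _ fun i hi => hstep i (Finset.mem_range.1 hi)).trans_eq ?_
  rw [Finset.sum_const, Finset.card_range, nsmul_eq_mul, mul_assoc]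

lemma dist_natFloor_le {α : Type*} [PseudoMetricSpace α] {a : ℕ → α} {B s t : ℝ} (hτ : 0 < τ)
    (hB : 0 ≤ B) (hstep : ∀ i < n, dist (a i) (a (i + 1)) ≤ τ * B) (hs : s ∈ Icc 0 (n * τ))
    (ht : t ∈ Icc 0 (n * τ)) : dist (a ⌊s / τ⌋₊) (a ⌊t / τ⌋₊) ≤ B * (|t - s| + τ) := by
  wlog hst : s ≤ t generalizing s t
  · rw [dist_comm, abs_sub_comm]
    exact this ht hs (le_of_not_ge hst)
  have hfloor : ⌊s / τ⌋₊ ≤ ⌊t / τ⌋₊ := Nat.floor_mono (by gcongr)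
  have htn : ⌊t / τ⌋₊ ≤ n := Nat.floor_le_of_le ((div_le_iff₀ hτ).2 ht.2)
  have hgap : (⌊t / τ⌋₊ - ⌊s / τ⌋₊) * τ ≤ t - s + τ := by
    linarith [natFloor_div_mul_le hτ ht.1, lt_natFloor_div_add_one_mul hτ s]
  calc dist (a ⌊s / τ⌋₊) (a ⌊t / τ⌋₊) ≤ ∑ _i ∈ Finset.Ico ⌊s / τ⌋₊ ⌊t / τ⌋₊, τ * B :=
        dist_le_Ico_sum_of_dist_le hfloor fun _ hi => hstep _ (hi.trans_le htn)
    _ = B * ((⌊t / τ⌋₊ - ⌊s / τ⌋₊) * τ) := by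
        rw [Finset.sum_const, Nat.card_Ico, nsmul_eq_mul, Nat.cast_sub hfloor]
        ring
    _ ≤ B * (|t - s| + τ) := by
        rw [abs_of_nonneg (sub_nonneg.2 hst)]
        gcongr

lemma norm_eulerStep_sub_integral_le [CompleteSpace E] {a r : ℕ → E} {B t : ℝ} (hτ : 0 < τ)
    (ha : ∀ i, a (i + 1) = a i + τ • r i) (hr : ∀ i, ‖r i‖ ≤ B) (ht : 0 ≤ t) :
    ‖a ⌊t / τ⌋₊ - a 0 - ∫ s in (0 : ℝ)..t, r ⌊s / τ⌋₊‖ ≤ B * τ := by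
  have hinteg (n : ℕ) := intervalIntegrable_natFloor (n := n) hτ (g := fun i _ => r i)
    fun i _ => intervalIntegrable_const
  have hstart : ∫ s in (0 : ℝ)..⌊t / τ⌋₊ * τ, r ⌊s / τ⌋₊ = a ⌊t / τ⌋₊ - a 0 := by
    rw [integral_natFloor hτ (g := fun i _ => r i) fun i _ => intervalIntegrable_const,
      ← Finset.sum_range_sub]
    refine Finset.sum_congr rfl fun i _ => ?_
    rw [intervalIntegral.integral_const, ha, add_sub_cancel_left, ← sub_mul, Nat.cast_succ,
      add_sub_cancel_left, one_mul]
  have hle := natFloor_div_mul_le hτ ht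
  have hlt := lt_natFloor_div_add_one_mul hτ t
  have hend : IntervalIntegrable (fun s => r ⌊s / τ⌋₊) volume (⌊t / τ⌋₊ * τ) t := by
    refine (hinteg (⌊t / τ⌋₊ + 1)).mono_set (uIcc_subset_uIcc_iff_le.2 ?_)
    push_cast
    rw [inf_of_le_left hle, sup_of_le_right hle, sup_of_le_right (ht.trans hlt.le),
      inf_of_le_left (ht.trans hlt.le)]
    exact ⟨by positivity, hlt.le⟩
  rw [← intervalIntegral.integral_add_adjacent_intervals (hinteg _) hend, hstart,
    sub_add_cancel_left, norm_neg]
  have hB : 0 ≤ B := (norm_nonneg _).trans (hr 0)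
  refine (intervalIntegral.norm_integral_le_of_norm_le_const fun s _ => hr _).trans ?_
  rw [abs_of_nonneg (by linarith)]
  gcongr
  linarith

end StepFunctions

section TransportRate

variable {T L M B s t : ℝ} {φ : ℝ × ℝ × ℝ → ℝ} {q : ℝ × ℝ → ℝ} {u : ℝ × ℝ → ℝ × ℝ}
  {A A' : ℝ × ℝ → (ℝ × ℝ × ℝ →L[ℝ] ℝ)}

lemma norm_apply_one_prodMk_le (A : ℝ × ℝ × ℝ →L[ℝ] ℝ) (hA : ‖A‖ ≤ L) (v : ℝ × ℝ) :
    ‖A (1, v)‖ ≤ L * (1 + ‖v‖) := by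
  have hnorm : ‖((1, v) : ℝ × ℝ × ℝ)‖ ≤ 1 + ‖v‖ :=
    max_le (by rw [norm_one]; linarith [norm_nonneg v]) (by linarith)
  exact (A.le_opNorm _).trans
    (mul_le_mul hA hnorm (norm_nonneg _) ((norm_nonneg _).trans hA))

lemma integrable_clm_apply_mul (hq : EssBoundedBy M q) (hu : Integrable u μD)
    (hA : Continuous A) : Integrable (fun z => A z (1, u z) * q z) μD := by
  obtain ⟨C, hC⟩ := (isCompact_Icc.prod isCompact_Icc :
    IsCompact (Icc (-π) π ×ˢ Icc (-π) π)).exists_bound_of_continuousOn hA.continuousOn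
  have hmeas : AEStronglyMeasurable (fun z => A z (1, u z)) μD :=
    (isBoundedBilinearMap_apply (𝕜 := ℝ) (E := ℝ × ℝ × ℝ) (F := ℝ)).continuous
      |>.comp_aestronglyMeasurable (hA.aestronglyMeasurable.prodMk
        (aestronglyMeasurable_const.prodMk hu.aestronglyMeasurable))
  have hinteg : Integrable (fun z => A z (1, u z)) μD :=
    Integrable.mono' (((integrable_const 1).add hu.norm).const_mul C) hmeas <|
      ae_restrict_of_forall_mem measurableSet_dom fun z hz =>
        norm_apply_one_prodMk_le _ (hC z (prod_mono Ioc_subset_Icc_self Ioc_subset_Icc_self hz)) _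
  exact hinteg.mul_bdd (c := M) hq.measurable.aestronglyMeasurable hq.bound

lemma abs_setIntegral_clm_apply_mul_sub_le (hq : EssBoundedBy M q) (hu : Integrable u μD)
    (hA : Continuous A) (hA' : Continuous A') (hAA' : ∀ z, ‖A z - A' z‖ ≤ L)
    (hB : ∫ z in Dom, (1 + ‖u z‖) ≤ B) :
    |(∫ z in Dom, A z (1, u z) * q z) - ∫ z in Dom, A' z (1, u z) * q z| ≤ L * M * B := by
  have hL : 0 ≤ L := (norm_nonneg _).trans (hAA' 0)
  have hM := hq.nonneg
  rw [← integral_sub (integrable_clm_apply_mul hq hu hA) (integrable_clm_apply_mul hq hu hA'),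
    ← norm_eq_abs]
  calc ‖∫ z in Dom, (A z (1, u z) * q z - A' z (1, u z) * q z)‖
      ≤ ∫ z in Dom, L * M * (1 + ‖u z‖) := by
        refine norm_integral_le_of_norm_le (((integrable_const 1).add hu.norm).const_mul _) ?_
        filter_upwards [hq.bound] with z hz
        rw [← sub_mul, ← sub_apply, norm_mul]
        calc ‖(A z - A' z) (1, u z)‖ * ‖q z‖ ≤ L * (1 + ‖u z‖) * M :=
              mul_le_mul (norm_apply_one_prodMk_le _ (hAA' z) _) hz (norm_nonneg _)
                (by positivity)
          _ = L * M * (1 + ‖u z‖) := by ring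
    _ ≤ L * M * B := by
        rw [integral_const_mul]
        gcongr

lemma abs_transportRate_le (hφ : ContDiff ℝ 1 φ) (hφL : ∀ z, ‖fderiv ℝ φ (t, z)‖ ≤ L)
    (hq : EssBoundedBy M q) (hu : Integrable u μD) (hB : ∫ z in Dom, (1 + ‖u z‖) ≤ B) :
    |transportRate φ u q t| ≤ L * M * B := by
  have hbound := abs_setIntegral_clm_apply_mul_sub_le hq hu (continuous_fderiv_slice hφ t)
    (continuous_const (y := 0)) (fun z => (sub_zero (fderiv ℝ φ (t, z))).symm ▸ hφL z) hB
  simpa only [transportRate_eq, zero_apply, zero_mul, integral_zero, sub_zero]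
    using hbound

lemma IsTestFunction.abs_transportRate_sub_le (hφ : IsTestFunction T L φ) (hq : EssBoundedBy M q)
    (hu : Integrable u μD) (hB : ∫ z in Dom, (1 + ‖u z‖) ≤ B) (hs : s ∈ Icc 0 T)
    (ht : t ∈ Icc 0 T) :
    |transportRate φ u q s - transportRate φ u q t| ≤ L * M * B * |s - t| := by
  have hlip (z : ℝ × ℝ) : ‖fderiv ℝ φ (s, z) - fderiv ℝ φ (t, z)‖ ≤ L * |s - t| := by
    simpa [Prod.norm_def] using hφ.norm_fderiv_sub_le (s, z) ⟨hs, mem_univ _⟩ (t, z)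
      ⟨ht, mem_univ _⟩
  rw [transportRate_eq, transportRate_eq]
  calc _ ≤ L * |s - t| * M * B := abs_setIntegral_clm_apply_mul_sub_le hq hu
        (continuous_fderiv_slice hφ.contDiff s) (continuous_fderiv_slice hφ.contDiff t) hlip hB
    _ = L * M * B * |s - t| := by ring

lemma IsTestFunction.continuousOn_transportRate (hφ : IsTestFunction T L φ)
    (hq : EssBoundedBy M q) (hu : Integrable u μD) :
    ContinuousOn (transportRate φ u q) (Icc 0 T) := by
  have hlip : LipschitzOnWith (L * M * ∫ z in Dom, (1 + ‖u z‖)).toNNReal (transportRate φ u q)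
      (Icc 0 T) := by
    refine .of_dist_le' fun s hs t ht => ?_
    exact hφ.abs_transportRate_sub_le hq hu le_rfl hs ht
  exact hlip.continuousOn

end TransportRate

section Scheme

variable {β C F H L M T V V₀ t ε τ : ℝ} {f h q q₀ : ℝ × ℝ → ℝ} {φ : ℝ × ℝ × ℝ → ℝ}
  {w : ℝ × ℝ → ℝ × ℝ} {N : ℕ}

/-- The topographic form stress `(4π²)⁻¹ ∫_D h ∂_xψ′` driving the mean flow, for the velocity
`w = ∇^⊥ψ′`. -/
def formStress (h : ℝ × ℝ → ℝ) (w : ℝ × ℝ → ℝ × ℝ) : ℝ :=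
  (∫ z in Dom, h z * (w z).2) / (4 * π ^ 2)

lemma abs_formStress_le (hh : EssBoundedBy H h) (hw : Integrable w μD)
    (hF : ∫ z in Dom, ‖w z‖ ≤ 4 * π ^ 2 * F) : |formStress h w| ≤ H * F := by
  have hH := hh.nonneg
  rw [formStress, abs_div, abs_of_pos (by positivity : 0 < 4 * π ^ 2),
    div_le_iff₀ (by positivity), ← norm_eq_abs]
  calc ‖∫ z in Dom, h z * (w z).2‖ ≤ ∫ z in Dom, H * ‖w z‖ := by
        refine norm_integral_le_of_norm_le (hw.norm.const_mul H) ?_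
        filter_upwards [hh.bound] with z hz
        rw [norm_mul]
        exact mul_le_mul hz (norm_snd_le _) (norm_nonneg _) hH
    _ ≤ H * (4 * π ^ 2 * F) := by
        rw [integral_const_mul]
        gcongr
    _ = H * F * (4 * π ^ 2) := by ring

lemma integrable_truncVelocity (N : ℕ) (f : ℝ × ℝ → ℝ) : Integrable (truncVelocity N f) μD :=
  integrable_dom_of_continuous (continuous_truncVelocity N f)

lemma integrable_add_truncVelocity (V : ℝ) (N : ℕ) (f : ℝ × ℝ → ℝ) :
    Integrable (fun z => (V, 0) + truncVelocity N f z) μD :=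
  (integrable_const _).add (integrable_truncVelocity N f)

lemma EssBoundedBy.setIntegral_norm_truncVelocity_le (hf : EssBoundedBy F f) (N : ℕ) :
    ∫ z in Dom, ‖truncVelocity N f z‖ ≤ 4 * π ^ 2 * F := by
  refine (BQG.setIntegral_norm_truncVelocity_le hf N).trans ?_
  have : 0 ≤ π ^ 2 * F := mul_nonneg (sq_nonneg π) hf.nonneg
  linarith

lemma setIntegral_one_add_norm_le (hw : Integrable w μD)
    (hF : ∫ z in Dom, ‖w z‖ ≤ 4 * π ^ 2 * F) (hV : |V| + F ≤ C) :
    ∫ z in Dom, (1 + ‖(V, 0) + w z‖) ≤ 4 * π ^ 2 * (1 + C) := by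
  have hinteg : Integrable (fun z => (V, 0) + w z) μD := (integrable_const _).add hw
  have hnorm (z : ℝ × ℝ) : 1 + ‖(V, 0) + w z‖ ≤ 1 + |V| + ‖w z‖ := by
    have hV0 : ‖((V, 0) : ℝ × ℝ)‖ = |V| := by simp [Prod.norm_def]
    linarith [norm_add_le ((V, 0) : ℝ × ℝ) (w z)]
  calc ∫ z in Dom, (1 + ‖(V, 0) + w z‖) ≤ ∫ z in Dom, (1 + |V| + ‖w z‖) :=
        integral_mono ((integrable_const 1).add hinteg.norm)
          ((integrable_const _).add hw.norm) hnorm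
    _ = 4 * π ^ 2 * (1 + |V|) + ∫ z in Dom, ‖w z‖ := by
        rw [integral_add (integrable_const _) hw.norm, integral_const, measureReal_dom, smul_eq_mul]
    _ ≤ 4 * π ^ 2 * (1 + C) := by nlinarith [pi_pos]

lemma abs_setIntegral_averagedTransport_sub_smul_transportRate_le (hφ : IsTestFunction T L φ)
    (hq : OddPeriodicBoundedBy M q) (hf : EssBoundedBy F f) (hV : |V| + F ≤ C) (ht : t ∈ Icc 0 T)
    (hτ : 0 ≤ τ) (htτ : t + τ ≤ T) (hε : τ * (1 + (freqBox N).card * C) ^ 2 ≤ ε) :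
    |(∫ z in Dom, φ (t + τ, z) * averagedTransport N τ V f q z) - (∫ z in Dom, φ (t, z) * q z)
        - τ * transportRate φ (fun z => (V, 0) + truncVelocity N f z) q t|
      ≤ τ * (4 * π ^ 2 * M * L * ε) := by
  have hL := hφ.nonneg ht
  have hM := hq.essBoundedBy.nonneg
  calc _ ≤ 4 * π ^ 2 * (M * (L * (τ * (1 + (freqBox N).card * C)) ^ 2)) :=
        abs_setIntegral_averagedTransport_sub_le hφ hq hf hV N ht hτ htτ
    _ = τ * (4 * π ^ 2 * M * L * (τ * (1 + (freqBox N).card * C) ^ 2)) := by ring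
    _ ≤ τ * (4 * π ^ 2 * M * L * ε) := by gcongr

lemma le_of_mul_one_add_sq_le {x : ℝ} (hτ : 0 ≤ τ) (hx : 0 ≤ x) (hε : τ * (1 + x) ^ 2 ≤ ε) :
    τ ≤ ε :=
  (le_mul_of_one_le_right hτ (one_le_pow₀ (by linarith))).trans hε

lemma abs_mul_sub_integral_le {g : ℝ → ℝ} {K : ℝ} (hτ : 0 ≤ τ)
    (hg : IntervalIntegrable g volume t (t + τ)) (hgK : ∀ s ∈ Icc t (t + τ), |g t - g s| ≤ K) :
    |τ * g t - ∫ s in t..t + τ, g s| ≤ τ * K := by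
  have hconst : τ * g t = ∫ _ in t..t + τ, g t := by
    rw [intervalIntegral.integral_const, add_sub_cancel_left, smul_eq_mul]
  rw [hconst, ← intervalIntegral.integral_sub intervalIntegrable_const hg, ← norm_eq_abs]
  refine (intervalIntegral.norm_integral_le_of_norm_le_const fun s hs => ?_).trans_eq
    (by rw [add_sub_cancel_left, abs_of_nonneg hτ, mul_comm])
  rw [uIoc_of_le (by linarith)] at hs
  exact hgK s (Ioc_subset_Icc_self hs)

lemma abs_setIntegral_averagedTransport_sub_integral_le (hφ : IsTestFunction T L φ)
    (hq : OddPeriodicBoundedBy M q) (hf : EssBoundedBy F f) (hV : |V| + F ≤ C) (ht : t ∈ Icc 0 T)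
    (hτ : 0 ≤ τ) (htτ : t + τ ≤ T) (hε : τ * (1 + (freqBox N).card * C) ^ 2 ≤ ε) :
    |(∫ z in Dom, φ (t + τ, z) * averagedTransport N τ V f q z) - (∫ z in Dom, φ (t, z) * q z)
        - ∫ s in t..t + τ, transportRate φ (fun z => (V, 0) + truncVelocity N f z) q s|
      ≤ τ * (4 * π ^ 2 * M * (2 + C) * L * ε) := by
  set rate := transportRate φ (fun z => (V, 0) + truncVelocity N f z) q
  have hL := hφ.nonneg ht
  have hM := hq.essBoundedBy.nonneg
  have hC : 0 ≤ C := (add_nonneg (abs_nonneg V) hf.nonneg).trans hV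
  have hτε : τ ≤ ε := le_of_mul_one_add_sq_le hτ (by positivity) hε
  have hu := integrable_add_truncVelocity V N f
  have huB := setIntegral_one_add_norm_le (integrable_truncVelocity N f)
    (hf.setIntegral_norm_truncVelocity_le N) hV
  have hsub : Icc t (t + τ) ⊆ Icc 0 T := Icc_subset_Icc ht.1 htτ
  have hinteg : IntervalIntegrable rate volume t (t + τ) := by
    refine ((hφ.continuousOn_transportRate hq.essBoundedBy hu).mono ?_).intervalIntegrable
    rwa [uIcc_of_le (by linarith)]
  have hfreeze : |τ * rate t - ∫ s in t..t + τ, rate s|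
      ≤ τ * (L * M * (4 * π ^ 2 * (1 + C)) * ε) := by
    refine abs_mul_sub_integral_le hτ hinteg fun s hs => ?_
    refine (hφ.abs_transportRate_sub_le hq.essBoundedBy hu huB ht (hsub hs)).trans ?_
    have hts : |t - s| ≤ ε := by
      rw [abs_sub_comm, abs_of_nonneg (by linarith [hs.1])]
      linarith [hs.2]
    gcongr
  calc _ ≤ τ * (4 * π ^ 2 * M * L * ε) + τ * (L * M * (4 * π ^ 2 * (1 + C)) * ε) :=
        (abs_sub_le _ (τ * rate t) _).trans (add_le_add
          (abs_setIntegral_averagedTransport_sub_smul_transportRate_le hφ hq hf hV ht hτ htτ hε)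
          hfreeze)
    _ = τ * (4 * π ^ 2 * M * (2 + C) * L * ε) := by ring

lemma abs_setIntegral_averagedTransport_sub_self_le (hφ : IsTestFunction T L φ)
    (hq : OddPeriodicBoundedBy M q) (hf : EssBoundedBy F f) (hV : |V| + F ≤ C) (ht : t ∈ Icc 0 T)
    (hτ : 0 ≤ τ) (htτ : t + τ ≤ T) (hε : τ * (1 + (freqBox N).card * C) ^ 2 ≤ 1) :
    |(∫ z in Dom, φ (t + τ, z) * averagedTransport N τ V f q z) - ∫ z in Dom, φ (t, z) * q z|
      ≤ τ * (4 * π ^ 2 * M * (2 + C) * L) := by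
  have hrate := abs_transportRate_le hφ.contDiff (hφ.norm_fderiv_le t ht) hq.essBoundedBy
    (integrable_add_truncVelocity V N f) (setIntegral_one_add_norm_le (integrable_truncVelocity N f)
      (hf.setIntegral_norm_truncVelocity_le N) hV)
  have hstep := abs_setIntegral_averagedTransport_sub_smul_transportRate_le hφ hq hf hV ht hτ htτ hε
  set rate := transportRate φ (fun z => (V, 0) + truncVelocity N f z) q t
  calc _ ≤ τ * (4 * π ^ 2 * M * L * 1) + |τ * rate| := by
        linarith [abs_sub_abs_le_abs_sub ((∫ z in Dom, φ (t + τ, z) * averagedTransport N τ V f q z)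
          - ∫ z in Dom, φ (t, z) * q z) (τ * rate)]
    _ ≤ τ * (4 * π ^ 2 * M * L * 1) + τ * (L * M * (4 * π ^ 2 * (1 + C))) := by
        rw [abs_mul, abs_of_nonneg hτ]
        gcongr
    _ = τ * (4 * π ^ 2 * M * (2 + C) * L) := by ring

/-- The iterates `(Vᵢ, qᵢ)` of the time-stepping scheme: an explicit Euler step for the mean flow
and an averaged transport step for the vorticity. -/
def scheme (h : ℝ × ℝ → ℝ) (β : ℝ) (N : ℕ) (τ V₀ : ℝ) (q₀ : ℝ × ℝ → ℝ) : ℕ → ℝ × (ℝ × ℝ → ℝ)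
  | 0 => (V₀, q₀)
  | i + 1 =>
    let (V, q) := scheme h β N τ V₀ q₀ i
    (V + τ • formStress h (truncVelocity N (relVorticity h β q)),
      averagedTransport N τ V (relVorticity h β q) q)

lemma oddPeriodicBoundedBy_scheme (hq₀ : OddPeriodicBoundedBy M q₀) (i : ℕ) :
    OddPeriodicBoundedBy M (scheme h β N τ V₀ q₀ i).2 := by
  induction i with
  | zero => exact hq₀
  | succ i ih => exact ih.averagedTransport _ _ _ _

lemma essBoundedBy_relVorticity_scheme (hh : EssBoundedBy H h) (hq₀ : OddPeriodicBoundedBy M q₀)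
    (i : ℕ) : EssBoundedBy (M + H + |β| * π) (relVorticity h β (scheme h β N τ V₀ q₀ i).2) :=
  (oddPeriodicBoundedBy_scheme hq₀ i).essBoundedBy.relVorticity hh β

lemma abs_formStress_scheme_le (hh : EssBoundedBy H h) (hq₀ : OddPeriodicBoundedBy M q₀) (i : ℕ) :
    |formStress h (truncVelocity N (relVorticity h β (scheme h β N τ V₀ q₀ i).2))|
      ≤ H * (M + H + |β| * π) :=
  abs_formStress_le hh (integrable_truncVelocity _ _)
    ((essBoundedBy_relVorticity_scheme hh hq₀ i).setIntegral_norm_truncVelocity_le N)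

lemma dist_scheme_fst_succ_le (hh : EssBoundedBy H h) (hq₀ : OddPeriodicBoundedBy M q₀)
    (hτ : 0 ≤ τ) (i : ℕ) :
    dist (scheme h β N τ V₀ q₀ i).1 (scheme h β N τ V₀ q₀ (i + 1)).1
      ≤ τ * (H * (M + H + |β| * π)) := by
  rw [dist_comm, dist_eq, scheme, add_sub_cancel_left, smul_eq_mul, abs_mul, abs_of_nonneg hτ]
  gcongr
  exact abs_formStress_scheme_le hh hq₀ i

lemma abs_scheme_fst_le (hh : EssBoundedBy H h) (hq₀ : OddPeriodicBoundedBy M q₀) (hτ : 0 ≤ τ)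
    (i : ℕ) : |(scheme h β N τ V₀ q₀ i).1| ≤ |V₀| + i * τ * (H * (M + H + |β| * π)) := by
  have hdist := dist_le_range_sum_of_dist_le (f := fun i => (scheme h β N τ V₀ q₀ i).1) i
    fun {j} _ => dist_scheme_fst_succ_le hh hq₀ hτ j
  rw [Finset.sum_const, Finset.card_range, nsmul_eq_mul, ← mul_assoc, dist_comm, dist_eq] at hdist
  have := abs_sub_abs_le_abs_sub (scheme h β N τ V₀ q₀ i).1 V₀
  change |(scheme h β N τ V₀ q₀ i).1 - V₀| ≤ _ at hdist
  linarith

end Scheme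

section ApproximateSolutions

variable {β C H L M T V₀ ε τ : ℝ} {h q₀ ϕ : ℝ × ℝ → ℝ} {φ : ℝ × ℝ × ℝ → ℝ} {N n : ℕ}

lemma natCast_mul_mem_Icc (hτ : 0 ≤ τ) {i : ℕ} (hi : i ≤ n) : (i : ℝ) * τ ∈ Icc 0 (n * τ) :=
  ⟨by positivity, by gcongr⟩

lemma intervalIntegrable_transportRate_scheme (hφ : IsTestFunction (n * τ) L φ)
    (hq₀ : OddPeriodicBoundedBy M q₀) (hτ : 0 ≤ τ) {i : ℕ} (hi : i < n) :
    IntervalIntegrable (transportRate φ (fun z => ((scheme h β N τ V₀ q₀ i).1, 0) +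
      truncVelocity N (relVorticity h β (scheme h β N τ V₀ q₀ i).2) z)
      (scheme h β N τ V₀ q₀ i).2) volume (i * τ) ((i + 1 : ℕ) * τ) := by
  have hcont := hφ.continuousOn_transportRate
    (oddPeriodicBoundedBy_scheme (h := h) (β := β) (N := N) (τ := τ) (V₀ := V₀) hq₀ i).essBoundedBy
    (integrable_add_truncVelocity (scheme h β N τ V₀ q₀ i).1 N
      (relVorticity h β (scheme h β N τ V₀ q₀ i).2))
  exact (hcont.mono ((convex_Icc 0 _).ordConnected.uIcc_subset (natCast_mul_mem_Icc hτ hi.le)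
    (natCast_mul_mem_Icc hτ hi))).intervalIntegrable

lemma abs_scheme_pairing_sub_integral_le (hφ : IsTestFunction (n * τ) L φ)
    (hh : EssBoundedBy H h) (hq₀ : OddPeriodicBoundedBy M q₀) (hτ : 0 < τ)
    (hV : ∀ i ≤ n, |(scheme h β N τ V₀ q₀ i).1| + (M + H + |β| * π) ≤ C)
    (hε : τ * (1 + (freqBox N).card * C) ^ 2 ≤ ε) :
    |(∫ z in Dom, φ (n * τ, z) * (scheme h β N τ V₀ q₀ n).2 z) - (∫ z in Dom, φ (0, z) * q₀ z)
        - ∫ s in (0 : ℝ)..n * τ, transportRate φ (fun z => ((scheme h β N τ V₀ q₀ ⌊s / τ⌋₊).1, 0) +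
          truncVelocity N (relVorticity h β (scheme h β N τ V₀ q₀ ⌊s / τ⌋₊).2) z)
          (scheme h β N τ V₀ q₀ ⌊s / τ⌋₊).2 s|
      ≤ n * τ * (4 * π ^ 2 * M * (2 + C) * L * ε) := by
  set S := scheme h β N τ V₀ q₀
  have htelescope := norm_sub_sub_integral_natFloor_le (n := n) (τ := τ)
    (a := fun i => ∫ z in Dom, φ (i * τ, z) * (S i).2 z)
    (g := fun i => transportRate φ
      (fun z => ((S i).1, 0) + truncVelocity N (relVorticity h β (S i).2) z) (S i).2)
    (ε := 4 * π ^ 2 * M * (2 + C) * L * ε) hτ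
    (fun i hi => intervalIntegrable_transportRate_scheme hφ hq₀ hτ.le hi) fun i hi => ?_
  · simp only [Nat.cast_zero, zero_mul] at htelescope
    exact htelescope
  · have hnext : ((i + 1 : ℕ) : ℝ) * τ = i * τ + τ := by
      push_cast
      ring
    rw [hnext]
    exact abs_setIntegral_averagedTransport_sub_integral_le hφ (oddPeriodicBoundedBy_scheme hq₀ i)
      (essBoundedBy_relVorticity_scheme hh hq₀ i) (hV i hi.le) (natCast_mul_mem_Icc hτ.le hi.le)
      hτ.le (hnext ▸ (natCast_mul_mem_Icc hτ.le hi).2) hε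

lemma dist_scheme_pairing_succ_le (hϕ : IsTestFunction (n * τ) L fun p => ϕ p.2)
    (hh : EssBoundedBy H h) (hq₀ : OddPeriodicBoundedBy M q₀) (hτ : 0 ≤ τ)
    (hV : ∀ i ≤ n, |(scheme h β N τ V₀ q₀ i).1| + (M + H + |β| * π) ≤ C)
    (hε : τ * (1 + (freqBox N).card * C) ^ 2 ≤ 1) {i : ℕ} (hi : i < n) :
    dist (∫ z in Dom, ϕ z * (scheme h β N τ V₀ q₀ i).2 z)
      (∫ z in Dom, ϕ z * (scheme h β N τ V₀ q₀ (i + 1)).2 z)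
      ≤ τ * (4 * π ^ 2 * M * (2 + C) * L) := by
  have hend : (i : ℝ) * τ + τ ≤ n * τ := by
    have hnext := (natCast_mul_mem_Icc (i := i + 1) hτ hi).2
    rwa [Nat.cast_succ, add_one_mul] at hnext
  rw [dist_comm]
  exact abs_setIntegral_averagedTransport_sub_self_le hϕ (oddPeriodicBoundedBy_scheme hq₀ i)
    (essBoundedBy_relVorticity_scheme hh hq₀ i) (hV i hi.le) (natCast_mul_mem_Icc hτ hi.le) hτ
    hend hε

/-- A pair `(V, q)` solving the equations on `[0,T]` with the velocity truncated to `freqBox N`, up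
to an error `O(1/N)` in the weak formulation, with the equicontinuity in time that survives the
limit `N → ∞`. -/
structure IsApproxSolution (T M β : ℝ) (h : ℝ × ℝ → ℝ) (V₀ : ℝ) (q₀ : ℝ × ℝ → ℝ) (C : ℝ) (N : ℕ)
    (V : ℝ → ℝ) (q : ℝ → ℝ × ℝ → ℝ) : Prop where
  oddPeriodicBoundedBy : ∀ t, OddPeriodicBoundedBy M (q t)
  abs_meanFlow_le : ∀ t ∈ Icc 0 T, |V t| ≤ C
  intervalIntegrable_transportRate : ∀ L φ, IsTestFunction T L φ →
    IntervalIntegrable (fun s => transportRate φ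
      (fun z => (V s, 0) + truncVelocity N (relVorticity h β (q s)) z) (q s) s) volume 0 T
  abs_pairing_sub_integral_le : ∀ L φ, IsTestFunction T L φ →
    |(∫ z in Dom, φ (T, z) * q T z) - (∫ z in Dom, φ (0, z) * q₀ z)
      - ∫ s in (0 : ℝ)..T, transportRate φ
        (fun z => (V s, 0) + truncVelocity N (relVorticity h β (q s)) z) (q s) s|
      ≤ C * L * (1 / (N + 1))
  dist_pairing_le : ∀ L (ϕ : ℝ × ℝ → ℝ), IsTestFunction T L (fun p => ϕ p.2) →
    ∀ s ∈ Icc 0 T, ∀ t ∈ Icc 0 T,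
      dist (∫ z in Dom, ϕ z * q s z) (∫ z in Dom, ϕ z * q t z) ≤ C * L * (|t - s| + 1 / (N + 1))
  dist_meanFlow_le : ∀ s ∈ Icc 0 T, ∀ t ∈ Icc 0 T,
    dist (V s) (V t) ≤ C * (|t - s| + 1 / (N + 1))
  intervalIntegrable_formStress : IntervalIntegrable
    (fun s => formStress h (truncVelocity N (relVorticity h β (q s)))) volume 0 T
  abs_meanFlow_sub_integral_le : ∀ t ∈ Icc 0 T,
    |V t - V₀ - ∫ s in (0 : ℝ)..t, formStress h (truncVelocity N (relVorticity h β (q s)))|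
      ≤ C * (1 / (N + 1))

lemma abs_scheme_fst_add_le (hh : EssBoundedBy H h) (hq₀ : OddPeriodicBoundedBy M q₀)
    (hτ : 0 ≤ τ) {i : ℕ} (hi : i ≤ n) :
    |(scheme h β N τ V₀ q₀ i).1| + (M + H + |β| * π)
      ≤ |V₀| + n * τ * (H * (M + H + |β| * π)) + (M + H + |β| * π) := by
  have hM := hq₀.essBoundedBy.nonneg
  have hH := hh.nonneg
  gcongr
  refine (abs_scheme_fst_le hh hq₀ hτ i).trans ?_
  gcongr

lemma isApproxSolution_scheme (hh : EssBoundedBy H h) (hq₀ : OddPeriodicBoundedBy M q₀)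
    (hτ : 0 < τ) (hC0 : 0 ≤ C) (hV : ∀ i ≤ n, |(scheme h β N τ V₀ q₀ i).1| + (M + H + |β| * π) ≤ C)
    (hε : τ * (1 + (freqBox N).card * C) ^ 2 ≤ 1 / (N + 1)) :
    IsApproxSolution (n * τ) M β h V₀ q₀
      (C + H * (M + H + |β| * π) + (n * τ + 1) * (4 * π ^ 2 * M * (2 + C))) N
      (fun t => (scheme h β N τ V₀ q₀ ⌊t / τ⌋₊).1) fun t => (scheme h β N τ V₀ q₀ ⌊t / τ⌋₊).2 := by
  have hM := hq₀.essBoundedBy.nonneg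
  have hH := hh.nonneg
  have hN : 1 / ((N : ℝ) + 1) ≤ 1 := (div_le_one (by positivity)).2 (by simp)
  have hτε : τ ≤ 1 / (N + 1) := le_of_mul_one_add_sq_le hτ.le (by positivity) hε
  have hF0 : 0 ≤ M + H + |β| * π := by positivity
  have hHF : 0 ≤ H * (M + H + |β| * π) := by positivity
  have hA : 0 ≤ 4 * π ^ 2 * M * (2 + C) := by positivity
  have hnA : 0 ≤ n * τ * (4 * π ^ 2 * M * (2 + C)) := by positivity
  have hfloor : ⌊n * τ / τ⌋₊ = n := by rw [mul_div_cancel_right₀ _ hτ.ne', Nat.floor_natCast]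
  refine ⟨fun t => oddPeriodicBoundedBy_scheme hq₀ _, fun t ht => ?_, fun L φ hφ => ?_,
    fun L φ hφ => ?_, fun L ϕ hϕ s hs t ht => ?_, fun s hs t ht => ?_, ?_, fun t ht => ?_⟩
  · linarith [hV _ (Nat.floor_le_of_le ((div_le_iff₀ hτ).2 ht.2))]
  · exact intervalIntegrable_natFloor hτ fun i hi =>
      intervalIntegrable_transportRate_scheme hφ hq₀ hτ.le hi
  · have hL := hφ.nonneg (natCast_mul_mem_Icc hτ.le le_rfl)
    rw [hfloor]
    refine (abs_scheme_pairing_sub_integral_le hφ hh hq₀ hτ hV hε).trans ?_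
    rw [← mul_assoc, ← mul_assoc]
    gcongr
    linarith
  · have hL := hϕ.nonneg hs
    refine (dist_natFloor_le (a := fun i => ∫ z in Dom, ϕ z * (scheme h β N τ V₀ q₀ i).2 z) hτ
      (by positivity) (fun i hi => dist_scheme_pairing_succ_le hϕ hh hq₀ hτ.le hV (hε.trans hN) hi)
      hs ht).trans ?_
    gcongr
    linarith
  · refine (dist_natFloor_le (a := fun i => (scheme h β N τ V₀ q₀ i).1) hτ hHF
      (fun i _ => dist_scheme_fst_succ_le hh hq₀ hτ.le i) hs ht).trans ?_
    gcongr
    linarith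
  · exact intervalIntegrable_natFloor (g := fun i _ =>
      formStress h (truncVelocity N (relVorticity h β (scheme h β N τ V₀ q₀ i).2))) hτ
      fun i _ => intervalIntegrable_const
  · refine (norm_eulerStep_sub_integral_le (a := fun i => (scheme h β N τ V₀ q₀ i).1) hτ
      (fun i => rfl) (abs_formStress_scheme_le hh hq₀) ht.1).trans ?_
    gcongr
    linarith

theorem exists_isApproxSolution (hT : 0 < T) (hh : EssBoundedBy H h)
    (hq₀ : OddPeriodicBoundedBy M q₀) (β V₀ : ℝ) :
    ∃ C, ∀ N, ∃ V q, IsApproxSolution T M β h V₀ q₀ C N V q := by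
  have hM := hq₀.essBoundedBy.nonneg
  have hH := hh.nonneg
  set C := |V₀| + T * (H * (M + H + |β| * π)) + (M + H + |β| * π) with hC
  refine ⟨C + H * (M + H + |β| * π) + (T + 1) * (4 * π ^ 2 * M * (2 + C)), fun N => ?_⟩
  obtain ⟨n, hn⟩ := exists_nat_gt (T * (1 + (freqBox N).card * C) ^ 2 * (N + 1))
  have hn0 : (0 : ℝ) < n := lt_of_le_of_lt (by positivity) hn
  have hnT : n * (T / n) = T := mul_div_cancel₀ T hn0.ne'
  have hε : T / n * (1 + (freqBox N).card * C) ^ 2 ≤ 1 / (N + 1) := by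
    rw [div_mul_eq_mul_div, div_le_div_iff₀ hn0 (by positivity)]
    linarith
  have happrox := isApproxSolution_scheme (n := n) (β := β) (V₀ := V₀) hh hq₀ (div_pos hT hn0)
    (by positivity : 0 ≤ C) (fun i hi => ?_) hε
  · rw [hnT] at happrox
    exact ⟨_, _, happrox⟩
  · simpa only [hnT] using abs_scheme_fst_add_le hh hq₀ (div_pos hT hn0).le hi

end ApproximateSolutions

section WeakCompactness

variable {ι E : Type*} [NormedAddCommGroup E] [InnerProductSpace ℝ E] [CompleteSpace E]
  {S : Set E} {Q : ι → E} {B : ℝ} {l : Filter ι}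

lemma tendsto_inner_of_orthogonal_span_eq_bot (hS : (Submodule.span ℝ S)ᗮ = ⊥)
    (hQ : ∀ i, ‖Q i‖ ≤ B) {q : E}
    (hlim : ∀ s ∈ S, Tendsto (fun i => inner ℝ (Q i) s) l (𝓝 (inner ℝ q s))) (g : E) :
    Tendsto (fun i => inner ℝ (Q i) g) l (𝓝 (inner ℝ q g)) := by
  have hlipschitz (i : ι) : LipschitzWith B.toNNReal fun g => inner ℝ (Q i) g :=
    .of_dist_le_mul fun g g' => by
      rw [dist_eq_norm, dist_eq_norm, ← inner_sub_right]
      exact (norm_inner_le_norm _ _).trans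
        (by gcongr; exact (hQ i).trans (le_coe_toNNReal B))
  have hclosed := (LipschitzWith.uniformEquicontinuous _ _ hlipschitz).equicontinuous
    |>.isClosed_setOfPred_tendsto (l := l) (f := fun g => inner ℝ q g) (by fun_prop)
  have hspan : ∀ g ∈ Submodule.span ℝ S,
      Tendsto (fun i => inner ℝ (Q i) g) l (𝓝 (inner ℝ q g)) := fun g hg => by
    induction hg using Submodule.span_induction with
    | mem s hs => exact hlim s hs
    | zero => simp only [inner_zero_right, tendsto_const_nhds]
    | add g g' _ _ hg hg' => simpa only [inner_add_right] using hg.add hg'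
    | smul c g _ hg => simpa only [inner_smul_right] using hg.const_mul c
  have hdense := (Submodule.topologicalClosure_eq_top_iff).2 hS
  exact closure_minimal hspan hclosed
    (hdense ▸ Submodule.mem_top : g ∈ (Submodule.span ℝ S).topologicalClosure)

-- The weak limit is an ultrafilter limit given by Banach–Alaoglu; its pairings with `S` are forced.
lemma exists_tendsto_inner_of_orthogonal_span_eq_bot [l.NeBot]
    (hS : (Submodule.span ℝ S)ᗮ = ⊥) (hQ : ∀ i, ‖Q i‖ ≤ B)
    (hlim : ∀ s ∈ S, ∃ a, Tendsto (fun i => inner ℝ (Q i) s) l (𝓝 a)) :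
    ∃ q, ∀ g, Tendsto (fun i => inner ℝ (Q i) g) l (𝓝 (inner ℝ q g)) := by
  let functional (i : ι) : WeakDual ℝ E := (InnerProductSpace.toDual ℝ E (Q i)).toWeakDual
  obtain ⟨ℓ, -, hℓ⟩ := isCompact_iff_ultrafilter_le_nhds.1
    (WeakDual.isCompact_closedBall (𝕜 := ℝ) (E := E) 0 B) ((Ultrafilter.of l).map functional)
    (tendsto_principal.2 (.of_forall fun i => by
      simpa [functional] using hQ i))
  let q := (InnerProductSpace.toDual ℝ E).symm ℓ.toStrongDual
  have hq (g : E) : Tendsto (fun i => inner ℝ (Q i) g) (Ultrafilter.of l) (𝓝 (inner ℝ q g)) := by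
    rw [InnerProductSpace.toDual_symm_apply]
    exact ((WeakDual.eval_continuous g).tendsto ℓ).comp hℓ
  refine ⟨q, tendsto_inner_of_orthogonal_span_eq_bot hS hQ fun s hs => ?_⟩
  obtain ⟨a, ha⟩ := hlim s hs
  rwa [tendsto_nhds_unique (hq s) (ha.mono_left (Ultrafilter.of_le l))]

end WeakCompactness

section HartleyModes

/-- The Hartley mode `cos (m · z) + sin (m · z)`: a single family of real functions, indexed like
the plane waves, that is complete in `L²(D)`. -/
def hartleyMode (m : ℤ × ℤ) (z : ℝ × ℝ) : ℝ := cos (phase m z) + sin (phase m z)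

lemma contDiff_hartleyMode (m : ℤ × ℤ) {n : WithTop ℕ∞} : ContDiff ℝ n (hartleyMode m) := by
  unfold hartleyMode phase
  fun_prop

lemma continuous_hartleyMode (m : ℤ × ℤ) : Continuous (hartleyMode m) :=
  (contDiff_hartleyMode m (n := 0)).continuous

lemma abs_hartleyMode_le (m : ℤ × ℤ) (z : ℝ × ℝ) : |hartleyMode m z| ≤ 2 :=
  (abs_add_le _ _).trans (by linarith [abs_cos_le_one (phase m z), abs_sin_le_one (phase m z)])

lemma doublyPeriodic_hartleyMode (m : ℤ × ℤ) : DoublyPeriodic (hartleyMode m) where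
  fst x y := by
    have hphase : phase m (x + 2 * π, y) = phase m (x, y) + m.1 * (2 * π) := by
      simp only [phase]
      ring
    rw [hartleyMode, hphase, cos_add_int_mul_two_pi, sin_add_int_mul_two_pi, hartleyMode]
  snd x y := by
    have hphase : phase m (x, y + 2 * π) = phase m (x, y) + m.2 * (2 * π) := by
      simp only [phase]
      ring
    rw [hartleyMode, hphase, cos_add_int_mul_two_pi, sin_add_int_mul_two_pi, hartleyMode]

lemma planeWave_eq_hartleyMode (m : ℤ × ℤ) (z : ℝ × ℝ) :
    planeWave m z = (1 + Complex.I) / 2 * hartleyMode m z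
      + (1 - Complex.I) / 2 * hartleyMode (-m) z := by
  have hneg : phase (-m) z = -phase m z := by
    simp only [phase, Prod.fst_neg, Prod.snd_neg, Int.cast_neg]
    ring
  rw [planeWave, Complex.exp_mul_I, hartleyMode, hartleyMode, hneg, cos_neg, sin_neg]
  push_cast
  ring

lemma fourierIntegral_eq_hartleyMode {f : ℝ × ℝ → ℝ} (hf : Integrable f μD) (m : ℤ × ℤ) :
    fourierIntegral f m
      = (1 + Complex.I) / 2 * ((∫ z in Dom, hartleyMode m z * f z : ℝ) : ℂ)
        + (1 - Complex.I) / 2 * ((∫ z in Dom, hartleyMode (-m) z * f z : ℝ) : ℂ) := by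
  have hinteg (n : ℤ × ℤ) : Integrable (fun z => hartleyMode n z * f z) μD :=
    hf.bdd_mul (continuous_hartleyMode n).aestronglyMeasurable
      (.of_forall (abs_hartleyMode_le n))
  rw [fourierIntegral, ← integral_complex_ofReal, ← integral_complex_ofReal, ← integral_const_mul,
    ← integral_const_mul,
    ← integral_add ((hinteg _).ofReal.const_mul _) ((hinteg _).ofReal.const_mul _)]
  congr 1 with z
  rw [planeWave_eq_hartleyMode]
  push_cast
  ring

lemma memLp_hartleyMode (m : ℤ × ℤ) : MemLp (hartleyMode m) 2 μD :=
  memLp_dom_of_continuous (continuous_hartleyMode m) 2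

lemma orthogonal_span_hartleyMode :
    (Submodule.span ℝ (range fun m => (memLp_hartleyMode m).toLp))ᗮ = ⊥ := by
  refine (Submodule.eq_bot_iff _).2 fun f hf => (Lp.eq_zero_iff_ae_eq_zero).2 ?_
  have hmode (m : ℤ × ℤ) : ∫ z in Dom, hartleyMode m z * f z = 0 := by
    rw [← (Submodule.mem_orthogonal' _ _).1 hf _ (Submodule.subset_span ⟨m, rfl⟩),
      ← Lp.toLp_coeFn f (Lp.memLp f), inner_toLp]
    refine integral_congr_ae ?_
    filter_upwards [(Lp.memLp f).coeFn_toLp] with z hz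
    rw [conj_trivial, hz]
  have hzero := ae_eq_zero_of_setIntegral_mul_planeWave_eq_zero (f := fun z => (f z : ℂ))
    (Complex.measurable_ofReal.comp (Lp.stronglyMeasurable f).measurable) (Lp.memLp f).ofReal
    fun m => by
      simpa only [fourierIntegral, hmode, Complex.ofReal_zero, mul_zero, add_zero] using
        fourierIntegral_eq_hartleyMode ((Lp.memLp f).integrable one_le_two) m
  filter_upwards [hzero] with z hz
  exact Complex.ofReal_eq_zero.1 hz

end HartleyModes

section WeakConvergence

variable {ι : Type*} {l : Filter ι} {q : ι → ℝ × ℝ → ℝ} {q' : ℝ × ℝ → ℝ} {M : ℝ}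

/-- Weak convergence `q i ⇀ q'` in `L²(D)` along the filter `l`. -/
def TendstoWeakly (q : ι → ℝ × ℝ → ℝ) (l : Filter ι) (q' : ℝ × ℝ → ℝ) : Prop :=
  ∀ g, MemLp g 2 μD → Tendsto (fun i => ∫ z in Dom, g z * q i z) l (𝓝 (∫ z in Dom, g z * q' z))

lemma TendstoWeakly.congr_ae {p : ι → ℝ × ℝ → ℝ} {p' : ℝ × ℝ → ℝ} (h : TendstoWeakly q l q')
    (hq : ∀ i, q i =ᵐ[μD] p i) (hq' : q' =ᵐ[μD] p') : TendstoWeakly p l p' := fun g hg => by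
  have hcongr {f f' : ℝ × ℝ → ℝ} (hf : f =ᵐ[μD] f') :
      ∫ z in Dom, g z * f z = ∫ z in Dom, g z * f' z :=
    integral_congr_ae (hf.mono fun z hz => congrArg (g z * ·) hz)
  exact hcongr hq' ▸ (h g hg).congr fun i => hcongr (hq i)

lemma TendstoWeakly.neg (h : TendstoWeakly q l q') :
    TendstoWeakly (fun i z => -q i z) l fun z => -q' z := fun g hg => by
  simpa only [mul_neg, integral_neg] using (h g hg).neg

lemma TendstoWeakly.ae_le [l.NeBot] (h : TendstoWeakly q l q')
    (hq : ∀ i, EssBoundedBy M (q i)) (hq' : MemLp q' 2 μD) : ∀ᵐ z ∂μD, q' z ≤ M := by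
  refine ae_le_of_forall_setIntegral_le (hq'.integrable one_le_two) (integrable_const M)
    fun s hs _ => ?_
  have hset (f : ℝ × ℝ → ℝ) : ∫ z in Dom, s.indicator 1 z * f z = ∫ z in s, f z ∂μD := by
    simp only [← integral_indicator hs, ← indicator_mul_left, Pi.one_apply, one_mul]
  have hlim := h (s.indicator 1) ((memLp_const (1 : ℝ)).indicator hs)
  simp only [hset] at hlim
  exact le_of_tendsto' hlim fun i => integral_mono_ae (hq i).integrable.integrableOn
    integrableOn_const (ae_restrict_of_ae ((hq i).bound.mono fun z hz => le_of_abs_le hz))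

lemma EssBoundedBy.neg {f : ℝ × ℝ → ℝ} (hf : EssBoundedBy M f) : EssBoundedBy M fun z => -f z where
  measurable := hf.measurable.neg
  bound := by simpa only [abs_neg] using hf.bound

lemma TendstoWeakly.ae_abs_le [l.NeBot] (h : TendstoWeakly q l q')
    (hq : ∀ i, EssBoundedBy M (q i)) (hq' : MemLp q' 2 μD) : ∀ᵐ z ∂μD, |q' z| ≤ M := by
  filter_upwards [h.ae_le hq hq', h.neg.ae_le (fun i => (hq i).neg) hq'.neg] with z hle hge
  exact abs_le.2 ⟨neg_le.1 hge, hle⟩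

lemma exists_measurable_abs_le_eq {α : Type*} [MeasurableSpace α] {f : α → ℝ}
    (hf : Measurable f) (hM : 0 ≤ M) :
    ∃ g : α → ℝ, Measurable g ∧ (∀ a, |g a| ≤ M) ∧ ∀ a, |f a| ≤ M → g a = f a := by
  have hM' : -M ≤ M := by linarith
  refine ⟨fun a => projIcc (-M) M hM' (f a), measurable_subtype_coe.comp
    (continuous_projIcc.measurable.comp hf), fun a => abs_le.2 (projIcc (-M) M hM' (f a)).2,
    fun a ha => congrArg Subtype.val (projIcc_of_mem hM' (abs_le.1 ha))⟩

lemma EssBoundedBy.norm_toLp_le {f : ℝ × ℝ → ℝ} (hf : EssBoundedBy M f) :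
    ‖(hf.memLp 2).toLp f‖ ≤ √(4 * π ^ 2 * M ^ 2) :=
  Real.le_sqrt_of_sq_le ((norm_toLp_sq _).trans_le hf.integral_norm_sq_le)

lemma tendstoWeakly_of_hartleyMode (hq : ∀ i, EssBoundedBy M (q i)) (hq' : EssBoundedBy M q')
    (h : ∀ m, Tendsto (fun i => ∫ z in Dom, hartleyMode m z * q i z) l
      (𝓝 (∫ z in Dom, hartleyMode m z * q' z))) : TendstoWeakly q l q' := fun g hg => by
  have hlim := tendsto_inner_of_orthogonal_span_eq_bot (l := l) orthogonal_span_hartleyMode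
    (fun i => (hq i).norm_toLp_le) (q := (hq'.memLp 2).toLp) ?_ hg.toLp
  · simpa only [inner_toLp, conj_trivial] using hlim
  · rintro _ ⟨m, rfl⟩
    simpa only [inner_toLp, conj_trivial] using h m

lemma exists_tendstoWeakly_of_hartleyMode [l.NeBot] (hq : ∀ i, EssBoundedBy M (q i))
    (h : ∀ m, ∃ a, Tendsto (fun i => ∫ z in Dom, hartleyMode m z * q i z) l (𝓝 a)) :
    ∃ q', Measurable q' ∧ (∀ z, |q' z| ≤ M) ∧ TendstoWeakly q l q' := by
  obtain ⟨i⟩ := l.nonempty_of_neBot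
  obtain ⟨Q, hQ⟩ := exists_tendsto_inner_of_orthogonal_span_eq_bot (l := l)
    orthogonal_span_hartleyMode (fun i => (hq i).norm_toLp_le) (by
      rintro _ ⟨m, rfl⟩
      simpa only [inner_toLp, conj_trivial] using h m)
  have hweak : TendstoWeakly q l Q := fun g hg => by
    have hlim := hQ hg.toLp
    rw [← Lp.toLp_coeFn Q (Lp.memLp Q)] at hlim
    simpa only [inner_toLp, conj_trivial] using hlim
  obtain ⟨q', hmeas, hbound, heq⟩ :=
    exists_measurable_abs_le_eq (Lp.stronglyMeasurable Q).measurable (hq i).nonneg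
  exact ⟨q', hmeas, hbound,
    hweak.congr_ae (fun _ => ae_eq_refl _)
      ((hweak.ae_abs_le hq (Lp.memLp Q)).mono fun z hz => (heq z hz).symm)⟩

end WeakConvergence

section TestFunctions

variable {E : Type*} [NormedAddCommGroup E] {T : ℝ}

lemma fderiv_periodic [NormedSpace ℝ E] {φ : ℝ × ℝ × ℝ → E}
    (hφ : ∀ t, DoublyPeriodic fun z => φ (t, z)) (t : ℝ) :
    DoublyPeriodic fun z => fderiv ℝ φ (t, z) := by
  have hshift {a : ℝ × ℝ × ℝ} (ha : ∀ p, φ (p + a) = φ p) (p : ℝ × ℝ × ℝ) :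
      fderiv ℝ φ (p + a) = fderiv ℝ φ p := by
    rw [← fderiv_comp_add_right, funext ha]
  constructor
  · intro x y
    simpa using hshift (a := (0, 2 * π, 0)) (fun ⟨s, x, y⟩ => by simpa using (hφ s).fst x y)
      (t, x, y)
  · intro x y
    simpa using hshift (a := (0, 0, 2 * π)) (fun ⟨s, x, y⟩ => by simpa using (hφ s).snd x y)
      (t, x, y)

lemma exists_norm_le_of_periodic {φ : ℝ × ℝ × ℝ → E} (hcont : Continuous φ)
    (hφ : ∀ t, DoublyPeriodic fun z => φ (t, z)) (T : ℝ) :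
    ∃ C, ∀ t ∈ Icc 0 T, ∀ z, ‖φ (t, z)‖ ≤ C := by
  obtain ⟨C, hC⟩ := (isCompact_Icc.prod (isCompact_Icc.prod isCompact_Icc) :
    IsCompact (Icc 0 T ×ˢ Icc (-π) π ×ˢ Icc (-π) π)).exists_bound_of_continuousOn hcont.continuousOn
  refine ⟨C, fun t ht z => ?_⟩
  obtain ⟨ℓ, hℓ, -⟩ := existsUnique_vadd_mem_dom z
  rw [← (hφ t).vadd ℓ z]
  exact hC _ ⟨ht, prod_mono Ioc_subset_Icc_self Ioc_subset_Icc_self hℓ⟩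

lemma exists_isTestFunction {φ : ℝ × ℝ × ℝ → ℝ} (hφ : ContDiff ℝ 2 φ)
    (hper : ∀ t, DoublyPeriodic fun z => φ (t, z)) (T : ℝ) : ∃ L, IsTestFunction T L φ := by
  have hφ' : ContDiff ℝ 1 (fderiv ℝ φ) := hφ.fderiv_right (by norm_num)
  obtain ⟨C₁, hC₁⟩ := exists_norm_le_of_periodic hφ'.continuous (fderiv_periodic hper) T
  obtain ⟨C₂, hC₂⟩ := exists_norm_le_of_periodic (hφ'.continuous_fderiv one_ne_zero)
    (fderiv_periodic (fderiv_periodic hper)) T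
  exact ⟨max C₁ C₂, hφ.of_le (by norm_num), hper,
    fun t ht z => (hC₁ t ht z).trans (le_max_left _ _),
    fun p hp p' hp' => ((convex_Icc 0 T).prod convex_univ).norm_image_sub_le_of_norm_fderiv_le
      (fun x _ => hφ'.differentiable one_ne_zero x)
      (fun x hx => (hC₂ x.1 hx.1 x.2).trans (le_max_right _ _)) hp' hp⟩

lemma exists_isTestFunction_hartleyMode (T : ℝ) (m : ℤ × ℤ) :
    ∃ L, IsTestFunction T L fun p => hartleyMode m p.2 :=
  exists_isTestFunction ((contDiff_hartleyMode m).comp contDiff_snd)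
    (fun _ => doublyPeriodic_hartleyMode m) T

end TestFunctions

section ArzelaAscoli

variable {X : Type*} [PseudoMetricSpace X] {δ : ℕ → ℝ}

lemma continuous_of_tendsto_of_dist_le {f : ℕ → X → ℝ} {A : X → ℝ} {C : ℝ}
    (hδ : Tendsto δ atTop (𝓝 0)) (hf : ∀ n x y, dist (f n x) (f n y) ≤ C * (dist x y + δ n))
    (hA : ∀ x, Tendsto (fun n => f n x) atTop (𝓝 (A x))) : Continuous A := by
  refine (LipschitzWith.of_dist_le_mul (K := C.toNNReal) fun x y => ?_).continuous
  have hlim := (hδ.const_add (dist x y)).const_mul C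
  rw [add_zero] at hlim
  exact (le_of_tendsto_of_tendsto' ((hA x).dist (hA y)) hlim fun n => hf n x y).trans
    (by gcongr; exact le_coe_toNNReal C)

lemma cauchySeq_of_dense_of_dist_le {f : ℕ → X → ℝ} {C : ℝ} {s : Set X} (hs : Dense s)
    (hδ : Tendsto δ atTop (𝓝 0)) (hf : ∀ n x y, dist (f n x) (f n y) ≤ C * (dist x y + δ n))
    (hcauchy : ∀ y ∈ s, CauchySeq fun n => f n y) (x : X) : CauchySeq fun n => f n x := by
  refine Metric.cauchySeq_iff.2 fun ε hε => ?_
  have hnear : ∀ᶠ y in 𝓝 x, C * dist x y < ε / 3 := by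
    have hlim : Tendsto (fun y => C * dist x y) (𝓝 x) (𝓝 (C * dist x x)) :=
      (by fun_prop : Continuous fun y => C * dist x y).tendsto x
    rw [dist_self, mul_zero] at hlim
    exact hlim.eventually_lt_const (by positivity)
  obtain ⟨y, hys, hy⟩ := ((mem_closure_iff_frequently.1 (hs x)).and_eventually hnear).exists
  have hlim := (hδ.const_add (dist x y)).const_mul C
  rw [add_zero] at hlim
  obtain ⟨n₁, hn₁⟩ := eventually_atTop.1 (hlim.eventually_lt_const hy)
  obtain ⟨n₂, hn₂⟩ := Metric.cauchySeq_iff.1 (hcauchy y hys) (ε / 3) (by positivity)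
  refine ⟨max n₁ n₂, fun m hm n hn => ?_⟩
  have hm' := (hf m x y).trans_lt (hn₁ m (le_of_max_le_left hm))
  have hn' := (hf n x y).trans_lt (hn₁ n (le_of_max_le_left hn))
  rw [dist_comm] at hn'
  calc dist (f m x) (f n x)
      ≤ dist (f m x) (f m y) + dist (f m y) (f n y) + dist (f n y) (f n x) := dist_triangle4 _ _ _ _
    _ < ε := by linarith [hn₂ m (le_of_max_le_right hm) n (le_of_max_le_right hn)]

-- Arzelà–Ascoli for families that are Lipschitz only up to an error `δ n → 0`.
lemma exists_subseq_tendsto_of_dist_le [TopologicalSpace.SeparableSpace X] {ι : Type*} [Countable ι]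
    {a : ℕ → ι → X → ℝ} {B C : ι → ℝ} (hδ : Tendsto δ atTop (𝓝 0))
    (hbound : ∀ n i x, |a n i x| ≤ B i)
    (hdist : ∀ n i x y, dist (a n i x) (a n i y) ≤ C i * (dist x y + δ n)) :
    ∃ (θ : ℕ → ℕ) (A : ι → X → ℝ), StrictMono θ ∧ (∀ i, Continuous (A i)) ∧
      ∀ i x, Tendsto (fun n => a (θ n) i x) atTop (𝓝 (A i x)) := by
  obtain ⟨s, hs, hdense⟩ := TopologicalSpace.exists_countable_dense X
  have : Countable s := hs.to_subtype
  have hcompact : IsCompact (Set.pi univ fun p : ι × s => Icc (-(B p.1)) (B p.1)) :=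
    isCompact_univ_pi fun p => isCompact_Icc
  obtain ⟨b, -, θ, hθ, hb⟩ := hcompact.tendsto_subseq (x := fun n p => a n p.1 p.2)
    fun n p _ => abs_le.1 (hbound n p.1 p.2)
  rw [tendsto_pi_nhds] at hb
  have hδθ : Tendsto (δ ∘ θ) atTop (𝓝 0) := hδ.comp hθ.tendsto_atTop
  choose A hA using fun i x => cauchySeq_tendsto_of_complete <|
    cauchySeq_of_dense_of_dist_le hdense hδθ (fun n => hdist (θ n) i)
      (fun y hy => (hb (i, ⟨y, hy⟩)).cauchySeq) x
  exact ⟨θ, A, hθ,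
    fun i => continuous_of_tendsto_of_dist_le hδθ (fun n => hdist (θ n) i) (hA i), hA⟩

end ArzelaAscoli

section JointMeasurability

variable {X : Type*} [TopologicalSpace X] {q : X → ℝ × ℝ → ℝ} {f : ℝ × ℝ → ℝ} {M : ℝ}

/-- The average over the ball of radius `r` around `z` of `f`, extended by zero outside `D`. -/
def ballAverage (r : ℝ) (f : ℝ × ℝ → ℝ) (z : ℝ × ℝ) : ℝ :=
  ⨍ w in Metric.closedBall z r, Dom.indicator f w

lemma ballAverage_eq (r : ℝ) (f : ℝ × ℝ → ℝ) (z : ℝ × ℝ) :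
    ballAverage r f z = (volume.real (Metric.closedBall (0 : ℝ × ℝ) r))⁻¹ *
      ∫ w in Dom, (Metric.closedBall z r).indicator 1 w * f w := by
  rw [ballAverage, setAverage_eq, smul_eq_mul, Measure.real, Measure.addHaar_closedBall_center,
    setIntegral_indicator measurableSet_dom, inter_comm,
    ← setIntegral_indicator Metric.isClosed_closedBall.measurableSet]
  simp only [← indicator_mul_left, Pi.one_apply, one_mul, Measure.real]

lemma stronglyMeasurable_ballAverage (hf : Measurable f) (r : ℝ) :
    StronglyMeasurable (ballAverage r f) := by
  have hset : MeasurableSet {p : (ℝ × ℝ) × (ℝ × ℝ) | dist p.2 p.1 ≤ r} :=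
    (isClosed_le (by fun_prop) (by fun_prop)).measurableSet
  have hintegrand : StronglyMeasurable fun p : (ℝ × ℝ) × (ℝ × ℝ) =>
      {p : (ℝ × ℝ) × (ℝ × ℝ) | dist p.2 p.1 ≤ r}.indicator (1 : (ℝ × ℝ) × (ℝ × ℝ) → ℝ) p * f p.2 :=
    (stronglyMeasurable_one.indicator hset).mul (hf.comp measurable_snd).stronglyMeasurable
  rw [funext (ballAverage_eq r f)]
  exact hintegrand.integral_prod_right.const_mul _

lemma continuous_ballAverage (hq : ∀ t, TendstoWeakly q (𝓝 t) (q t)) (r : ℝ) (z : ℝ × ℝ) :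
    Continuous fun t => ballAverage r (q t) z := by
  simp only [ballAverage_eq]
  exact continuous_const.mul (continuous_iff_continuousAt.2 fun t => hq t _
    ((memLp_const (1 : ℝ)).indicator Metric.isClosed_closedBall.measurableSet))

lemma EssBoundedBy.ae_tendsto_ballAverage (hf : EssBoundedBy M f) :
    ∀ᵐ z ∂μD, Tendsto (fun n : ℕ => ballAverage (1 / (n + 1)) f z) atTop (𝓝 (f z)) := by
  have hloc : LocallyIntegrable (Dom.indicator f) volume :=
    ((integrable_indicator_iff measurableSet_dom).2 hf.integrable).locallyIntegrable
  filter_upwards [ae_restrict_of_ae (IsUnifLocDoublingMeasure.ae_tendsto_average volume hloc 1),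
    ae_restrict_mem measurableSet_dom] with z hz hzD
  have hlim := hz (l := atTop) (fun _ : ℕ => z) (fun n => 1 / ((n : ℝ) + 1))
    (tendsto_nhdsWithin_iff.2 ⟨tendsto_one_div_add_atTop_nhds_zero_nat,
      .of_forall fun n => mem_Ioi.2 (by positivity)⟩)
    (.of_forall fun n => Metric.mem_closedBall_self (by positivity))
  rwa [indicator_of_mem hzD] at hlim

-- Lebesgue differentiation recovers `q t` from averages that are continuous in `t`.
lemma exists_measurable_uncurry_ae_eq [SecondCountableTopology X]
    [TopologicalSpace.MetrizableSpace X] [MeasurableSpace X] [OpensMeasurableSpace X]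
    (hq : ∀ t, EssBoundedBy M (q t)) (hcont : ∀ t, TendstoWeakly q (𝓝 t) (q t)) (hM : 0 ≤ M) :
    ∃ q' : X → ℝ × ℝ → ℝ, Measurable (Function.uncurry q') ∧ (∀ t z, |q' t z| ≤ M) ∧
      ∀ t, q t =ᵐ[μD] q' t := by
  have hmeas (n : ℕ) : StronglyMeasurable
      (Function.uncurry fun t => ballAverage (1 / (n + 1)) (q t)) :=
    stronglyMeasurable_uncurry_of_continuous_of_stronglyMeasurable
      (fun z => continuous_ballAverage hcont _ z)
      fun t => stronglyMeasurable_ballAverage (hq t).measurable _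
  obtain ⟨g, hg, hbound, heq⟩ := exists_measurable_abs_le_eq
    (StronglyMeasurable.limUnder (l := atTop) hmeas).measurable hM
  refine ⟨Function.curry g, hg, fun t z => hbound (t, z), fun t => ?_⟩
  filter_upwards [(hq t).ae_tendsto_ballAverage, (hq t).bound] with z hlim hz
  have hlim' : limUnder atTop (fun n : ℕ => ballAverage (1 / (n + 1)) (q t) z) = q t z :=
    hlim.limUnder_eq
  exact ((heq (t, z) (by simpa only [Function.uncurry, hlim'] using hz)).trans hlim').symm

end JointMeasurability

section WeakLimit

variable {β C M T V₀ : ℝ} {h q₀ : ℝ × ℝ → ℝ}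

lemma exists_measurable_uncurry_tendstoWeakly {X ι : Type*} [TopologicalSpace X]
    [SecondCountableTopology X] [TopologicalSpace.MetrizableSpace X] [MeasurableSpace X]
    [OpensMeasurableSpace X] {l : Filter ι} [l.NeBot] {q : ι → X → ℝ × ℝ → ℝ} {a : ℤ × ℤ → X → ℝ}
    (hM : 0 ≤ M) (hq : ∀ i t, EssBoundedBy M (q i t)) (ha : ∀ m, Continuous (a m))
    (hlim : ∀ m t, Tendsto (fun i => ∫ z in Dom, hartleyMode m z * q i t z) l (𝓝 (a m t))) :
    ∃ q' : X → ℝ × ℝ → ℝ, Measurable (Function.uncurry q') ∧ (∀ t z, |q' t z| ≤ M) ∧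
      (∀ t, TendstoWeakly q' (𝓝 t) (q' t)) ∧ ∀ t, TendstoWeakly (fun i => q i t) l (q' t) := by
  choose p hp_meas hp_bound hp_lim using fun t =>
    exists_tendstoWeakly_of_hartleyMode (fun i => hq i t) fun m => ⟨a m t, hlim m t⟩
  have hp (t : X) : EssBoundedBy M (p t) := ⟨hp_meas t, .of_forall (hp_bound t)⟩
  have hpairing (m : ℤ × ℤ) : (fun t => ∫ z in Dom, hartleyMode m z * p t z) = a m :=
    funext fun t => tendsto_nhds_unique (hp_lim t _ (memLp_hartleyMode m)) (hlim m t)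
  have hcont (t : X) : TendstoWeakly p (𝓝 t) (p t) :=
    tendstoWeakly_of_hartleyMode hp (hp t) fun m =>
      (hpairing m ▸ ha m : Continuous fun t => ∫ z in Dom, hartleyMode m z * p t z).tendsto t
  obtain ⟨q', hmeas, hbound, heq⟩ := exists_measurable_uncurry_ae_eq hp hcont hM
  exact ⟨q', hmeas, hbound, fun t => (hcont t).congr_ae heq (heq t),
    fun t => (hp_lim t).congr_ae (fun _ => ae_eq_refl _) (heq t)⟩

lemma EssBoundedBy.abs_setIntegral_hartleyMode_mul_le {f : ℝ × ℝ → ℝ} (hf : EssBoundedBy M f)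
    (m : ℤ × ℤ) : |∫ z in Dom, hartleyMode m z * f z| ≤ 2 * (4 * π ^ 2 * M) := by
  calc ‖∫ z in Dom, hartleyMode m z * f z‖ ≤ ∫ z in Dom, 2 * ‖f z‖ := by
        refine norm_integral_le_of_norm_le (hf.integrable.norm.const_mul 2) (.of_forall fun z => ?_)
        rw [norm_mul]
        gcongr
        exact abs_hartleyMode_le m z
    _ ≤ 2 * (4 * π ^ 2 * M) := by
        rw [integral_const_mul]
        gcongr
        exact hf.integral_norm_le

lemma exists_subseq_tendsto_isApproxSolution {Vn : ℕ → ℝ → ℝ} {qn : ℕ → ℝ → ℝ × ℝ → ℝ}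
    (happrox : ∀ N, IsApproxSolution T M β h V₀ q₀ C N (Vn N) (qn N)) :
    ∃ (θ : ℕ → ℕ) (V : Icc 0 T → ℝ) (a : ℤ × ℤ → Icc 0 T → ℝ), StrictMono θ ∧ Continuous V ∧
      (∀ m, Continuous (a m)) ∧ (∀ t : Icc 0 T, Tendsto (fun n => Vn (θ n) t) atTop (𝓝 (V t))) ∧
      ∀ m (t : Icc 0 T), Tendsto (fun n => ∫ z in Dom, hartleyMode m z * qn (θ n) t z) atTop
        (𝓝 (a m t)) := by
  choose L hL using exists_isTestFunction_hartleyMode T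
  let a (N : ℕ) (i : Option (ℤ × ℤ)) (t : Icc 0 T) : ℝ :=
    i.elim (Vn N t) fun m => ∫ z in Dom, hartleyMode m z * qn N t z
  have hbound (N : ℕ) (i : Option (ℤ × ℤ)) (t : Icc 0 T) :
      |a N i t| ≤ i.elim C fun _ => 2 * (4 * π ^ 2 * M) := by
    cases i with
    | none => exact (happrox N).abs_meanFlow_le t t.2
    | some m => exact ((happrox N).oddPeriodicBoundedBy t).essBoundedBy
        |>.abs_setIntegral_hartleyMode_mul_le m
  have hdist (N : ℕ) (i : Option (ℤ × ℤ)) (s t : Icc 0 T) :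
      dist (a N i s) (a N i t) ≤ (i.elim C fun m => C * L m) * (dist s t + 1 / ((N : ℝ) + 1)) := by
    rw [dist_comm s, Subtype.dist_eq, Real.dist_eq]
    cases i with
    | none => exact (happrox N).dist_meanFlow_le s s.2 t t.2
    | some m => exact (happrox N).dist_pairing_le (L m) (hartleyMode m) (hL m) s s.2 t t.2
  obtain ⟨θ, A, hθ, hcont, hlim⟩ :=
    exists_subseq_tendsto_of_dist_le tendsto_one_div_add_atTop_nhds_zero_nat hbound hdist
  exact ⟨θ, A none, fun m => A (some m), hθ, hcont none, fun m => hcont (some m), hlim none,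
    fun m => hlim (some m)⟩

/-- `(V, q)` is the limit on `[0, T]` of the pairs `(Vn n, qn n)`, pointwise in time and weakly in
space. Times outside `[0, T]` only serve to make `V` and `q` continuous and measurable on the whole
line. -/
structure IsWeakLimit (T M : ℝ) (Vn : ℕ → ℝ → ℝ) (qn : ℕ → ℝ → ℝ × ℝ → ℝ) (V : ℝ → ℝ)
    (q : ℝ → ℝ × ℝ → ℝ) : Prop where
  continuous_meanFlow : Continuous V
  measurable : Measurable (Function.uncurry q)
  abs_le : ∀ t z, |q t z| ≤ M
  tendstoWeakly_nhds : ∀ t, TendstoWeakly q (𝓝 t) (q t)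
  tendsto_meanFlow : ∀ t ∈ Icc 0 T, Tendsto (fun n => Vn n t) atTop (𝓝 (V t))
  tendstoWeakly : ∀ t ∈ Icc 0 T, TendstoWeakly (fun n => qn n t) atTop (q t)

lemma IsWeakLimit.essBoundedBy {Vn : ℕ → ℝ → ℝ} {qn : ℕ → ℝ → ℝ × ℝ → ℝ} {V : ℝ → ℝ}
    {q : ℝ → ℝ × ℝ → ℝ} (hlim : IsWeakLimit T M Vn qn V q) (t : ℝ) : EssBoundedBy M (q t) :=
  ⟨hlim.measurable.comp measurable_prodMk_left, .of_forall (hlim.abs_le t)⟩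

lemma exists_isWeakLimit {Vn : ℕ → ℝ → ℝ} {qn : ℕ → ℝ → ℝ × ℝ → ℝ} (hT : 0 ≤ T)
    (happrox : ∀ N, IsApproxSolution T M β h V₀ q₀ C N (Vn N) (qn N)) :
    ∃ (θ : ℕ → ℕ) (V : ℝ → ℝ) (q : ℝ → ℝ × ℝ → ℝ), StrictMono θ ∧
      IsWeakLimit T M (fun n => Vn (θ n)) (fun n => qn (θ n)) V q := by
  have hess (N : ℕ) (t : ℝ) : EssBoundedBy M (qn N t) :=
    ((happrox N).oddPeriodicBoundedBy t).essBoundedBy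
  obtain ⟨θ, V, a, hθ, hV, ha, hlimV, hlima⟩ := exists_subseq_tendsto_isApproxSolution happrox
  obtain ⟨q, hmeas, hbound, hcont, hlimq⟩ := exists_measurable_uncurry_tendstoWeakly
    (hess 0 0).nonneg (fun n (t : Icc 0 T) => hess (θ n) t) ha hlima
  have hproj : Continuous (projIcc 0 T hT) := continuous_projIcc
  refine ⟨θ, fun t => V (projIcc 0 T hT t), fun t => q (projIcc 0 T hT t), hθ, hV.comp hproj,
    hmeas.comp ((hproj.measurable.comp measurable_fst).prodMk measurable_snd),
    fun t => hbound _, fun t g hg => (hcont _ g hg).comp (hproj.tendsto t), fun t ht => ?_,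
    fun t ht => ?_⟩
  · simpa only [projIcc_of_mem hT ht] using hlimV ⟨t, ht⟩
  · simpa only [projIcc_of_mem hT ht] using hlimq ⟨t, ht⟩

end WeakLimit

section VelocityConvergence

variable {ι : Type*} {l : Filter ι} {f : ι → ℝ × ℝ → ℝ} {f' h : ℝ × ℝ → ℝ} {F H M : ℝ}

lemma TendstoWeakly.fourierIntegral (hf : ∀ i, Integrable (f i) μD) (hf' : Integrable f' μD)
    (hlim : TendstoWeakly f l f') (m : ℤ × ℤ) :
    Tendsto (fun i => fourierIntegral (f i) m) l (𝓝 (fourierIntegral f' m)) := by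
  have hmode (n : ℤ × ℤ) := (Complex.continuous_ofReal.tendsto _).comp
    (hlim _ (memLp_hartleyMode n))
  simp only [fun i => fourierIntegral_eq_hartleyMode (hf i), fourierIntegral_eq_hartleyMode hf']
  exact ((hmode m).const_mul _).add ((hmode (-m)).const_mul _)

lemma TendstoWeakly.streamCoeff (hf : ∀ i, Integrable (f i) μD) (hf' : Integrable f' μD)
    (hlim : TendstoWeakly f l f') (m : ℤ × ℤ) :
    Tendsto (fun i => streamCoeff (f i) m) l (𝓝 (streamCoeff f' m)) :=
  (((hlim.fourierIntegral hf hf' _).sub (hlim.fourierIntegral hf hf' _)).div_const _).div_const _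

lemma TendstoWeakly.relVorticity {q : ι → ℝ × ℝ → ℝ} {q' : ℝ × ℝ → ℝ}
    (hlim : TendstoWeakly q l q') (hh : EssBoundedBy H h) (β : ℝ)
    (hq : ∀ i, EssBoundedBy M (q i)) (hq' : EssBoundedBy M q') :
    TendstoWeakly (fun i => relVorticity h β (q i)) l (relVorticity h β q') := fun g hg => by
  have hg1 : Integrable g μD := hg.integrable one_le_two
  have hrel : EssBoundedBy (0 + H + |β| * π) (BQG.relVorticity h β 0) :=
    EssBoundedBy.relVorticity ⟨measurable_zero, by simp⟩ hh β
  have hintegral {p : ℝ × ℝ → ℝ} (hp : EssBoundedBy M p) :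
      ∫ z in Dom, g z * BQG.relVorticity h β p z
        = (∫ z in Dom, g z * p z) + ∫ z in Dom, g z * BQG.relVorticity h β 0 z := by
    rw [← integral_add (hg1.mul_bdd (c := M) hp.measurable.aestronglyMeasurable hp.bound)
      (hg1.mul_bdd (c := 0 + H + |β| * π) hrel.measurable.aestronglyMeasurable hrel.bound)]
    refine integral_congr_ae (.of_forall fun z => ?_)
    simp only [BQG.relVorticity, Pi.zero_apply]
    ring
  simp only [fun i => hintegral (hq i), hintegral hq']
  exact (hlim g hg).add_const _

lemma norm_truncVelocity_sub_le (N : ℕ) (f g : ℝ × ℝ → ℝ) (z : ℝ × ℝ) :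
    ‖truncVelocity N f z - truncVelocity N g z‖ ≤
      ∑ m ∈ freqBox N, ‖streamCoeff f m - streamCoeff g m‖ * ‖((m.2, -m.1) : ℝ × ℝ)‖ := by
  rw [truncVelocity, truncVelocity, ← Finset.sum_sub_distrib]
  refine norm_sum_le_of_le _ fun m _ => ?_
  rw [← sub_smul, norm_smul]
  gcongr
  rw [shearProfile, shearProfile, ← Complex.sub_re, ← sub_mul]
  refine (Complex.abs_re_le_norm _).trans_eq ?_
  rw [norm_mul, Complex.norm_exp_ofReal_mul_I, mul_one]

lemma TendstoWeakly.setIntegral_norm_truncVelocity_sub (hf : ∀ i, Integrable (f i) μD)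
    (hf' : Integrable f' μD) (hlim : TendstoWeakly f l f') (N : ℕ) :
    Tendsto (fun i => ∫ z in Dom, ‖truncVelocity N (f i) z - truncVelocity N f' z‖) l (𝓝 0) := by
  have hcoeff : Tendsto (fun i => ∑ m ∈ freqBox N,
      ‖BQG.streamCoeff (f i) m - BQG.streamCoeff f' m‖ * ‖((m.2, -m.1) : ℝ × ℝ)‖) l (𝓝 0) := by
    rw [← Finset.sum_const_zero (s := freqBox N)]
    refine tendsto_finsetSum _ fun m _ => ?_
    simpa using (tendsto_iff_norm_sub_tendsto_zero.1 (hlim.streamCoeff hf hf' m)).mul_const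
      ‖((m.2, -m.1) : ℝ × ℝ)‖
  have hbound := hcoeff.const_mul (4 * π ^ 2)
  rw [mul_zero] at hbound
  refine squeeze_zero (fun i => integral_nonneg fun z => norm_nonneg _) (fun i => ?_) hbound
  rw [← measureReal_dom, ← smul_eq_mul, ← integral_const]
  exact integral_mono ((integrable_truncVelocity N _).sub (integrable_truncVelocity N _)).norm
    (integrable_const _) fun z => norm_truncVelocity_sub_le N (f i) f' z

lemma setIntegral_norm_truncVelocity_sub_velocity_le {f : ℝ × ℝ → ℝ} (hf : EssBoundedBy F f)
    (hf' : EssBoundedBy F f') {K N : ℕ} (hKN : K ≤ N) :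
    ∫ z in Dom, ‖truncVelocity N f z - velocity f' z‖
      ≤ 4 * π * (π * F) / (K + 1) + ∫ z in Dom, ‖truncVelocity K f z - truncVelocity K f' z‖ := by
  have hv := integrable_velocity hf'
  have hw := integrable_truncVelocity
  have hNK : Integrable (fun z => ‖truncVelocity N f z - truncVelocity K f z‖) μD :=
    ((hw N f).sub (hw K f)).norm
  have hKK : Integrable (fun z => ‖truncVelocity K f z - truncVelocity K f' z‖) μD :=
    ((hw K f).sub (hw K f')).norm
  have hK : Integrable (fun z => ‖velocity f' z - truncVelocity K f' z‖) μD :=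
    (hv.sub (hw K f')).norm
  have hsum : Integrable (fun z => ‖truncVelocity N f z - truncVelocity K f z‖
      + ‖truncVelocity K f z - truncVelocity K f' z‖) μD := hNK.add hKK
  calc ∫ z in Dom, ‖truncVelocity N f z - velocity f' z‖
      ≤ ∫ z in Dom, (‖truncVelocity N f z - truncVelocity K f z‖
          + ‖truncVelocity K f z - truncVelocity K f' z‖
          + ‖velocity f' z - truncVelocity K f' z‖) := by
        refine integral_mono ((hw N f).sub hv).norm (hsum.add hK) fun z => ?_
        rw [norm_sub_rev (velocity f' z)]
        simpa only [dist_eq_norm] using dist_triangle4 (truncVelocity N f z) (truncVelocity K f z)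
          (truncVelocity K f' z) (velocity f' z)
    _ = (∫ z in Dom, ‖truncVelocity N f z - truncVelocity K f z‖)
          + (∫ z in Dom, ‖truncVelocity K f z - truncVelocity K f' z‖)
          + ∫ z in Dom, ‖velocity f' z - truncVelocity K f' z‖ := by
        rw [integral_add hsum hK, integral_add hNK hKK]
    _ ≤ _ := by
        linarith [setIntegral_norm_truncVelocity_sub_le hf hKN,
          setIntegral_norm_velocity_sub_truncVelocity_le hf' K,
          (by ring : 4 * π * (π * F) / (K + 1) = 2 * (2 * π * (π * F / (K + 1))))]

lemma TendstoWeakly.setIntegral_norm_truncVelocity_sub_velocity (hf : ∀ i, EssBoundedBy F (f i))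
    (hf' : EssBoundedBy F f') (hlim : TendstoWeakly f l f') {θ : ι → ℕ} (hθ : Tendsto θ l atTop) :
    Tendsto (fun i => ∫ z in Dom, ‖truncVelocity (θ i) (f i) z - velocity f' z‖) l (𝓝 0) := by
  refine tendsto_order.2 ⟨fun a ha => .of_forall fun i =>
    ha.trans_le (integral_nonneg fun z => norm_nonneg _), fun ε hε => ?_⟩
  obtain ⟨K, hK⟩ := ((tendsto_const_div_add_one (4 * π * (π * F))).eventually_lt_const
    (half_pos hε)).exists
  have htrunc := hlim.setIntegral_norm_truncVelocity_sub (fun i => (hf i).integrable)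
    hf'.integrable K
  filter_upwards [htrunc.eventually_lt_const (half_pos hε), hθ.eventually_ge_atTop K]
    with i hi hKi
  linarith [setIntegral_norm_truncVelocity_sub_velocity_le (hf i) hf' hKi]

end VelocityConvergence

section RateConvergence

variable {ι : Type*} {l : Filter ι} {H L M t : ℝ} {φ : ℝ × ℝ × ℝ → ℝ} {h : ℝ × ℝ → ℝ}
  {u : ι → ℝ × ℝ → ℝ × ℝ} {u' : ℝ × ℝ → ℝ × ℝ}

lemma tendsto_formStress (hh : EssBoundedBy H h) (hu : ∀ i, Integrable (u i) μD)
    (hu' : Integrable u' μD) (hlim : Tendsto (fun i => ∫ z in Dom, ‖u i z - u' z‖) l (𝓝 0)) :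
    Tendsto (fun i => formStress h (u i)) l (𝓝 (formStress h u')) := by
  have hsub (i : ι) : formStress h (u i) - formStress h u' = formStress h (u i - u') := by
    simp only [formStress, Pi.sub_apply, Prod.snd_sub, mul_sub]
    rw [integral_sub (hh.integrable_mul (hu i).snd) (hh.integrable_mul hu'.snd), sub_div]
  have hbound := hlim.const_mul (H / (4 * π ^ 2))
  rw [mul_zero] at hbound
  refine tendsto_iff_norm_sub_tendsto_zero.2
    (squeeze_zero (fun _ => norm_nonneg _) (fun i => ?_) hbound)
  rw [hsub, norm_eq_abs, div_mul_eq_mul_div, mul_div_assoc]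
  exact abs_formStress_le hh ((hu i).sub hu') (mul_div_cancel₀ _ (by positivity)).ge

lemma memLp_fderiv_apply (hφ : ContDiff ℝ 1 φ) (hφL : ∀ z, ‖fderiv ℝ φ (t, z)‖ ≤ L)
    (hu' : MemLp u' 2 μD) : MemLp (fun z => fderiv ℝ φ (t, z) (1, u' z)) 2 μD := by
  refine MemLp.mono' (((memLp_const (1 : ℝ)).add hu'.norm).const_mul L) ?_
    (.of_forall fun z => norm_apply_one_prodMk_le _ (hφL z) _)
  exact (isBoundedBilinearMap_apply (𝕜 := ℝ) (E := ℝ × ℝ × ℝ) (F := ℝ)).continuous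
    |>.comp_aestronglyMeasurable ((continuous_fderiv_slice hφ t).aestronglyMeasurable.prodMk
      (aestronglyMeasurable_const.prodMk hu'.aestronglyMeasurable))

lemma abs_transportRate_sub_velocity_le {q : ℝ × ℝ → ℝ} {u : ℝ × ℝ → ℝ × ℝ}
    (hφ : ContDiff ℝ 1 φ) (hφL : ∀ z, ‖fderiv ℝ φ (t, z)‖ ≤ L) (hq : EssBoundedBy M q)
    (hu : Integrable u μD) (hu' : Integrable u' μD) :
    |transportRate φ u q t - transportRate φ u' q t| ≤ L * M * ∫ z in Dom, ‖u z - u' z‖ := by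
  have hinteg {w : ℝ × ℝ → ℝ × ℝ} (hw : Integrable w μD) :=
    integrable_clm_apply_mul hq hw (continuous_fderiv_slice hφ t)
  rw [transportRate_eq, transportRate_eq, ← integral_sub (hinteg hu) (hinteg hu'), ← norm_eq_abs,
    ← integral_const_mul]
  refine norm_integral_le_of_norm_le ((hu.sub hu').norm.const_mul _) ?_
  filter_upwards [hq.bound] with z hz
  have hdiff : ((1, u z) - (1, u' z) : ℝ × ℝ × ℝ) = (0, u z - u' z) := by simp
  have hnorm : ‖fderiv ℝ φ (t, z) (0, u z - u' z)‖ ≤ L * ‖u z - u' z‖ := by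
    simpa [Prod.norm_def] using (fderiv ℝ φ (t, z)).le_of_opNorm_le (hφL z) (0, u z - u' z)
  rw [← sub_mul, ← map_sub, hdiff, norm_mul]
  calc _ ≤ L * ‖u z - u' z‖ * M :=
        mul_le_mul hnorm hz (abs_nonneg _) ((norm_nonneg _).trans hnorm)
    _ = L * M * ‖u z - u' z‖ := by ring

lemma TendstoWeakly.transportRate {q : ι → ℝ × ℝ → ℝ} {q' : ℝ × ℝ → ℝ} (hφ : ContDiff ℝ 1 φ)
    (hφL : ∀ z, ‖fderiv ℝ φ (t, z)‖ ≤ L) (hqlim : TendstoWeakly q l q')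
    (hq : ∀ i, EssBoundedBy M (q i)) (hu : ∀ i, Integrable (u i) μD) (hu' : MemLp u' 2 μD)
    (hulim : Tendsto (fun i => ∫ z in Dom, ‖u i z - u' z‖) l (𝓝 0)) :
    Tendsto (fun i => transportRate φ (u i) (q i) t) l (𝓝 (transportRate φ u' q' t)) := by
  have hfixed : Tendsto (fun i => BQG.transportRate φ u' (q i) t) l
      (𝓝 (BQG.transportRate φ u' q' t)) := by
    simp only [transportRate_eq]
    exact hqlim _ (memLp_fderiv_apply hφ hφL hu')
  have hbound := hulim.const_mul (L * M)
  rw [mul_zero] at hbound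
  have hdiff : Tendsto (fun i => BQG.transportRate φ (u i) (q i) t - BQG.transportRate φ u' (q i) t)
      l (𝓝 0) := squeeze_zero_norm (fun i => abs_transportRate_sub_velocity_le hφ hφL (hq i) (hu i)
        (hu'.integrable one_le_two)) hbound
  simpa using hdiff.add hfixed

end RateConvergence

section LimitEquations

variable {T H M β C V₀ t : ℝ} {h q₀ : ℝ × ℝ → ℝ} {V : ℝ → ℝ} {q : ℝ → ℝ × ℝ → ℝ}
  {Vn : ℕ → ℝ → ℝ} {qn : ℕ → ℝ → ℝ × ℝ → ℝ} {θ : ℕ → ℕ}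

/-- The velocity `(V, 0) + ∇^⊥ψ'` of the mean flow `V` and the potential vorticity `q`, where
`ψ' = Δ⁻¹(q - h - βy)`. -/
def totalVelocity (h : ℝ × ℝ → ℝ) (β V : ℝ) (q : ℝ × ℝ → ℝ) (z : ℝ × ℝ) : ℝ × ℝ :=
  (V, 0) + velocity (relVorticity h β q) z

lemma memLp_totalVelocity {V : ℝ} {q : ℝ × ℝ → ℝ} (hh : EssBoundedBy H h)
    (hq : EssBoundedBy M q) : MemLp (totalVelocity h β V q) 2 μD :=
  memLp_add_velocity (hq.relVorticity hh β) V

lemma formStress_totalVelocity (h : ℝ × ℝ → ℝ) (β V : ℝ) (q : ℝ × ℝ → ℝ) :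
    formStress h (totalVelocity h β V q) = formStress h (velocity (relVorticity h β q)) := by
  simp only [formStress, totalVelocity, Prod.snd_add, zero_add]

lemma tendsto_setIntegral_norm_add_sub_add {ι : Type*} {l : Filter ι} {v : ι → ℝ} {v' : ℝ}
    {w : ι → ℝ × ℝ → ℝ × ℝ} {w' : ℝ × ℝ → ℝ × ℝ} (hw : ∀ i, Integrable (w i) μD)
    (hw' : Integrable w' μD) (hv : Tendsto v l (𝓝 v'))
    (hlim : Tendsto (fun i => ∫ z in Dom, ‖w i z - w' z‖) l (𝓝 0)) :
    Tendsto (fun i => ∫ z in Dom, ‖(v i, 0) + w i z - ((v', 0) + w' z)‖) l (𝓝 0) := by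
  have hbound : Tendsto (fun i => 4 * π ^ 2 * |v i - v'| + ∫ z in Dom, ‖w i z - w' z‖) l (𝓝 0) := by
    simpa using ((tendsto_iff_norm_sub_tendsto_zero.1 hv).const_mul (4 * π ^ 2)).add hlim
  refine squeeze_zero (fun i => integral_nonneg fun z => norm_nonneg _) (fun i => ?_) hbound
  have hdiff : Integrable (fun z => ‖w i z - w' z‖) μD := ((hw i).sub hw').norm
  rw [← measureReal_dom, ← smul_eq_mul, ← integral_const,
    ← integral_add (integrable_const _) hdiff]
  refine integral_mono (((integrable_const _).add (hw i)).sub ((integrable_const _).add hw')).norm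
    ((integrable_const _).add hdiff) fun z => ?_
  have hmean : ‖((v i, 0) - (v', 0) : ℝ × ℝ)‖ = |v i - v'| := by simp [Prod.norm_def]
  rw [add_sub_add_comm, ← hmean]
  exact norm_add_le _ _

lemma IsWeakLimit.tendsto_setIntegral_norm_truncVelocity_sub (hlim : IsWeakLimit T M Vn qn V q)
    (hh : EssBoundedBy H h) (hqn : ∀ n, EssBoundedBy M (qn n t)) (hθ : Tendsto θ atTop atTop)
    (ht : t ∈ Icc 0 T) :
    Tendsto (fun n => ∫ z in Dom, ‖truncVelocity (θ n) (relVorticity h β (qn n t)) z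
      - velocity (relVorticity h β (q t)) z‖) atTop (𝓝 0) :=
  ((hlim.tendstoWeakly t ht).relVorticity hh β hqn (hlim.essBoundedBy t))
    |>.setIntegral_norm_truncVelocity_sub_velocity (fun n => (hqn n).relVorticity hh β)
      ((hlim.essBoundedBy t).relVorticity hh β) hθ

lemma IsWeakLimit.tendsto_formStress (hlim : IsWeakLimit T M Vn qn V q) (hh : EssBoundedBy H h)
    (hqn : ∀ n, EssBoundedBy M (qn n t)) (hθ : Tendsto θ atTop atTop) (ht : t ∈ Icc 0 T) :
    Tendsto (fun n => formStress h (truncVelocity (θ n) (relVorticity h β (qn n t)))) atTop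
      (𝓝 (formStress h (totalVelocity h β (V t) (q t)))) := by
  rw [formStress_totalVelocity]
  exact BQG.tendsto_formStress hh (fun n => integrable_truncVelocity _ _)
    (integrable_velocity ((hlim.essBoundedBy t).relVorticity hh β))
    (hlim.tendsto_setIntegral_norm_truncVelocity_sub hh hqn hθ ht)

lemma IsWeakLimit.tendsto_transportRate (hlim : IsWeakLimit T M Vn qn V q) (hh : EssBoundedBy H h)
    (hqn : ∀ n, EssBoundedBy M (qn n t)) (hθ : Tendsto θ atTop atTop) (ht : t ∈ Icc 0 T)
    {L : ℝ} {φ : ℝ × ℝ × ℝ → ℝ} (hφ : IsTestFunction T L φ) :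
    Tendsto (fun n => transportRate φ
        (fun z => (Vn n t, 0) + truncVelocity (θ n) (relVorticity h β (qn n t)) z) (qn n t) t)
      atTop (𝓝 (transportRate φ (totalVelocity h β (V t) (q t)) (q t) t)) := by
  refine (hlim.tendstoWeakly t ht).transportRate hφ.contDiff (hφ.norm_fderiv_le t ht) hqn
    (fun n => integrable_add_truncVelocity _ _ _) (memLp_totalVelocity hh (hlim.essBoundedBy t)) ?_
  exact tendsto_setIntegral_norm_add_sub_add (fun n => integrable_truncVelocity _ _)
    (integrable_velocity ((hlim.essBoundedBy t).relVorticity hh β)) (hlim.tendsto_meanFlow t ht)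
    (hlim.tendsto_setIntegral_norm_truncVelocity_sub hh hqn hθ ht)

lemma IsApproxSolution.abs_transportRate_le {N : ℕ} {V : ℝ → ℝ} {q : ℝ → ℝ × ℝ → ℝ}
    (happrox : IsApproxSolution T M β h V₀ q₀ C N V q) (hh : EssBoundedBy H h)
    (ht : t ∈ Icc 0 T) {L : ℝ} {φ : ℝ × ℝ × ℝ → ℝ} (hφ : IsTestFunction T L φ) :
    |transportRate φ (fun z => (V t, 0) + truncVelocity N (relVorticity h β (q t)) z) (q t) t|
      ≤ L * M * (4 * π ^ 2 * (1 + (C + (M + H + |β| * π)))) := by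
  have hq := (happrox.oddPeriodicBoundedBy t).essBoundedBy
  exact BQG.abs_transportRate_le hφ.contDiff (hφ.norm_fderiv_le t ht) hq
    (integrable_add_truncVelocity _ _ _) (setIntegral_one_add_norm_le (integrable_truncVelocity _ _)
      ((hq.relVorticity hh β).setIntegral_norm_truncVelocity_le N)
      (add_le_add_left (happrox.abs_meanFlow_le t ht) _))

lemma IsWeakLimit.tendsto_integral_transportRate (hlim : IsWeakLimit T M Vn qn V q) (hT : 0 ≤ T)
    (hh : EssBoundedBy H h) (happrox : ∀ n, IsApproxSolution T M β h V₀ q₀ C (θ n) (Vn n) (qn n))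
    (hθ : Tendsto θ atTop atTop) {L : ℝ} {φ : ℝ × ℝ × ℝ → ℝ} (hφ : IsTestFunction T L φ) :
    Tendsto (fun n => ∫ s in (0 : ℝ)..T, transportRate φ
        (fun z => (Vn n s, 0) + truncVelocity (θ n) (relVorticity h β (qn n s)) z) (qn n s) s)
      atTop (𝓝 (∫ s in (0 : ℝ)..T, transportRate φ (totalVelocity h β (V s) (q s)) (q s) s)) := by
  refine intervalIntegral.tendsto_integral_filter_of_dominated_convergence
    (fun _ => L * M * (4 * π ^ 2 * (1 + (C + (M + H + |β| * π))))) (.of_forall fun n =>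
      ((happrox n).intervalIntegrable_transportRate L φ hφ).def'.aestronglyMeasurable)
    (.of_forall fun n => .of_forall fun s hs => ?_) intervalIntegrable_const
    (.of_forall fun s hs => ?_)
  all_goals
    rw [uIoc_of_le hT] at hs
  · exact (happrox n).abs_transportRate_le hh (Ioc_subset_Icc_self hs) hφ
  · exact hlim.tendsto_transportRate hh (fun n => ((happrox n).oddPeriodicBoundedBy s).essBoundedBy)
      hθ (Ioc_subset_Icc_self hs) hφ

lemma tendsto_const_mul_one_div_add_one (C : ℝ) (hθ : Tendsto θ atTop atTop) :
    Tendsto (fun n => C * (1 / ((θ n : ℝ) + 1))) atTop (𝓝 0) := by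
  simpa only [mul_one_div, Function.comp_def] using (tendsto_const_div_add_one C).comp hθ

lemma IsWeakLimit.pairing_sub_eq_integral_transportRate (hlim : IsWeakLimit T M Vn qn V q)
    (hT : 0 ≤ T) (hh : EssBoundedBy H h)
    (happrox : ∀ n, IsApproxSolution T M β h V₀ q₀ C (θ n) (Vn n) (qn n))
    (hθ : Tendsto θ atTop atTop) {L : ℝ} {φ : ℝ × ℝ × ℝ → ℝ} (hφ : IsTestFunction T L φ) :
    (∫ z in Dom, φ (T, z) * q T z) - (∫ z in Dom, φ (0, z) * q₀ z)
      = ∫ s in (0 : ℝ)..T, transportRate φ (totalVelocity h β (V s) (q s)) (q s) s := by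
  have hfinal := hlim.tendstoWeakly T (right_mem_Icc.2 hT) (fun z => φ (T, z))
    (memLp_dom_of_continuous (hφ.continuous_slice T) 2)
  have hdefect := (hfinal.sub_const (∫ z in Dom, φ (0, z) * q₀ z)).sub
    (hlim.tendsto_integral_transportRate hT hh happrox hθ hφ)
  exact sub_eq_zero.1 (tendsto_nhds_unique hdefect (squeeze_zero_norm
    (fun n => (happrox n).abs_pairing_sub_integral_le L φ hφ)
    (tendsto_const_mul_one_div_add_one (C * L) hθ)))

lemma IsWeakLimit.tendsto_integral_formStress (hlim : IsWeakLimit T M Vn qn V q)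
    (hh : EssBoundedBy H h) (happrox : ∀ n, IsApproxSolution T M β h V₀ q₀ C (θ n) (Vn n) (qn n))
    (hθ : Tendsto θ atTop atTop) (ht : t ∈ Icc 0 T) :
    Tendsto (fun n => ∫ s in (0 : ℝ)..t,
        formStress h (truncVelocity (θ n) (relVorticity h β (qn n s)))) atTop
      (𝓝 (∫ s in (0 : ℝ)..t, formStress h (totalVelocity h β (V s) (q s)))) := by
  have hqn (n : ℕ) (s : ℝ) := ((happrox n).oddPeriodicBoundedBy s).essBoundedBy
  have hsub : uIcc 0 t ⊆ uIcc 0 T := by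
    rw [uIcc_of_le ht.1, uIcc_of_le (ht.1.trans ht.2)]
    exact Icc_subset_Icc_right ht.2
  refine intervalIntegral.tendsto_integral_filter_of_dominated_convergence
    (fun _ => H * (M + H + |β| * π)) (.of_forall fun n =>
      ((happrox n).intervalIntegrable_formStress.mono_set hsub).def'.aestronglyMeasurable)
    (.of_forall fun n => .of_forall fun s _ => abs_formStress_le hh (integrable_truncVelocity _ _)
      (((hqn n s).relVorticity hh β).setIntegral_norm_truncVelocity_le _))
    intervalIntegrable_const (.of_forall fun s hs => ?_)
  rw [uIoc_of_le ht.1] at hs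
  exact hlim.tendsto_formStress hh (fun n => hqn n s) hθ ⟨hs.1.le, hs.2.trans ht.2⟩

lemma IsWeakLimit.meanFlow_eq (hlim : IsWeakLimit T M Vn qn V q) (hh : EssBoundedBy H h)
    (happrox : ∀ n, IsApproxSolution T M β h V₀ q₀ C (θ n) (Vn n) (qn n))
    (hθ : Tendsto θ atTop atTop) (ht : t ∈ Icc 0 T) :
    V t = V₀ + ∫ s in (0 : ℝ)..t, formStress h (totalVelocity h β (V s) (q s)) := by
  have hdefect := ((hlim.tendsto_meanFlow t ht).sub_const V₀).sub
    (hlim.tendsto_integral_formStress hh happrox hθ ht)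
  have hzero := tendsto_nhds_unique hdefect (squeeze_zero_norm
    (fun n => (happrox n).abs_meanFlow_sub_integral_le t ht)
    (tendsto_const_mul_one_div_add_one C hθ))
  linarith

lemma IsWeakLimit.continuous_streamCoeff (hlim : IsWeakLimit T M Vn qn V q)
    (hh : EssBoundedBy H h) (β : ℝ) (m : ℤ × ℤ) :
    Continuous fun t => streamCoeff (relVorticity h β (q t)) m :=
  continuous_iff_continuousAt.2 fun t => by
    have hrel (s : ℝ) := (hlim.essBoundedBy s).relVorticity hh β
    exact ((hlim.tendstoWeakly_nhds t).relVorticity hh β hlim.essBoundedBy (hlim.essBoundedBy t))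
      |>.streamCoeff (fun s => (hrel s).integrable) (hrel t).integrable m

lemma IsWeakLimit.continuous_truncVelocity (hlim : IsWeakLimit T M Vn qn V q)
    (hh : EssBoundedBy H h) (β : ℝ) (N : ℕ) :
    Continuous fun p : ℝ × ℝ × ℝ => truncVelocity N (relVorticity h β (q p.1)) p.2 := by
  refine continuous_finsetSum _ fun m _ => ?_
  have hcoeff := (hlim.continuous_streamCoeff hh β m).comp (continuous_fst (Y := ℝ × ℝ))
  have hphase := (continuous_phase m).comp (continuous_snd (X := ℝ))
  exact (Complex.continuous_re.comp (hcoeff.mul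
    ((Complex.continuous_ofReal.comp hphase).mul continuous_const).cexp)).smul continuous_const

lemma IsWeakLimit.measurable_totalVelocity (hlim : IsWeakLimit T M Vn qn V q)
    (hh : EssBoundedBy H h) (β : ℝ) :
    Measurable fun p : ℝ × ℝ × ℝ => totalVelocity h β (V p.1) (q p.1) p.2 := by
  have hvelocity : StronglyMeasurable
      fun p : ℝ × ℝ × ℝ => velocity (relVorticity h β (q p.1)) p.2 :=
    StronglyMeasurable.limUnder fun l =>
      (hlim.continuous_truncVelocity hh β (2 ^ l)).stronglyMeasurable
  exact ((hlim.continuous_meanFlow.measurable.comp measurable_fst).prodMk measurable_const).add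
    hvelocity.measurable

lemma fourierIntegral_comp_reflection (g : ℝ × ℝ → ℝ) (j k : ℤ) :
    fourierIntegral (fun z => g (z.1, -z.2)) (j, k) = fourierIntegral g (j, -k) := by
  have hreflect : MeasurableEmbedding fun z : ℝ × ℝ => (z.1, -z.2) :=
    ((MeasurableEquiv.refl ℝ).prodCongr (MeasurableEquiv.neg ℝ)).measurableEmbedding
  rw [fourierIntegral, fourierIntegral, ← measurePreserving_reflection_dom.integral_comp hreflect]
  congr 1 with ⟨x, y⟩
  simp only [planeWave_mk, neg_neg]
  push_cast
  rw [mul_neg, ← neg_mul]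

lemma OddPeriodicBoundedBy.fourierIntegral_neg_snd {g : ℝ × ℝ → ℝ}
    (hg : OddPeriodicBoundedBy M g) (j k : ℤ) :
    fourierIntegral g (j, -k) = -fourierIntegral g (j, k) := by
  rw [← fourierIntegral_comp_reflection, fourierIntegral, fourierIntegral, ← integral_neg]
  simp only [hg.odd, Prod.mk.eta, Complex.ofReal_neg, neg_mul]

lemma IsWeakLimit.oddInY (hlim : IsWeakLimit T M Vn qn V q)
    (hqn : ∀ n, OddPeriodicBoundedBy M (qn n t)) (ht : t ∈ Icc 0 T) : OddInY (q t) := by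
  intro j k
  rw [chat_eq_fourierIntegral (hlim.essBoundedBy t).integrable]
  have hfourier := (hlim.tendstoWeakly t ht).fourierIntegral
    (fun n => (hqn n).essBoundedBy.integrable) (hlim.essBoundedBy t).integrable
  have hsum := (hfourier (-j, k)).add (hfourier (-j, -k))
  simp only [fun n => (hqn n).fourierIntegral_neg_snd, add_neg_cancel] at hsum
  rw [tendsto_nhds_unique hsum tendsto_const_nhds, zero_div]

end LimitEquations

section Mollification

open scoped Convolution
open ContinuousLinearMap (lsmul)

variable {G E : Type*} [NormedAddCommGroup G] [NormedSpace ℝ G] [FiniteDimensional ℝ G]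
  [MeasurableSpace G] [BorelSpace G] {μ : Measure G} [μ.IsAddHaarMeasure]
  [NormedAddCommGroup E] [NormedSpace ℝ E]

lemma integrable_normed_smul_comp_sub (ρ : ContDiffBump (0 : G)) {f : G → E} (hf : Continuous f)
    (x : G) : Integrable (fun y => ρ.normed μ y • f (x - y)) μ :=
  (ρ.continuous_normed.smul (hf.comp (by fun_prop))).integrable_of_hasCompactSupport
    ρ.hasCompactSupport_normed.smul_right

lemma norm_normed_smul_le (ρ : ContDiffBump (0 : G)) {v : E} {K : ℝ} {y : G}
    (hv : ‖y‖ < ρ.rOut → ‖v‖ ≤ K) : ‖ρ.normed μ y • v‖ ≤ ρ.normed μ y * K := by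
  rw [norm_smul, norm_of_nonneg (ρ.nonneg_normed y)]
  by_cases hy : ‖y‖ < ρ.rOut
  · exact mul_le_mul_of_nonneg_left (hv hy) (ρ.nonneg_normed y)
  · have hzero : ρ.normed μ y = 0 := Function.notMem_support.1 <| by
      rwa [ρ.support_normed_eq, mem_ball_zero_iff]
    rw [hzero, zero_mul, zero_mul]

lemma hasFDerivAt_normed_convolution (ρ : ContDiffBump (0 : G)) {f : G → E} (hf : ContDiff ℝ 1 f)
    (x : G) : HasFDerivAt (ρ.normed μ ⋆[lsmul ℝ ℝ, μ] f)
      ((ρ.normed μ ⋆[lsmul ℝ ℝ, μ] fderiv ℝ f) x) x := by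
  have hf' : Continuous (fderiv ℝ f) := hf.continuous_fderiv one_ne_zero
  obtain ⟨K, hK⟩ := (isCompact_closedBall x (1 + ρ.rOut)).exists_bound_of_continuousOn
    hf'.continuousOn
  refine hasFDerivAt_integral_of_dominated_of_fderiv_le (𝕜 := ℝ)
    (F' := fun w y => ρ.normed μ y • fderiv ℝ f (w - y)) (bound := fun y => ρ.normed μ y * K)
    (Metric.ball_mem_nhds x one_pos)
    (.of_forall fun w => (integrable_normed_smul_comp_sub ρ hf.continuous w).aestronglyMeasurable)
    (integrable_normed_smul_comp_sub ρ hf.continuous x)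
    (integrable_normed_smul_comp_sub ρ hf' x).aestronglyMeasurable
    (.of_forall fun y w hw => norm_normed_smul_le ρ fun hy => hK _ ?_)
    (ρ.integrable_normed.mul_const K) (.of_forall fun y w _ => ?_)
  · rw [mem_ball_iff_norm] at hw
    rw [mem_closedBall_iff_norm, sub_right_comm]
    linarith [norm_sub_le (w - x) y]
  · have hdiff := (hf.differentiable one_ne_zero (w - y)).hasFDerivAt
    exact ((hasFDerivAt_comp_sub y).2 hdiff).const_smul (ρ.normed μ y)

end Mollification

section PeriodicApproximation

open scoped Convolution
open ContinuousLinearMap (lsmul)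

variable {E : Type*} [NormedAddCommGroup E] {φ : ℝ × ℝ × ℝ → E} {ε : ℝ}

lemma exists_forall_dist_lt_of_periodic (hcont : Continuous φ)
    (hφ : ∀ t, DoublyPeriodic fun z => φ (t, z)) (T : ℝ) (hε : 0 < ε) :
    ∃ δ > 0, ∀ t ∈ Icc 0 T, ∀ z, ∀ p ∈ Metric.ball (t, z) δ, dist (φ p) (φ (t, z)) < ε := by
  have hcompact : IsCompact (Icc 0 T ×ˢ Icc (-π) π ×ˢ Icc (-π) π) :=
    isCompact_Icc.prod (isCompact_Icc.prod isCompact_Icc)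
  obtain ⟨δ, hδ, hball⟩ := Metric.mem_uniformity_dist.1
    (hcompact.uniformContinuousAt_of_continuousAt φ (fun p _ => hcont.continuousAt)
      (Metric.dist_mem_uniformity hε))
  refine ⟨δ, hδ, fun t ht z p hp => ?_⟩
  obtain ⟨ℓ, hℓ, -⟩ := existsUnique_vadd_mem_dom z
  have hdist : dist (t, ℓ +ᵥ z) (p.1, ℓ +ᵥ p.2) < δ := by
    rw [dist_comm, Prod.dist_eq]
    exact max_lt (max_lt_iff.1 hp).1
      ((dist_add_left (ℓ : ℝ × ℝ) _ _).trans_lt (max_lt_iff.1 hp).2)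
  have hclose := hball hdist ⟨ht, prod_mono Ioc_subset_Icc_self Ioc_subset_Icc_self hℓ⟩
  rwa [mem_ofPred_eq, (hφ t).vadd, (hφ p.1).vadd, dist_comm] at hclose

lemma doublyPeriodic_convolution [NormedSpace ℝ E] (ρ : ℝ × ℝ × ℝ → ℝ)
    (hφ : ∀ t, DoublyPeriodic fun z => φ (t, z)) (t : ℝ) :
    DoublyPeriodic fun z => (ρ ⋆[lsmul ℝ ℝ, volume] φ) (t, z) := by
  constructor <;> intro x y <;> refine integral_congr_ae (.of_forall fun p => ?_)
  · have hper := (hφ (t - p.1)).fst (x - p.2.1) (y - p.2.2)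
    rw [sub_add_eq_add_sub] at hper
    exact congrArg (ρ p • ·) hper
  · have hper := (hφ (t - p.1)).snd (x - p.2.1) (y - p.2.2)
    rw [sub_add_eq_add_sub] at hper
    exact congrArg (ρ p • ·) hper

instance isAddHaarMeasure_volume_real_prod :
    (volume : Measure (ℝ × ℝ × ℝ)).IsAddHaarMeasure :=
  have : (volume : Measure (ℝ × ℝ)).IsAddHaarMeasure :=
    inferInstanceAs ((volume : Measure ℝ).prod volume).IsAddHaarMeasure
  inferInstanceAs ((volume : Measure ℝ).prod (volume : Measure (ℝ × ℝ))).IsAddHaarMeasure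

lemma exists_contDiff_two_dist_le_of_periodic {φ : ℝ × ℝ × ℝ → ℝ} (hφ : ContDiff ℝ 1 φ)
    (hper : ∀ t, DoublyPeriodic fun z => φ (t, z)) (T : ℝ) (hε : 0 < ε) :
    ∃ ψ : ℝ × ℝ × ℝ → ℝ, ContDiff ℝ 2 ψ ∧ (∀ t, DoublyPeriodic fun z => ψ (t, z)) ∧
      (∀ t ∈ Icc 0 T, ∀ z, |ψ (t, z) - φ (t, z)| ≤ ε) ∧
      ∀ t ∈ Icc 0 T, ∀ z, ‖fderiv ℝ ψ (t, z) - fderiv ℝ φ (t, z)‖ ≤ ε := by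
  have hφ' : Continuous (fderiv ℝ φ) := hφ.continuous_fderiv one_ne_zero
  obtain ⟨δ₀, hδ₀, hclose₀⟩ := exists_forall_dist_lt_of_periodic hφ.continuous hper T hε
  obtain ⟨δ₁, hδ₁, hclose₁⟩ :=
    exists_forall_dist_lt_of_periodic hφ' (fderiv_periodic hper) T hε
  have hδ : 0 < min δ₀ δ₁ := lt_min hδ₀ hδ₁
  let ρ : ContDiffBump (0 : ℝ × ℝ × ℝ) := ⟨min δ₀ δ₁ / 2, min δ₀ δ₁, half_pos hδ, half_lt_self hδ⟩
  refine ⟨ρ.normed volume ⋆[lsmul ℝ ℝ, volume] φ,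
    ρ.hasCompactSupport_normed.contDiff_convolution_left _ ρ.contDiff_normed
      hφ.continuous.locallyIntegrable,
    doublyPeriodic_convolution _ hper, fun t ht z => ?_, fun t ht z => ?_⟩
  · exact ρ.dist_normed_convolution_le hφ.continuous.aestronglyMeasurable fun p hp =>
      (hclose₀ t ht z p (Metric.ball_subset_ball (min_le_left _ _) hp)).le
  · rw [(hasFDerivAt_normed_convolution ρ hφ (t, z)).fderiv, ← dist_eq_norm]
    exact ρ.dist_normed_convolution_le hφ'.aestronglyMeasurable fun p hp =>
      (hclose₁ t ht z p (Metric.ball_subset_ball (min_le_right _ _) hp)).le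

end PeriodicApproximation

section WeakFormulation

variable {T M B ε : ℝ} {φ ψ : ℝ × ℝ × ℝ → ℝ} {q₀ : ℝ × ℝ → ℝ} {q : ℝ → ℝ × ℝ → ℝ}
  {u : ℝ → ℝ × ℝ → ℝ × ℝ}

/-- The amount by which the weak transport equation on `[0, T]` with velocity `u` and initial datum
`q₀` fails for `q` when tested against `φ`. -/
def transportDefect (T : ℝ) (q₀ : ℝ × ℝ → ℝ) (q : ℝ → ℝ × ℝ → ℝ) (u : ℝ → ℝ × ℝ → ℝ × ℝ)
    (φ : ℝ × ℝ × ℝ → ℝ) : ℝ :=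
  (∫ z in Dom, φ (T, z) * q T z) - (∫ z in Dom, φ (0, z) * q₀ z)
    - ∫ s in (0 : ℝ)..T, transportRate φ (u s) (q s) s

lemma stronglyMeasurable_transportRate (hφ : ContDiff ℝ 1 φ)
    (hq : Measurable (Function.uncurry q)) (hu : Measurable (Function.uncurry u)) :
    StronglyMeasurable fun s => transportRate φ (u s) (q s) s := by
  simp only [transportRate_eq]
  have hclm : Measurable fun p : ℝ × ℝ × ℝ => fderiv ℝ φ p (1, Function.uncurry u p) :=
    (isBoundedBilinearMap_apply (𝕜 := ℝ) (E := ℝ × ℝ × ℝ) (F := ℝ)).continuous.measurable.comp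
      ((hφ.continuous_fderiv one_ne_zero).measurable.prodMk (measurable_const.prodMk hu))
  exact (hclm.mul hq).stronglyMeasurable.integral_prod_right

lemma intervalIntegrable_transportRate (hT : 0 ≤ T) (hφ : ContDiff ℝ 1 φ)
    (hper : ∀ t, DoublyPeriodic fun z => φ (t, z)) (hqm : Measurable (Function.uncurry q))
    (hum : Measurable (Function.uncurry u)) (hq : ∀ t, EssBoundedBy M (q t))
    (hu : ∀ t, Integrable (u t) μD) (hB : ∀ t ∈ Icc 0 T, ∫ z in Dom, (1 + ‖u t z‖) ≤ B) :
    IntervalIntegrable (fun s => transportRate φ (u s) (q s) s) volume 0 T := by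
  obtain ⟨L, hL⟩ := exists_norm_le_of_periodic (hφ.continuous_fderiv one_ne_zero)
    (fderiv_periodic hper) T
  rw [intervalIntegrable_iff_integrableOn_Icc_of_le hT]
  exact .of_bound measure_Icc_lt_top
    (stronglyMeasurable_transportRate hφ hqm hum).aestronglyMeasurable (L * M * B)
    (ae_restrict_of_forall_mem measurableSet_Icc fun t ht =>
      abs_transportRate_le hφ (hL t ht) (hq t) (hu t) (hB t ht))

lemma abs_setIntegral_mul_sub_le {f g : ℝ × ℝ → ℝ} (hf : Continuous f) (hg : Continuous g)
    (hq₀ : EssBoundedBy M q₀) (hfg : ∀ z, |f z - g z| ≤ ε) :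
    |(∫ z in Dom, f z * q₀ z) - ∫ z in Dom, g z * q₀ z| ≤ ε * (4 * π ^ 2 * M) := by
  have hinteg {k : ℝ × ℝ → ℝ} (hk : Continuous k) : Integrable (fun z => k z * q₀ z) μD := by
    simpa only [mul_comm] using hq₀.integrable_mul (integrable_dom_of_continuous hk)
  rw [← integral_sub (hinteg hf) (hinteg hg), ← norm_eq_abs]
  calc ‖∫ z in Dom, (f z * q₀ z - g z * q₀ z)‖ ≤ ∫ z in Dom, ε * ‖q₀ z‖ := by
        refine norm_integral_le_of_norm_le (hq₀.integrable.norm.const_mul ε)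
          (.of_forall fun z => ?_)
        rw [← sub_mul, norm_mul]
        exact mul_le_mul_of_nonneg_right (hfg z) (norm_nonneg _)
    _ ≤ ε * (4 * π ^ 2 * M) := by
        rw [integral_const_mul]
        exact mul_le_mul_of_nonneg_left hq₀.integral_norm_le ((abs_nonneg _).trans (hfg 0))

lemma abs_transportDefect_sub_le (hT : 0 ≤ T) (hφ : ContDiff ℝ 1 φ)
    (hφper : ∀ t, DoublyPeriodic fun z => φ (t, z)) (hψ : ContDiff ℝ 1 ψ)
    (hψper : ∀ t, DoublyPeriodic fun z => ψ (t, z)) (hqm : Measurable (Function.uncurry q))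
    (hum : Measurable (Function.uncurry u)) (hq₀ : EssBoundedBy M q₀)
    (hq : ∀ t, EssBoundedBy M (q t)) (hu : ∀ t, Integrable (u t) μD)
    (hB : ∀ t ∈ Icc 0 T, ∫ z in Dom, (1 + ‖u t z‖) ≤ B)
    (hclose : ∀ t ∈ Icc 0 T, ∀ z, |ψ (t, z) - φ (t, z)| ≤ ε)
    (hclose' : ∀ t ∈ Icc 0 T, ∀ z, ‖fderiv ℝ ψ (t, z) - fderiv ℝ φ (t, z)‖ ≤ ε) :
    |transportDefect T q₀ q u ψ - transportDefect T q₀ q u φ|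
      ≤ ε * (4 * π ^ 2 * M + 4 * π ^ 2 * M + M * B * T) := by
  have hfinal := abs_setIntegral_mul_sub_le (hψ.continuous.comp (by fun_prop))
    (hφ.continuous.comp (by fun_prop)) (hq T) (hclose T ⟨hT, le_rfl⟩)
  have hinitial := abs_setIntegral_mul_sub_le (hψ.continuous.comp (by fun_prop))
    (hφ.continuous.comp (by fun_prop)) hq₀ (hclose 0 ⟨le_rfl, hT⟩)
  have hrate : |(∫ s in (0 : ℝ)..T, transportRate ψ (u s) (q s) s)
      - ∫ s in (0 : ℝ)..T, transportRate φ (u s) (q s) s| ≤ ε * M * B * T := by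
    rw [← intervalIntegral.integral_sub
      (intervalIntegrable_transportRate hT hψ hψper hqm hum hq hu hB)
      (intervalIntegrable_transportRate hT hφ hφper hqm hum hq hu hB), ← norm_eq_abs]
    refine (intervalIntegral.norm_integral_le_of_norm_le_const (C := ε * M * B)
      fun s hs => ?_).trans_eq (by rw [sub_zero, abs_of_nonneg hT])
    rw [uIoc_of_le hT] at hs
    have hs' := Ioc_subset_Icc_self hs
    rw [transportRate_eq, transportRate_eq]
    exact abs_setIntegral_clm_apply_mul_sub_le (hq s) (hu s) (continuous_fderiv_slice hψ s)
      (continuous_fderiv_slice hφ s) (hclose' s hs') (hB s hs')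
  simp only [Function.comp_apply] at hfinal hinitial
  unfold transportDefect
  rw [abs_le] at hfinal hinitial hrate ⊢
  constructor <;> linarith

lemma transportDefect_eq_zero_of_contDiff_one (hT : 0 ≤ T) (hqm : Measurable (Function.uncurry q))
    (hum : Measurable (Function.uncurry u)) (hq₀ : EssBoundedBy M q₀)
    (hq : ∀ t, EssBoundedBy M (q t)) (hu : ∀ t, Integrable (u t) μD)
    (hB : ∀ t ∈ Icc 0 T, ∫ z in Dom, (1 + ‖u t z‖) ≤ B)
    (hzero : ∀ L ψ, IsTestFunction T L ψ → transportDefect T q₀ q u ψ = 0)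
    (hφ : ContDiff ℝ 1 φ) (hper : ∀ t, DoublyPeriodic fun z => φ (t, z)) :
    transportDefect T q₀ q u φ = 0 := by
  set K := 4 * π ^ 2 * M + 4 * π ^ 2 * M + M * B * T
  have hbound : ∀ᶠ ε in 𝓝[>] (0 : ℝ), |transportDefect T q₀ q u φ| ≤ ε * K := by
    filter_upwards [self_mem_nhdsWithin] with ε hε
    obtain ⟨ψ, hψ, hψper, hclose, hclose'⟩ := exists_contDiff_two_dist_le_of_periodic hφ hper T hε
    obtain ⟨L, hψL⟩ := exists_isTestFunction hψ hψper T
    simpa only [hzero L ψ hψL, zero_sub, abs_neg] using abs_transportDefect_sub_le hT hφ hper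
      hψL.contDiff hψper hqm hum hq₀ hq hu hB hclose hclose'
  have hlim : Tendsto (fun ε => ε * K) (𝓝[>] (0 : ℝ)) (𝓝 0) :=
    ((continuous_mul_const K).tendsto' 0 0 (zero_mul K)).mono_left nhdsWithin_le_nhds
  exact abs_nonpos_iff.1 (ge_of_tendsto hlim hbound)

variable {H β C V₀ : ℝ} {h : ℝ × ℝ → ℝ} {V : ℝ → ℝ} {Vn : ℕ → ℝ → ℝ}
  {qn : ℕ → ℝ → ℝ × ℝ → ℝ} {θ : ℕ → ℕ}

lemma IsWeakLimit.exists_setIntegral_one_add_norm_le (hlim : IsWeakLimit T M Vn qn V q)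
    (hh : EssBoundedBy H h) (β : ℝ) :
    ∃ B, ∀ t ∈ Icc 0 T, ∫ z in Dom, (1 + ‖totalVelocity h β (V t) (q t) z‖) ≤ B := by
  obtain ⟨C, hC⟩ := isCompact_Icc.exists_bound_of_continuousOn
    (hlim.continuous_meanFlow.continuousOn (s := Icc 0 T))
  refine ⟨4 * π ^ 2 * (1 + (C + (M + H + |β| * π))), fun t ht => ?_⟩
  have hrel := (hlim.essBoundedBy t).relVorticity hh β
  refine setIntegral_one_add_norm_le (integrable_velocity hrel)
    ((setIntegral_norm_velocity_le hrel).trans ?_) (add_le_add_left (hC t ht) _)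
  nlinarith [mul_nonneg (sq_nonneg π) hrel.nonneg]

lemma IsWeakLimit.transportDefect_eq_zero (hlim : IsWeakLimit T M (fun n => Vn (θ n))
      (fun n => qn (θ n)) V q) (hT : 0 ≤ T) (hh : EssBoundedBy H h)
    (happrox : ∀ N, IsApproxSolution T M β h V₀ q₀ C N (Vn N) (qn N))
    (hθ : Tendsto θ atTop atTop) (hq₀ : EssBoundedBy M q₀) (hφ : ContDiff ℝ 1 φ)
    (hper : ∀ t, DoublyPeriodic fun z => φ (t, z)) :
    transportDefect T q₀ q (fun t => totalVelocity h β (V t) (q t)) φ = 0 := by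
  obtain ⟨B, hB⟩ := hlim.exists_setIntegral_one_add_norm_le hh β
  refine transportDefect_eq_zero_of_contDiff_one hT hlim.measurable
    (hlim.measurable_totalVelocity hh β) hq₀ hlim.essBoundedBy
    (fun t => (memLp_totalVelocity hh (hlim.essBoundedBy t)).integrable one_le_two) hB
    (fun L ψ hψ => sub_eq_zero.2 ?_) hφ hper
  exact hlim.pairing_sub_eq_integral_transportRate hT hh (fun n => happrox (θ n)) hθ hψ

end WeakFormulation

section InitialDatum

variable {M : ℝ} {q₀ : ℝ × ℝ → ℝ}

lemma EssBoundedBy.comp_reflection (hq₀ : EssBoundedBy M q₀) :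
    EssBoundedBy M fun z => q₀ (z.1, -z.2) :=
  ⟨hq₀.measurable.comp (by fun_prop),
    measurePreserving_reflection_dom.quasiMeasurePreserving.ae hq₀.bound⟩

lemma fourierIntegral_add_neg_snd_of_oddInY (hq₀ : Integrable q₀ μD) (hodd : OddInY q₀)
    (j k : ℤ) : fourierIntegral q₀ (j, k) + fourierIntegral q₀ (j, -k) = 0 := by
  have hnat (n : ℕ) : fourierIntegral q₀ (j, n) + fourierIntegral q₀ (j, -n) = 0 := by
    have hcos := hodd (-j) n
    rw [chat_eq_fourierIntegral hq₀, neg_neg] at hcos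
    exact (div_eq_zero_iff.1 hcos).resolve_right (by simp [pi_ne_zero])
  obtain ⟨n, rfl | rfl⟩ := k.eq_nat_or_neg
  · exact hnat n
  · rw [neg_neg, add_comm]
    exact hnat n

lemma EssBoundedBy.ae_odd_of_oddInY (hq₀ : EssBoundedBy M q₀) (hodd : OddInY q₀) :
    ∀ᵐ z ∂μD, q₀ (z.1, -z.2) = -q₀ z := by
  have hsum : MemLp (fun z => q₀ z + q₀ (z.1, -z.2)) 2 μD :=
    (hq₀.memLp 2).add (hq₀.comp_reflection.memLp 2)
  have hzero := ae_eq_zero_of_setIntegral_mul_planeWave_eq_zero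
    (Complex.measurable_ofReal.comp (hq₀.measurable.add hq₀.comp_reflection.measurable))
    hsum.ofReal fun m => ?_
  · filter_upwards [hzero] with z hz
    exact eq_neg_of_add_eq_zero_right (Complex.ofReal_eq_zero.1 hz)
  · rw [← fourierIntegral_add_neg_snd_of_oddInY hq₀.integrable hodd m.1 m.2,
      ← fourierIntegral_comp_reflection,
      ← fourierIntegral_add hq₀.integrable hq₀.comp_reflection.integrable]
    rfl

lemma measurable_toIocMod {p : ℝ} (hp : 0 < p) (a : ℝ) : Measurable (toIocMod hp a) := by
  have hfract : toIocMod hp a = fun x => a + p - Int.fract ((a + p - x) / p) * p :=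
    funext (toIocMod_eq_sub_fract_mul hp a)
  rw [hfract]
  fun_prop

lemma toIocMod_neg_pi_eq_self {x : ℝ} (hx : x ∈ Ioc (-π) π) :
    toIocMod two_pi_pos (-π) x = x := by
  rw [toIocMod_eq_self, show -π + 2 * π = π by ring]
  exact hx

lemma EssBoundedBy.exists_doublyPeriodic_ae_eq (hq₀ : EssBoundedBy M q₀) :
    ∃ q, Measurable q ∧ (∀ z, |q z| ≤ M) ∧ DoublyPeriodic q ∧ q =ᵐ[μD] q₀ := by
  obtain ⟨g, hg, hbound, heq⟩ := exists_measurable_abs_le_eq hq₀.measurable hq₀.nonneg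
  have hwrap := measurable_toIocMod two_pi_pos (-π)
  refine ⟨fun z => g (toIocMod two_pi_pos (-π) z.1, toIocMod two_pi_pos (-π) z.2),
    hg.comp ((hwrap.comp measurable_fst).prodMk (hwrap.comp measurable_snd)), fun z => hbound _,
    ⟨fun x y => by rw [toIocMod_add_right], fun x y => by rw [toIocMod_add_right]⟩, ?_⟩
  filter_upwards [hq₀.bound, ae_restrict_mem measurableSet_dom] with z hz hzD
  rw [toIocMod_neg_pi_eq_self hzD.1, toIocMod_neg_pi_eq_self hzD.2, heq _ hz]

lemma EssBoundedBy.exists_oddPeriodicBoundedBy_ae_eq (hq₀ : EssBoundedBy M q₀)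
    (hodd : OddInY q₀) : ∃ q, OddPeriodicBoundedBy M q ∧ q =ᵐ[μD] q₀ := by
  obtain ⟨q, hmeas, hbound, hper, heq⟩ := hq₀.exists_doublyPeriodic_ae_eq
  have hreflect := measurePreserving_reflection_dom.quasiMeasurePreserving.ae heq
  refine ⟨fun z => (q z - q (z.1, -z.2)) / 2,
    ⟨(hmeas.sub (hmeas.comp (by fun_prop))).div_const 2, fun z => ?_,
      ⟨fun x y => ?_, fun x y => ?_⟩, fun x y => ?_⟩, ?_⟩
  · have h₁ := abs_le.1 (hbound z)
    have h₂ := abs_le.1 (hbound (z.1, -z.2))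
    exact abs_le.2 ⟨by linarith, by linarith⟩
  · simp only [hper.fst]
  · have hneg : q (x, -(y + 2 * π)) = q (x, -y) := by
      rw [← hper.snd, neg_add_rev, neg_add_eq_sub, sub_add_cancel]
    simp only [hper.snd, hneg]
  · simp only [neg_neg]
    ring
  · filter_upwards [heq, hreflect, hq₀.ae_odd_of_oddInY hodd] with z hz hz' hzodd
    rw [hz, hz', hzodd]
    ring

end InitialDatum

section Existence

variable {T H M β C V₀ : ℝ} {h q₀ q₀' : ℝ × ℝ → ℝ} {V : ℝ → ℝ} {q : ℝ → ℝ × ℝ → ℝ}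
  {Vn : ℕ → ℝ → ℝ} {qn : ℕ → ℝ → ℝ × ℝ → ℝ} {θ : ℕ → ℕ}

lemma IsWeakLimit.isWeakSolution
    (hlim : IsWeakLimit T M (fun n => Vn (θ n)) (fun n => qn (θ n)) V q) (hT : 0 ≤ T)
    (hh : EssBoundedBy H h)
    (happrox : ∀ N, IsApproxSolution T M β h V₀ q₀' C N (Vn N) (qn N))
    (hθ : Tendsto θ atTop atTop) (hq₀' : EssBoundedBy M q₀') (hq₀ : q₀' =ᵐ[μD] q₀) :
    IsWeakSolution T β h V₀ q₀ V q fun t => totalVelocity h β (V t) (q t) where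
  measV := hlim.continuous_meanFlow.measurable
  bddV := isCompact_Icc.exists_bound_of_continuousOn hlim.continuous_meanFlow.continuousOn
  measq := hlim.measurable
  bddq := ⟨M, .of_forall fun p => hlim.abs_le p.1 p.2⟩
  oddq := ae_restrict_of_forall_mem measurableSet_Icc fun t ht =>
    hlim.oddInY (fun n => (happrox (θ n)).oddPeriodicBoundedBy t) ht
  contq ϕ hϕ := by
    simp only [mul_comm (q _ _)]
    exact (continuous_iff_continuousAt.2 fun t =>
      hlim.tendstoWeakly_nhds t ϕ (memLp_dom_of_continuous hϕ 2)).continuousOn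
  measu := hlim.measurable_totalVelocity hh β
  vel := .of_forall fun t => isVelocity_velocity ((hlim.essBoundedBy t).relVorticity hh β) (V t)
  weak_q φ hφ hx hy := by
    have hweak := hlim.transportDefect_eq_zero hT hh happrox hθ hq₀' hφ
      fun t => ⟨hx t, hy t⟩
    rw [transportDefect, sub_eq_zero, intervalIntegral.integral_of_le hT,
      ← integral_Icc_eq_integral_Ioc] at hweak
    rw [← integral_congr_ae (hq₀.mono fun z hz => congrArg (φ (0, z) * ·) hz)]
    exact hweak
  meanflow t ht := by
    rw [← intervalIntegral.integral_of_le ht.1]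
    exact hlim.meanFlow_eq hh (fun n => happrox (θ n)) hθ ht

end Existence

theorem existence_of_weak_solutions_general
    (T : ℝ) (hT : 0 < T) (β : ℝ)
    (h : ℝ × ℝ → ℝ) (hmeas : Measurable h)
    (hbdd : ∃ M : ℝ, ∀ᵐ z ∂(volume.restrict Dom), |h z| ≤ M)
    (V₀ : ℝ) (q₀ : ℝ × ℝ → ℝ) (hq₀meas : Measurable q₀)
    (hq₀bdd : ∃ M : ℝ, ∀ᵐ z ∂(volume.restrict Dom), |q₀ z| ≤ M)
    (hq₀odd : OddInY q₀) :
    ∃ (V : ℝ → ℝ) (q : ℝ → ℝ × ℝ → ℝ) (u : ℝ → ℝ × ℝ → ℝ × ℝ),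
      IsWeakSolution T β h V₀ q₀ V q u := by
  obtain ⟨H, hH⟩ := hbdd
  obtain ⟨M, hM⟩ := hq₀bdd
  have hh : EssBoundedBy H h := ⟨hmeas, hH⟩
  have hq₀ : EssBoundedBy M q₀ := ⟨hq₀meas, hM⟩
  obtain ⟨q₀', hq₀', hae⟩ := hq₀.exists_oddPeriodicBoundedBy_ae_eq hq₀odd
  obtain ⟨C, happrox⟩ := exists_isApproxSolution hT hh hq₀' β V₀
  choose Vn qn happrox using happrox
  obtain ⟨θ, V, q, hθ, hlim⟩ := exists_isWeakLimit hT.le happrox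
  exact ⟨V, q, _, hlim.isWeakSolution hT.le hh happrox hθ.tendsto_atTop hq₀'.essBoundedBy hae⟩

/-- **Existence of weak solutions** (Proposition 2.2, weak-solution part). For every `T > 0`,
every `V₀ ∈ ℝ` and every `q₀ ∈ L^∞(D)` odd in `y`, there exists a weak solution `(V,q)` (with
its associated velocity field `u`) of the barotropic quasi-geostrophic equations on `[0,T]`
with initial datum `(V₀,q₀)`. -/
theorem existence_of_weak_solutions
    (T : ℝ) (hT : 0 < T) (β : ℝ)
    (h : ℝ × ℝ → ℝ) (hmeas : Measurable h)
    (hbdd : ∃ M : ℝ, ∀ᵐ z ∂(volume.restrict Dom), |h z| ≤ M)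
    (hodd : OddInY h)
    (hsmooth : ContDiffOn ℝ (⊤ : ℕ∞) h (Icc (-π) π ×ˢ Ioo 0 π))
    (V₀ : ℝ) (q₀ : ℝ × ℝ → ℝ) (hq₀meas : Measurable q₀)
    (hq₀bdd : ∃ M : ℝ, ∀ᵐ z ∂(volume.restrict Dom), |q₀ z| ≤ M)
    (hq₀odd : OddInY q₀) :
    ∃ (V : ℝ → ℝ) (q : ℝ → ℝ × ℝ → ℝ) (u : ℝ → ℝ × ℝ → ℝ × ℝ),
      IsWeakSolution T β h V₀ q₀ V q u :=
  existence_of_weak_solutions_general T hT β h hmeas hbdd V₀ q₀ hq₀meas hq₀bdd hq₀odd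

end BQG
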